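/- arXiv:1512.09006 — 2 statements merged into one kernel-verified Lean document; each statement's English description precedes it below -/
import Mathlib

section
/- There exist absolute constants c > 0 and m₀ such that for all integers m ≥ m₀ and n with m^{1/2}/(log m)^{1/2} ≤ n ≤ m^5 (log m)^4, every set P of m points and every set L of n lines in ℝ² determine at least c · m^{2/9} n^{5/9} (log m)^{−2/9} distinct point-line distances, i.e., |{d(p,ℓ) : p ∈ P, ℓ ∈ L}| ≥ c · m^{2/9} n^{5/9} (log m)^{−2/9}. -/
noncomputable section

abbrev Pt2 := EuclideanSpace ℝ (Fin 2)

/-- A line in the plane: the set of points `a + t • v` for a nonzero direction `v`. -/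
def IsLine2 (l : Set Pt2) : Prop :=
  ∃ a v : Pt2, v ≠ 0 ∧ l = {x : Pt2 | ∃ t : ℝ, x = a + t • v}

section Aux
open Finset
lemma pair_level {X : Type*} [DecidableEq X] (S D : Finset X) (sgn : X → ℝ) (cell : X → ℕ × ℕ)
    (hs : ∀ x, sgn x = 1 ∨ sgn x = -1) (hDS : D ⊆ S) (hD : (D.image cell).card ≤ 4)
    (hun : ∀ x ∈ D, ∀ y ∈ S, cell y = cell x → sgn y = sgn x) :
    (D.card : ℝ)^2 ≤ 4 * ∑ x ∈ S, ∑ y ∈ S, if cell x = cell y then sgn x * sgn y else 0 := by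
  have key : ∑ x ∈ S, ∑ y ∈ S, (if cell x = cell y then sgn x * sgn y else 0)
      = ∑ c ∈ S.image cell, (∑ x ∈ S with cell x = c, sgn x)^2 := by
    rw [← Finset.sum_fiberwise_of_maps_to (s := S) (t := S.image cell) (g := cell)
      (fun x hx => Finset.mem_image_of_mem _ hx)]
    refine Finset.sum_congr rfl fun c _ => ?_
    rw [sq, Finset.sum_mul]
    refine Finset.sum_congr rfl fun x hx => ?_
    rw [Finset.mul_sum, Finset.sum_filter]
    refine Finset.sum_congr rfl fun y hy => ?_
    have : cell x = c := (Finset.mem_filter.1 hx).2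
    rw [this]
    by_cases h : cell y = c
    · simp [h]
    · simp [h, Ne.symm h]
  rw [key]
  have h1 : (D.card : ℝ) = ∑ c ∈ D.image cell, ((D.filter (fun x => cell x = c)).card : ℝ) := by
    rw [Finset.card_eq_sum_card_image cell D]; push_cast; rfl
  have h2 : (D.card : ℝ)^2 ≤ (D.image cell).card *
      ∑ c ∈ D.image cell, ((D.filter (fun x => cell x = c)).card : ℝ)^2 := by
    rw [h1]; exact sq_sum_le_card_mul_sum_sq
  have h3 : ∑ c ∈ D.image cell, ((D.filter (fun x => cell x = c)).card : ℝ)^2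
      ≤ ∑ c ∈ D.image cell, (∑ x ∈ S with cell x = c, sgn x)^2 := by
    refine Finset.sum_le_sum fun c hc => ?_
    obtain ⟨x0, hx0, rfl⟩ := Finset.mem_image.1 hc
    have : ∑ x ∈ S with cell x = cell x0, sgn x
        = ((S.filter (fun x => cell x = cell x0)).card : ℝ) * sgn x0 := by
      rw [← nsmul_eq_mul, ← Finset.sum_const]
      refine Finset.sum_congr rfl fun y hy => ?_
      rw [Finset.mem_filter] at hy
      exact hun x0 hx0 y hy.1 hy.2
    rw [this, mul_pow]
    have h4 : sgn x0 ^ 2 = 1 := by rcases hs x0 with h | h <;> rw [h] <;> norm_num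
    rw [h4, mul_one]
    have : (D.filter (fun x => cell x = cell x0)).card ≤ (S.filter (fun x => cell x = cell x0)).card :=
      Finset.card_le_card (Finset.filter_subset_filter _ hDS)
    gcongr
  have h4 : ∑ c ∈ D.image cell, (∑ x ∈ S with cell x = c, sgn x)^2
      ≤ ∑ c ∈ S.image cell, (∑ x ∈ S with cell x = c, sgn x)^2 :=
    Finset.sum_le_sum_of_subset_of_nonneg (Finset.image_subset_image hDS) (fun _ _ _ => sq_nonneg _)
  have h5 : ((D.image cell).card : ℝ) ≤ 4 := by exact_mod_cast hD
  have h6 : (0:ℝ) ≤ ∑ c ∈ D.image cell, ((D.filter (fun x => cell x = c)).card : ℝ)^2 :=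
    Finset.sum_nonneg fun _ _ => sq_nonneg _
  nlinarith

/-- energy inequality at one level -/
lemma level_energy {ι X : Type*} [DecidableEq ι] [DecidableEq X] (I : Finset ι) (E : ι → Finset X)
    (pos : ι → X → ℕ) (L : ℕ) (bl : ι → X → ℕ)
    (hcard : ∀ i ∈ I, (E i).card ≤ L)
    (hinj : ∀ i ∈ I, ∀ x ∈ E i, ∀ y ∈ E i, pos i x = pos i y → x = y)
    (σ : ι → ι → X → Prop) [∀ i j x, Decidable (σ i j x)]
    (h1 : ∀ i ∈ I, ∀ j ∈ I, i ≠ j → ∀ x ∈ E i, x ∈ E j → ∀ y ∈ E i, y ∈ E j → x ≠ y →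
      (σ i j x ↔ σ i j y) → (pos i x < pos i y ↔ pos j y < pos j x))
    (h2 : ∀ i ∈ I, ∀ j ∈ I, i ≠ j → ∀ x ∈ E i, x ∈ E j → ∀ y ∈ E i, y ∈ E j →
      σ i j x → ¬ σ i j y → (pos i x < pos i y ∧ pos j x < pos j y)) :
    ∑ i ∈ I, ∑ j ∈ I with j ≠ i, ∑ x ∈ E i ∩ E j, ∑ y ∈ E i ∩ E j,
      (if (bl i x, bl j x) = (bl i y, bl j y) then
        (if σ i j x then (1:ℝ) else -1) * (if σ i j y then (1:ℝ) else -1) else 0)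
    ≤ (∑ i ∈ I, ((E i).card : ℝ)) * L + ∑ i ∈ I, ∑ j ∈ I with j ≠ i, ((E i ∩ E j).card : ℝ) := by
  classical
  set Y := I.biUnion E with hY
  have hEY : ∀ i ∈ I, E i ⊆ Y := fun i hi => Finset.subset_biUnion_of_mem E hi
  let ε : ι → X → X → ℝ := fun i x y =>
    if x ∈ E i ∧ y ∈ E i ∧ x ≠ y ∧ bl i x = bl i y then (if pos i x < pos i y then 1 else -1) else 0
  have pos0 : 0 ≤ ∑ x ∈ Y, ∑ y ∈ Y, (∑ i ∈ I, ε i x y)^2 :=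
    Finset.sum_nonneg fun _ _ => Finset.sum_nonneg fun _ _ => sq_nonneg _
  have expand : ∑ x ∈ Y, ∑ y ∈ Y, (∑ i ∈ I, ε i x y)^2
      = ∑ i ∈ I, ∑ j ∈ I, ∑ x ∈ Y, ∑ y ∈ Y, ε i x y * ε j x y := by
    calc _ = ∑ x ∈ Y, ∑ y ∈ Y, ∑ i ∈ I, ∑ j ∈ I, ε i x y * ε j x y := by
          simp_rw [sq, Finset.sum_mul_sum]
      _ = ∑ x ∈ Y, ∑ i ∈ I, ∑ j ∈ I, ∑ y ∈ Y, ε i x y * ε j x y := by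
          refine Finset.sum_congr rfl fun x _ => ?_
          rw [Finset.sum_comm]
          refine Finset.sum_congr rfl fun i _ => ?_
          rw [Finset.sum_comm]
      _ = _ := by
          rw [Finset.sum_comm]
          refine Finset.sum_congr rfl fun i _ => ?_
          rw [Finset.sum_comm]
  rw [expand] at pos0
  have diag : ∀ i ∈ I, ∑ x ∈ Y, ∑ y ∈ Y, ε i x y * ε i x y ≤ ((E i).card : ℝ) * L := by
    intro i hi
    have : ∀ x ∈ Y, ∀ y ∈ Y, ε i x y * ε i x y ≤ (if x ∈ E i then 1 else 0) * (if y ∈ E i then 1 else 0) := by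
      intro x _ y _
      simp only [ε]
      by_cases hx : x ∈ E i <;> by_cases hy : y ∈ E i <;> simp [hx, hy]
      split_ifs <;> norm_num
    refine (Finset.sum_le_sum fun x hx => Finset.sum_le_sum fun y hy => this x hx y hy).trans ?_
    rw [← Finset.sum_mul_sum]
    have hc : ∑ x ∈ Y, (if x ∈ E i then (1:ℝ) else 0) = (E i).card := by
      rw [Finset.sum_boole, Finset.filter_mem_eq_inter, Finset.inter_eq_right.2 (hEY i hi)]
    rw [hc]
    have := hcard i hi
    gcongr
  have off : ∀ i ∈ I, ∀ j ∈ I, j ≠ i → ∑ x ∈ Y, ∑ y ∈ Y, ε i x y * ε j x y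
      = ((E i ∩ E j).card : ℝ) - ∑ x ∈ E i ∩ E j, ∑ y ∈ E i ∩ E j,
      (if (bl i x, bl j x) = (bl i y, bl j y) then
        (if σ i j x then (1:ℝ) else -1) * (if σ i j y then (1:ℝ) else -1) else 0) := by
    intro i hi j hj hij
    have hsub : E i ∩ E j ⊆ Y := Finset.inter_subset_left.trans (hEY i hi)
    have e1 : ∑ x ∈ Y, ∑ y ∈ Y, ε i x y * ε j x y
        = ∑ x ∈ E i ∩ E j, ∑ y ∈ E i ∩ E j, ε i x y * ε j x y := by
      rw [← Finset.sum_subset hsub]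
      · refine Finset.sum_congr rfl fun x hx => ?_
        rw [← Finset.sum_subset hsub]
        intro y _ hy
        simp only [ε]
        rw [Finset.mem_inter, not_and_or] at hy
        rcases hy with hy | hy <;> simp [hy]
      · intro x _ hx
        refine Finset.sum_eq_zero fun y _ => ?_
        simp only [ε]
        rw [Finset.mem_inter, not_and_or] at hx
        rcases hx with hx | hx <;> simp [hx]
    have e2 : ((E i ∩ E j).card : ℝ) = ∑ x ∈ E i ∩ E j, ∑ y ∈ E i ∩ E j, if x = y then (1:ℝ) else 0 := by
      rw [Finset.card_eq_sum_ones]; push_cast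
      refine Finset.sum_congr rfl fun x hx => ?_
      rw [Finset.sum_ite_eq]; simp only [hx, if_true]
    rw [e1, e2, ← Finset.sum_sub_distrib]
    refine Finset.sum_congr rfl fun x hx => ?_
    rw [← Finset.sum_sub_distrib]
    refine Finset.sum_congr rfl fun y hy => ?_
    rw [Finset.mem_inter] at hx hy
    obtain ⟨hxi, hxj⟩ := hx
    obtain ⟨hyi, hyj⟩ := hy
    by_cases hxy : x = y
    · subst hxy; by_cases s : σ i j x <;> simp [ε, s]
    have a1 := h1 i hi j hj hij.symm x hxi hxj y hyi hyj hxy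
    have a2 := h2 i hi j hj hij.symm x hxi hxj y hyi hyj
    have a3 := h2 i hi j hj hij.symm y hyi hyj x hxi hxj
    have n1 : pos i x ≠ pos i y := fun h => hxy (hinj i hi x hxi y hyi h)
    have n2 : pos j x ≠ pos j y := fun h => hxy (hinj j hj x hxj y hyj h)
    simp only [ε, hxi, hxj, hyi, hyj, true_and, Prod.mk.injEq, ne_eq, hxy, not_false_eq_true, if_false]
    by_cases b1 : bl i x = bl i y <;> by_cases b2 : bl j x = bl j y <;> simp only [b1, b2, if_true, if_false, and_true, and_false] <;> try norm_num
    by_cases s1 : σ i j x <;> by_cases s2 : σ i j y <;> simp only [s1, s2, if_true, if_false, true_iff, iff_true, true_implies, not_true, not_false_iff, false_implies] at a1 a2 a3 ⊢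
    · by_cases c : pos i x < pos i y
      · have : ¬ pos j x < pos j y := by have := a1.1 c; omega
        simp [c, this]
      · have : pos j x < pos j y := by
          have : ¬ pos j y < pos j x := fun h => c (a1.2 h)
          omega
        simp [c, this]
    · simp [a2.1, a2.2]
    · have : ¬ pos i x < pos i y := by omega
      have : ¬ pos j x < pos j y := by omega
      simp [*]
    · by_cases c : pos i x < pos i y
      · have : ¬ pos j x < pos j y := by have := a1.1 c; omega
        simp [c, this]
      · have : pos j x < pos j y := by
          have : ¬ pos j y < pos j x := fun h => c (a1.2 h)
          omega
        simp [c, this]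
  have split : ∑ i ∈ I, ∑ j ∈ I, ∑ x ∈ Y, ∑ y ∈ Y, ε i x y * ε j x y
      = ∑ i ∈ I, ∑ x ∈ Y, ∑ y ∈ Y, ε i x y * ε i x y
       + ∑ i ∈ I, ∑ j ∈ I with j ≠ i, ∑ x ∈ Y, ∑ y ∈ Y, ε i x y * ε j x y := by
    rw [← Finset.sum_add_distrib]
    refine Finset.sum_congr rfl fun i hi => ?_
    rw [← Finset.sum_filter_add_sum_filter_not I (fun j => j = i)]
    congr 1
    rw [Finset.filter_eq' I i, if_pos hi, Finset.sum_singleton]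
  rw [split] at pos0
  have d2 := Finset.sum_le_sum diag
  rw [← Finset.sum_mul] at d2
  have o2 : ∑ i ∈ I, ∑ j ∈ I with j ≠ i, ∑ x ∈ Y, ∑ y ∈ Y, ε i x y * ε j x y
     = ∑ i ∈ I, ∑ j ∈ I with j ≠ i, ((E i ∩ E j).card : ℝ) - ∑ i ∈ I, ∑ j ∈ I with j ≠ i, ∑ x ∈ E i ∩ E j, ∑ y ∈ E i ∩ E j,
      (if (bl i x, bl j x) = (bl i y, bl j y) then
        (if σ i j x then (1:ℝ) else -1) * (if σ i j y then (1:ℝ) else -1) else 0) := by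
    rw [← Finset.sum_sub_distrib]
    refine Finset.sum_congr rfl fun i hi => ?_
    rw [← Finset.sum_sub_distrib]
    refine Finset.sum_congr rfl fun j hj => ?_
    rw [Finset.mem_filter] at hj
    exact off i hi j hj.1 hj.2
  linarith

lemma cs_final {ι : Type*} [DecidableEq ι] (I : Finset ι) (K : ℕ) (d : ℕ → ι → ι → ℝ) (B : ℝ)
    (h : ∀ k ≤ K, ∑ i ∈ I, ∑ j ∈ I with j ≠ i, (d k i j)^2 ≤ B) :
    (∑ i ∈ I, ∑ j ∈ I with j ≠ i, ∑ k ∈ Finset.range (K+1), d k i j)^2 ≤ (K+1)^2 * (I.card : ℝ)^2 * B := by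
  have e1 : ∑ i ∈ I, ∑ j ∈ I with j ≠ i, ∑ k ∈ Finset.range (K+1), d k i j
      = ∑ k ∈ Finset.range (K+1), ∑ i ∈ I, ∑ j ∈ I with j ≠ i, d k i j := by
    rw [Finset.sum_comm (s := Finset.range (K+1))]
    refine Finset.sum_congr rfl fun i _ => ?_
    rw [Finset.sum_comm]
  have e2 : ∀ k, ∑ i ∈ I, ∑ j ∈ I with j ≠ i, d k i j
      = ∑ q ∈ I ×ˢ I, if q.2 ≠ q.1 then d k q.1 q.2 else 0 := by
    intro k
    rw [Finset.sum_product]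
    refine Finset.sum_congr rfl fun i _ => ?_
    rw [Finset.sum_filter]
  have e3 : ∀ k, ∑ i ∈ I, ∑ j ∈ I with j ≠ i, (d k i j)^2
      = ∑ q ∈ I ×ˢ I, (if q.2 ≠ q.1 then d k q.1 q.2 else 0)^2 := by
    intro k
    rw [Finset.sum_product]
    refine Finset.sum_congr rfl fun i _ => ?_
    rw [Finset.sum_filter]
    refine Finset.sum_congr rfl fun j _ => ?_
    by_cases h : j ≠ i
    · rw [if_pos h, if_pos h]
    · rw [if_neg h, if_neg h]; norm_num
  have e4 : ∀ k ≤ K, (∑ i ∈ I, ∑ j ∈ I with j ≠ i, d k i j)^2 ≤ (I.card : ℝ)^2 * B := by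
    intro k hk
    have := sq_sum_le_card_mul_sum_sq (s := I ×ˢ I) (f := fun q => if q.2 ≠ q.1 then d k q.1 q.2 else 0)
    rw [← e2, ← e3, Finset.card_product] at this
    push_cast at this
    refine this.trans ?_
    rw [← sq]
    have := h k hk
    gcongr
  rw [e1]
  have := sq_sum_le_card_mul_sum_sq (s := Finset.range (K+1)) (f := fun k => ∑ i ∈ I, ∑ j ∈ I with j ≠ i, d k i j)
  rw [Finset.card_range] at this
  push_cast at this
  refine this.trans ?_
  have s2 : ∑ k ∈ Finset.range (K+1), (∑ i ∈ I, ∑ j ∈ I with j ≠ i, d k i j)^2 ≤ ∑ k ∈ Finset.range (K+1), ((I.card : ℝ)^2 * B) :=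
    Finset.sum_le_sum fun k hk => e4 k (by have := Finset.mem_range.1 hk; omega)
  rw [Finset.sum_const, Finset.card_range, nsmul_eq_mul] at s2
  push_cast at s2
  calc _ ≤ ((K:ℝ)+1) * (((K:ℝ)+1) * ((I.card : ℝ)^2 * B)) := by gcongr
    _ = _ := by ring

lemma list_bound {ι X : Type*} [DecidableEq ι] [DecidableEq X] (I : Finset ι) (E : ι → Finset X)
    (pos : ι → X → ℕ) (K : ℕ)
    (hpos : ∀ i ∈ I, ∀ x ∈ E i, pos i x < 2^K)
    (hinj : ∀ i ∈ I, ∀ x ∈ E i, ∀ y ∈ E i, pos i x = pos i y → x = y)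
    (σ : ι → ι → X → Prop)
    (h1 : ∀ i ∈ I, ∀ j ∈ I, i ≠ j → ∀ x ∈ E i, x ∈ E j → ∀ y ∈ E i, y ∈ E j → x ≠ y →
      (σ i j x ↔ σ i j y) → (pos i x < pos i y ↔ pos j y < pos j x))
    (h2 : ∀ i ∈ I, ∀ j ∈ I, i ≠ j → ∀ x ∈ E i, x ∈ E j → ∀ y ∈ E i, y ∈ E j →
      σ i j x → ¬ σ i j y → (pos i x < pos i y ∧ pos j x < pos j y)) :
    (∑ i ∈ I, ∑ j ∈ I with j ≠ i, ((E i ∩ E j).card : ℝ))^2 ≤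
      4 * (K+1)^2 * (I.card : ℝ)^2 * ((∑ i ∈ I, ((E i).card : ℝ)) * 2^K
        + ∑ i ∈ I, ∑ j ∈ I with j ≠ i, ((E i ∩ E j).card : ℝ)) := by
  classical
  set T := ∑ i ∈ I, ∑ j ∈ I with j ≠ i, ((E i ∩ E j).card : ℝ) with hT
  set e := ∑ i ∈ I, ((E i).card : ℝ) with he
  have hcard : ∀ i ∈ I, (E i).card ≤ 2^K := by
    intro i hi
    rw [← Finset.card_range (2^K)]
    refine Finset.card_le_card_of_injOn (pos i) (fun x hx => ?_) (fun x hx y hy h => hinj i hi x hx y hy h)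
    simpa using hpos i hi x hx
  let blk : ℕ → ι → X → ℕ := fun k i x => pos i x / 2^(K-k)
  let Mix : ℕ → ι → ι → X → Prop := fun k i j x => ∃ y ∈ E i ∩ E j, ∃ z ∈ E i ∩ E j,
    σ i j y ∧ ¬ σ i j z ∧ blk k i y = blk k i x ∧ blk k i z = blk k i x ∧ blk k j y = blk k j x
      ∧ blk k j z = blk k j x
  let C : ℕ → ι → ι → Finset X := fun k i j => match k with
    | 0 => E i ∩ E j
    | k+1 => (E i ∩ E j).filter (Mix k i j)
  let D : ℕ → ι → ι → Finset X := fun k i j => C k i j \ C (k+1) i j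
  have hCS : ∀ k i j, C k i j ⊆ E i ∩ E j := by
    intro k i j
    cases k with
    | zero => exact subset_rfl
    | succ k => exact Finset.filter_subset _ _
  have coarse : ∀ k i x y, blk (k+1) i x = blk (k+1) i y → blk k i x = blk k i y := by
    intro k i x y h
    simp only [blk] at h ⊢
    rcases Nat.lt_or_ge k K with hk | hk
    · have : K - k = (K - (k+1)) + 1 := by omega
      rw [this, pow_succ, ← Nat.div_div_eq_div_mul, ← Nat.div_div_eq_div_mul, h]
    · have a : K - k = 0 := by omega
      have b : K - (k+1) = 0 := by omega
      rw [b] at h; rw [a]; exact h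
  have nest : ∀ k i j, C (k+1) i j ⊆ C k i j := by
    intro k i j
    cases k with
    | zero => exact hCS 1 i j
    | succ k =>
      intro x hx
      simp only [C, Finset.mem_filter] at hx ⊢
      refine ⟨hx.1, ?_⟩
      obtain ⟨y, hy, z, hz, sy, sz, a, b, c, d⟩ := hx.2
      exact ⟨y, hy, z, hz, sy, sz, coarse _ _ _ _ a, coarse _ _ _ _ b, coarse _ _ _ _ c, coarse _ _ _ _ d⟩
  have last : ∀ i ∈ I, ∀ j, C (K+1) i j = ∅ := by
    intro i hi j
    refine Finset.filter_eq_empty_iff.2 ?_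
    rintro x hx ⟨y, hy, z, hz, sy, sz, a, b, -, -⟩
    simp only [blk, Nat.sub_self, pow_zero, Nat.div_one] at a b
    rw [Finset.mem_inter] at hy hz
    have := hinj i hi y hy.1 z hz.1 (a.trans b.symm)
    subst this
    exact sz sy
  have tele : ∀ i ∈ I, ∀ j, ((E i ∩ E j).card : ℝ) = ∑ k ∈ Finset.range (K+1), ((D k i j).card : ℝ) := by
    intro i hi j
    have : ∀ k, ((D k i j).card : ℝ) = ((C k i j).card : ℝ) - ((C (k+1) i j).card : ℝ) := by
      intro k
      have := Finset.card_sdiff_add_card_eq_card (nest k i j)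
      rw [eq_sub_iff_add_eq]; exact_mod_cast this
    simp_rw [this]
    rw [Finset.sum_range_sub' (fun k => ((C k i j).card : ℝ)), last i hi j]
    simp [C]
  have four : ∀ k ≤ K, ∀ i ∈ I, ∀ j ∈ I, i ≠ j →
      ((D k i j).image (fun x => (blk k i x, blk k j x))).card ≤ 4 := by
    intro k hk i hi j hj hij
    cases k with
    | zero =>
      have : (D 0 i j).image (fun x => (blk 0 i x, blk 0 j x)) ⊆ {((0:ℕ),(0:ℕ))} := by
        intro c hc
        obtain ⟨x, hx, rfl⟩ := Finset.mem_image.1 hc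
        have hx' := hCS 0 i j (Finset.mem_sdiff.1 hx).1
        rw [Finset.mem_inter] at hx'
        simp only [blk, Nat.sub_zero, Finset.mem_singleton, Prod.mk.injEq]
        exact ⟨Nat.div_eq_of_lt (hpos i hi x hx'.1), Nat.div_eq_of_lt (hpos j hj x hx'.2)⟩
      exact (Finset.card_le_card this).trans (by simp)
    | succ k =>
      rcases (D (k+1) i j).eq_empty_or_nonempty with h | ⟨x0, hx0⟩
      · rw [h]; simp
      have half : ∀ i x, blk (k+1) i x = 2 * blk k i x ∨ blk (k+1) i x = 2 * blk k i x + 1 := by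
        intro i x
        simp only [blk]
        have : K - k = (K - (k+1)) + 1 := by omega
        rw [this, pow_succ, ← Nat.div_div_eq_div_mul]
        omega
      have uniq : ∀ x ∈ D (k+1) i j, blk k i x = blk k i x0 ∧ blk k j x = blk k j x0 := by
        have ord : ∀ i x y, pos i x < pos i y → blk k i x ≤ blk k i y := fun i x y h =>
          Nat.div_le_div_right h.le
        intro x hx
        have mx : x ∈ C (k+1) i j := (Finset.mem_sdiff.1 hx).1
        have mx0 : x0 ∈ C (k+1) i j := (Finset.mem_sdiff.1 hx0).1
        simp only [C, Finset.mem_filter] at mx mx0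
        obtain ⟨y, hy, z, hz, sy, sz, a, b, c, d⟩ := mx.2
        obtain ⟨y', hy', z', hz', sy', sz', a', b', c', d'⟩ := mx0.2
        rw [Finset.mem_inter] at hy hz hy' hz'
        obtain ⟨p1, p2⟩ := h2 i hi j hj hij y hy.1 hy.2 z' hz'.1 hz'.2 sy sz'
        obtain ⟨p3, p4⟩ := h2 i hi j hj hij y' hy'.1 hy'.2 z hz.1 hz.2 sy' sz
        have q1 := ord _ _ _ p1
        have q2 := ord _ _ _ p2
        have q3 := ord _ _ _ p3
        have q4 := ord _ _ _ p4
        omega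
      have : (D (k+1) i j).image (fun x => (blk (k+1) i x, blk (k+1) j x)) ⊆
          ({2 * blk k i x0, 2 * blk k i x0 + 1} : Finset ℕ) ×ˢ ({2 * blk k j x0, 2 * blk k j x0 + 1} : Finset ℕ) := by
        intro c hc
        obtain ⟨x, hx, rfl⟩ := Finset.mem_image.1 hc
        obtain ⟨u1, u2⟩ := uniq x hx
        have v1 := half i x
        have v2 := half j x
        rw [u1] at v1; rw [u2] at v2
        simp only [Finset.mem_product, Finset.mem_insert, Finset.mem_singleton]
        exact ⟨v1, v2⟩
      refine (Finset.card_le_card this).trans ?_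
      rw [Finset.card_product]
      have c1 : ({2 * blk k i x0, 2 * blk k i x0 + 1} : Finset ℕ).card ≤ 2 := Finset.card_le_two
      have c2 : ({2 * blk k j x0, 2 * blk k j x0 + 1} : Finset ℕ).card ≤ 2 := Finset.card_le_two
      calc _ ≤ 2 * 2 := Nat.mul_le_mul c1 c2
        _ = 4 := rfl
  have lev : ∀ k ≤ K, ∑ i ∈ I, ∑ j ∈ I with j ≠ i, ((D k i j).card : ℝ)^2 ≤ 4 * (e * 2^K + T) := by
    intro k hk
    have en := level_energy I E pos (2^K) (blk k) hcard hinj σ h1 h2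
    push_cast at en
    refine le_trans ?_ (mul_le_mul_of_nonneg_left en (by norm_num))
    rw [Finset.mul_sum]
    refine Finset.sum_le_sum fun i hi => ?_
    rw [Finset.mul_sum]
    refine Finset.sum_le_sum fun j hj => ?_
    rw [Finset.mem_filter] at hj
    refine pair_level (E i ∩ E j) (D k i j) (fun x => if σ i j x then (1:ℝ) else -1)
      (fun x => (blk k i x, blk k j x)) (fun x => ?_) ((Finset.sdiff_subset).trans (hCS k i j))
      (four k hk i hi j hj.1 hj.2.symm) ?_
    · by_cases h : σ i j x <;> simp [h]
    · intro x hx y hy hxy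
      simp only [Prod.mk.injEq] at hxy
      have nm : x ∉ C (k+1) i j := (Finset.mem_sdiff.1 hx).2
      have mx : x ∈ E i ∩ E j := hCS k i j (Finset.mem_sdiff.1 hx).1
      simp only [C, Finset.mem_filter, not_and] at nm
      have nm := nm mx
      by_cases s1 : σ i j x <;> by_cases s2 : σ i j y <;> simp only [s1, s2, if_true, if_false]
      · exact absurd ⟨x, mx, y, hy, s1, s2, rfl, hxy.1, rfl, hxy.2⟩ nm
      · exact absurd ⟨y, hy, x, mx, s2, s1, hxy.1, rfl, hxy.2, rfl⟩ nm
  have Tn : 0 ≤ T := Finset.sum_nonneg fun _ _ => Finset.sum_nonneg fun _ _ => by positivity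
  have TT : T = ∑ i ∈ I, ∑ j ∈ I with j ≠ i, ∑ k ∈ Finset.range (K+1), ((D k i j).card : ℝ) := by
    rw [hT]
    exact Finset.sum_congr rfl fun i hi => Finset.sum_congr rfl fun j _ => tele i hi j
  have fin := cs_final I K (fun k i j => ((D k i j).card : ℝ)) _ lev
  rw [← TT] at fin
  refine fin.trans (le_of_eq (by ring))

/-- evaluation of a quadratic -/
def ev (c : ℝ × ℝ × ℝ) (t : ℝ) : ℝ := c.1 * t ^ 2 + c.2.1 * t + c.2.2

lemma ev_sub (c d : ℝ × ℝ × ℝ) (t : ℝ) : ev (c - d) t = ev c t - ev d t := by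
  simp [ev]; ring

lemma four_pt (g : ℝ × ℝ × ℝ) {a b c d : ℝ} (hab : a < b) (hbc : b < c) (hcd : c < d)
    (ha : 0 < ev g a) (hb : ev g b < 0) (hc : 0 < ev g c) (hd : ev g d < 0) : False := by
  have key : ev g a * ((c-b)*(d-b)*(d-c)) - ev g b * ((c-a)*(d-a)*(d-c))
      + ev g c * ((b-a)*(d-a)*(d-b)) - ev g d * ((b-a)*(c-a)*(c-b)) = 0 := by
    simp only [ev]; ring
  have x1 : 0 < c - b := by linarith
  have x2 : 0 < d - b := by linarith
  have x3 : 0 < d - c := by linarith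
  have x4 : 0 < c - a := by linarith
  have x5 : 0 < d - a := by linarith
  have x6 : 0 < b - a := by linarith
  have y1 : 0 < ev g a * ((c-b)*(d-b)*(d-c)) := by positivity
  have y2 : 0 < (-ev g b) * ((c-a)*(d-a)*(d-c)) := mul_pos (by linarith) (by positivity)
  have y3 : 0 < ev g c * ((b-a)*(d-a)*(d-b)) := by positivity
  have y4 : 0 < (-ev g d) * ((b-a)*(c-a)*(c-b)) := mul_pos (by linarith) (by positivity)
  linarith

lemma ev_neg (g : ℝ × ℝ × ℝ) (t : ℝ) : ev (-g) t = - ev g t := by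
  simp [ev]; ring

lemma four_pt' (g : ℝ × ℝ × ℝ) {a b c d : ℝ} (hab : a < b) (hbc : b < c) (hcd : c < d)
    (ha : ev g a < 0) (hb : 0 < ev g b) (hc : ev g c < 0) (hd : 0 < ev g d) : False :=
  four_pt (-g) hab hbc hcd (by rw [ev_neg]; linarith) (by rw [ev_neg]; linarith)
    (by rw [ev_neg]; linarith) (by rw [ev_neg]; linarith)

lemma three_pt (g : ℝ × ℝ × ℝ) {a b c : ℝ} (hab : a < b) (hbc : b < c)
    (ha : 0 < ev g a) (hb : ev g b < 0) (hc : 0 < ev g c) : 0 < g.1 := by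
  have key : ev g a * (c-b) - ev g b * (c-a) + ev g c * (b-a) = g.1 * ((b-a)*(c-a)*(c-b)) := by
    simp only [ev]; ring
  have x1 : 0 < c - b := by linarith
  have x4 : 0 < c - a := by linarith
  have x6 : 0 < b - a := by linarith
  have y1 : 0 < ev g a * (c-b) := by positivity
  have y2 : 0 < (-ev g b) * (c-a) := mul_pos (by linarith) (by positivity)
  have y3 : 0 < ev g c * (b-a) := by positivity
  by_contra h
  have : g.1 * ((b-a)*(c-a)*(c-b)) ≤ 0 := mul_nonpos_of_nonpos_of_nonneg (by linarith) (by positivity)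
  linarith

lemma three_pt' (g : ℝ × ℝ × ℝ) {a b c : ℝ} (hab : a < b) (hbc : b < c)
    (ha : ev g a < 0) (hb : 0 < ev g b) (hc : ev g c < 0) : g.1 < 0 := by
  have := three_pt (-g) hab hbc (by rw [ev_neg]; linarith) (by rw [ev_neg]; linarith)
    (by rw [ev_neg]; linarith)
  simpa using this

lemma ne_of_ev (g : ℝ × ℝ × ℝ) {a b : ℝ} (ha : 0 < ev g a) (hb : ev g b < 0) : a ≠ b := by
  rintro rfl; linarith

/-- same side case: opposite orders -/
lemma order_same (g h : ℝ × ℝ × ℝ) {Ax Ay Bx By : ℝ}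
    (g1 : ev g Ax < 0) (g2 : ev g Ay < 0) (g3 : 0 < ev g Bx) (g4 : 0 < ev g By)
    (h1 : 0 < ev h Ax) (h2 : ev h Ay < 0) (h3 : 0 < ev h Bx) (h4 : ev h By < 0)
    (hr : Bx < Ax ↔ By < Ay) : Ax < Ay ↔ By < Bx := by
  have e1 := ne_of_ev g g3 g1
  have e2 := ne_of_ev g g3 g2
  have e3 := ne_of_ev g g4 g1
  have e4 := ne_of_ev g g4 g2
  have e5 := ne_of_ev h h1 h2
  have e6 := ne_of_ev h h3 h4
  rcases lt_or_gt_of_ne e1 with f1 | f1 <;> rcases lt_or_gt_of_ne e4 with f4 | f4 <;>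
  [skip; (exfalso; have := hr.1 f1; linarith); (exfalso; have := hr.2 f4; linarith); skip] <;>
  rcases lt_or_gt_of_ne e5 with f5 | f5 <;> rcases lt_or_gt_of_ne e6 with f6 | f6 <;>
  first
  | exact ⟨fun _ => f6, fun _ => f5⟩
  | exact ⟨fun _ => by linarith, fun _ => by linarith⟩
  | (exfalso
     rcases lt_or_gt_of_ne e2 with f2 | f2 <;> rcases lt_or_gt_of_ne e3 with f3 | f3 <;>
     first
     | linarith
     | exact four_pt g f1 f3 f4 g3 g1 g4 g2
     | exact four_pt' g f1 f2 f4 g1 g3 g2 g4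
     | exact four_pt' g f4 f3 f1 g2 g4 g1 g3
     | exact four_pt g f4 f2 f1 g4 g2 g3 g1
     | exact four_pt h f6 f3 f5 h3 h4 h1 h2
     | exact four_pt h f5 f2 f6 h1 h2 h3 h4
     | exact four_pt' h f6 f2 f5 h4 h3 h2 h1
     | exact four_pt' h f5 f3 f6 h2 h1 h4 h3
     | exact four_pt h f6 f3 f5 h3 h4 h1 h2)

lemma order_diff (g h : ℝ × ℝ × ℝ) {Ax Ay Bx By : ℝ}
    (g1 : ev g Ax < 0) (g2 : ev g Ay < 0) (g3 : 0 < ev g Bx) (g4 : 0 < ev g By)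
    (h1 : 0 < ev h Ax) (h2 : ev h Ay < 0) (h3 : 0 < ev h Bx) (h4 : ev h By < 0)
    (hx : Bx < Ax) (hy : ¬ By < Ay) (hl : 0 < g.1) : Ax < Ay ∧ Bx < By := by
  have e2 := ne_of_ev g g3 g2
  have e3 := ne_of_ev g g4 g1
  have e4 := ne_of_ev g g4 g2
  have e5 := ne_of_ev h h1 h2
  have hy' : Ay < By := lt_of_le_of_ne (not_lt.1 hy) e4.symm
  have k1 : Bx < Ay := by
    rcases lt_or_gt_of_ne e2 with f | f
    · exact f
    · have := three_pt' g f hx g2 g3 g1; linarith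
  have k2 : Ax < By := by
    rcases lt_or_gt_of_ne e3 with f | f
    · have := three_pt' g hy' f g2 g4 g1; linarith
    · exact f
  have k3 : Ax < Ay := by
    rcases lt_or_gt_of_ne e5 with f | f
    · exact f
    · exact (four_pt h k1 f k2 h3 h2 h1 h4).elim
  exact ⟨k3, by linarith⟩

lemma order_diff' (g h : ℝ × ℝ × ℝ) {Ax Ay Bx By : ℝ}
    (g1 : ev g Ax < 0) (g2 : ev g Ay < 0) (g3 : 0 < ev g Bx) (g4 : 0 < ev g By)
    (h1 : 0 < ev h Ax) (h2 : ev h Ay < 0) (h3 : 0 < ev h Bx) (h4 : ev h By < 0)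
    (hx : Bx < Ax) (hy : ¬ By < Ay) (hl : ¬ 0 < g.1) : Ay < Ax ∧ By < Bx := by
  have e2 := ne_of_ev g g3 g2
  have e3 := ne_of_ev g g4 g1
  have e4 := ne_of_ev g g4 g2
  have e6 := ne_of_ev h h3 h4
  have hy' : Ay < By := lt_of_le_of_ne (not_lt.1 hy) e4.symm
  have k1 : Ay < Bx := by
    rcases lt_or_gt_of_ne e2 with f | f
    · have := three_pt g f hy' g3 g2 g4; exact (hl this).elim
    · exact f
  have k2 : By < Ax := by
    rcases lt_or_gt_of_ne e3 with f | f
    · exact f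
    · have := three_pt g hx f g3 g1 g4; exact (hl this).elim
  have k3 : By < Bx := by
    rcases lt_or_gt_of_ne e6 with f | f
    · exact (four_pt' h k1 f k2 h2 h3 h4 h1).elim
    · exact f
  exact ⟨by linarith, k3⟩

lemma cs_lists {ι X : Type*} [DecidableEq ι] [DecidableEq X] (I : Finset ι) (E : ι → Finset X)
    (G : Finset X) (hE : ∀ i ∈ I, E i ⊆ G) :
    (∑ i ∈ I, ((E i).card : ℝ)) ^ 2 ≤ (G.card : ℝ) *
      (∑ i ∈ I, ((E i).card : ℝ) + ∑ i ∈ I, ∑ j ∈ I with j ≠ i, ((E i ∩ E j).card : ℝ)) := by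
  have h1 : ∑ i ∈ I, ((E i).card : ℝ) = ∑ y ∈ G, ∑ i ∈ I, (if y ∈ E i then (1:ℝ) else 0) := by
    rw [sum_comm]
    refine sum_congr rfl fun i hi => ?_
    rw [← sum_filter, sum_const, nsmul_eq_mul, mul_one, filter_mem_eq_inter,
      inter_eq_right.2 (hE i hi)]
  have h2 : ∑ i ∈ I, ((E i).card : ℝ) + ∑ i ∈ I, ∑ j ∈ I with j ≠ i, ((E i ∩ E j).card : ℝ)
      = ∑ y ∈ G, (∑ i ∈ I, (if y ∈ E i then (1:ℝ) else 0)) ^ 2 := by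
    have : ∀ y ∈ G, (∑ i ∈ I, (if y ∈ E i then (1:ℝ) else 0)) ^ 2 =
      ∑ i ∈ I, ∑ j ∈ I, (if y ∈ E i ∩ E j then (1:ℝ) else 0) := by
      intro y _
      rw [sq, sum_mul_sum]
      refine sum_congr rfl fun i _ => sum_congr rfl fun j _ => ?_
      by_cases a : y ∈ E i <;> by_cases b : y ∈ E j <;> simp [a, b]
    rw [sum_congr rfl this, sum_comm, ← sum_add_distrib]
    refine sum_congr rfl fun i hi => ?_
    rw [sum_comm]
    have h3 : ∀ j ∈ I, ∑ y ∈ G, (if y ∈ E i ∩ E j then (1:ℝ) else 0) = ((E i ∩ E j).card : ℝ) := by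
      intro j hj
      rw [← sum_filter, sum_const, nsmul_eq_mul, mul_one, filter_mem_eq_inter,
        inter_eq_right.2 (inter_subset_left.trans (hE i hi))]
    rw [sum_congr rfl h3, ← sum_filter_add_sum_filter_not I (fun j => j ≠ i), add_comm]
    congr 1
    have : I.filter (fun j => ¬ j ≠ i) = {i} := by
      ext j; simp; rintro rfl; exact hi
    rw [this]; simp
  rw [h2, h1]
  exact sq_sum_le_card_mul_sum_sq

lemma rank_lt_iff {X : Type*} [DecidableEq X] (N : Finset X) (τ : X → ℝ) (x y : X) (hx : x ∈ N) :
    (N.filter (fun z => τ z < τ x)).card < (N.filter (fun z => τ z < τ y)).card ↔ τ x < τ y := by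
  constructor
  · intro h
    by_contra hc
    have : (N.filter (fun z => τ z < τ y)) ⊆ (N.filter (fun z => τ z < τ x)) := by
      intro z; simp only [mem_filter]; rintro ⟨a, b⟩; exact ⟨a, by linarith⟩
    have := card_le_card this
    omega
  · intro h
    apply card_lt_card
    rw [Finset.ssubset_iff_of_subset]
    · exact ⟨x, by simp [hx, h], by simp⟩
    · intro z; simp only [mem_filter]; rintro ⟨a, b⟩; exact ⟨a, by linarith⟩

lemma block_lt {a b w : ℕ} (h : a / w = b / w) : (a % w < b % w ↔ a < b) := by
  have h1 := Nat.div_add_mod a w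
  have h2 := Nat.div_add_mod b w
  rw [h] at h1
  omega

lemma lens_arith (M e : ℝ) (K : ℕ) (lg Ic T : ℝ) (hT0 : 0 ≤ T) (r3 : 1 ≤ M) (r1 : 2 * M ≤ e)
    (r2 : M * 2 ^ K ≤ 2 * e) (hK4 : (K:ℝ) ≤ lg + 1) (hIcard : Ic ≤ 2 * M) (hIc : 0 ≤ Ic)
    (hcs : e ^ 2 ≤ M * (e + T))
    (key : T ^ 2 ≤ 4 * (K + 1) ^ 2 * Ic ^ 2 * (e * 2 ^ K + T)) :
    e ^ 2 ≤ 160 * (lg + 2) ^ 2 * M ^ 3 := by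
  have he : 0 ≤ e := by linarith
  have hM : 0 ≤ M := by linarith
  have r4 : (e:ℝ) ^ 2 ≤ 2 * M * T := by nlinarith
  have r5 : (e:ℝ) * 2 ^ K ≤ 4 * T := by
    have : (M:ℝ) * (e * 2 ^ K) ≤ M * (4 * T) := by
      calc (M:ℝ) * (e * 2 ^ K) = e * (M * 2 ^ K) := by ring
        _ ≤ e * (2 * e) := by gcongr
        _ ≤ _ := by nlinarith
    exact le_of_mul_le_mul_left this (by linarith)
  have r6 : T ≤ 80 * ((K:ℝ) + 1) ^ 2 * M ^ 2 := by
    rcases hT0.eq_or_lt with h | h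
    · rw [← h]; positivity
    have : T * T ≤ T * (80 * ((K:ℝ) + 1) ^ 2 * M ^ 2) := by
      calc T * T = T ^ 2 := by ring
        _ ≤ _ := key
        _ ≤ 4 * (K + 1) ^ 2 * (2 * M) ^ 2 * (4 * T + T) := by gcongr
        _ = _ := by ring
    exact le_of_mul_le_mul_left this h
  have r7 : (K:ℝ) + 1 ≤ lg + 2 := by linarith
  calc (e:ℝ) ^ 2 ≤ 2 * M * T := r4
    _ ≤ 2 * M * (80 * (lg + 2) ^ 2 * M ^ 2) := by
      gcongr
      refine r6.trans ?_
      gcongr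
    _ = _ := by ring

set_option maxHeartbeats 1000000 in
open Classical in
lemma lens_bound (G : Finset (ℝ × ℝ × ℝ)) (Λ : Finset ((ℝ × ℝ × ℝ) × (ℝ × ℝ × ℝ)))
    (τ : (ℝ × ℝ × ℝ) × (ℝ × ℝ × ℝ) → ℝ)
    (hG : ∀ e ∈ Λ, e.1 ∈ G ∧ e.2 ∈ G)
    (t1 : ∀ u x, (u, x) ∈ Λ → ev u (τ (u, x)) < ev x (τ (u, x)))
    (t2 : ∀ u x y, (u, x) ∈ Λ → (u, y) ∈ Λ → y ≠ x → ev y (τ (u, x)) < ev u (τ (u, x)))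
    (t3 : ∀ u v x, (u, x) ∈ Λ → (v, x) ∈ Λ → v ≠ u → ev x (τ (u, x)) < ev v (τ (u, x))) :
    Λ.card < 2 * G.card ∨
      (Λ.card : ℝ) ^ 2 ≤ 160 * (Nat.log 2 G.card + 2) ^ 2 * (G.card : ℝ) ^ 3 := by
  by_cases hlt : Λ.card < 2 * G.card
  · exact Or.inl hlt
  right
  push Not at hlt
  rcases Nat.eq_zero_or_pos G.card with hM0 | hM
  · have : Λ = ∅ := by
      rw [eq_empty_iff_forall_notMem]
      intro e he
      have := (hG e he).1
      rw [card_eq_zero] at hM0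
      simp [hM0] at this
    simp [this]
    positivity
  set M := G.card with hMdef
  set e := Λ.card with hedef
  have he2 : e ≤ M * M := by
    have : Λ ⊆ G ×ˢ G := by
      intro p hp; rw [mem_product]; exact hG p hp
    have := card_le_card this
    rwa [card_product] at this
  have hex : ∃ K : ℕ, e ≤ M * 2 ^ K := ⟨e, by nlinarith [@Nat.lt_two_pow_self e]⟩
  obtain ⟨K, hK1, hK2⟩ : ∃ K : ℕ, e ≤ M * 2 ^ K ∧ ∀ k < K, ¬ e ≤ M * 2 ^ k :=
    ⟨Nat.find hex, Nat.find_spec hex, fun k hk => Nat.find_min hex hk⟩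
  have hK0 : 0 < K := by
    rcases Nat.eq_zero_or_pos K with h | h
    · subst h; simp at hK1; omega
    · exact h
  have hK3 : M * 2 ^ K < 2 * e := by
    have := hK2 (K - 1) (by omega)
    have h2 : 2 ^ K = 2 * 2 ^ (K - 1) := by
      rw [← pow_succ']; congr 1; omega
    rw [h2]; push Not at this; nlinarith
  have hK4 : K ≤ Nat.log 2 M + 1 := by
    have := hK2 (K - 1) (by omega)
    push Not at this
    have h2 : 2 ^ (K - 1) < M := by
      by_contra h; push Not at h; nlinarith
    have := Nat.le_log_of_pow_le (b := 2) (by norm_num) h2.le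
    omega
  -- lists
  set N : (ℝ × ℝ × ℝ) → Finset (ℝ × ℝ × ℝ) := fun u => G.filter (fun x => (u, x) ∈ Λ) with hN
  have memN : ∀ u x, x ∈ N u ↔ (u, x) ∈ Λ := by
    intro u x; simp only [hN, mem_filter]
    exact ⟨fun h => h.2, fun h => ⟨(hG _ h).2, h⟩⟩
  set rk : (ℝ × ℝ × ℝ) → (ℝ × ℝ × ℝ) → ℕ :=
    fun u x => ((N u).filter (fun z => τ (u, z) < τ (u, x))).card with hrk
  have rk_lt : ∀ u x y, x ∈ N u → (rk u x < rk u y ↔ τ (u, x) < τ (u, y)) := fun u x y hx =>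
    rank_lt_iff (N u) (fun z => τ (u, z)) x y hx
  have rk_deg : ∀ u x, x ∈ N u → rk u x < (N u).card := by
    intro u x hx
    apply card_lt_card
    rw [Finset.ssubset_iff_of_subset (filter_subset _ _)]
    exact ⟨x, hx, by simp⟩
  have τinj : ∀ u x y, x ∈ N u → y ∈ N u → τ (u, x) = τ (u, y) → x = y := by
    intro u x y hx hy h
    by_contra hne
    rw [memN] at hx hy
    have a := t2 u x y hx hy (Ne.symm hne)
    have b := t1 u y hy
    rw [h] at a; linarith
  set φ : (ℝ × ℝ × ℝ) × (ℝ × ℝ × ℝ) → (ℝ × ℝ × ℝ) × ℕ := fun p => (p.1, rk p.1 p.2 / 2 ^ K) with hφ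
  set I := Λ.image φ with hI
  set E : (ℝ × ℝ × ℝ) × ℕ → Finset (ℝ × ℝ × ℝ) :=
    fun i => (N i.1).filter (fun x => rk i.1 x / 2 ^ K = i.2) with hE
  set pos : (ℝ × ℝ × ℝ) × ℕ → (ℝ × ℝ × ℝ) → ℕ := fun i x => rk i.1 x % 2 ^ K with hpos
  have memE : ∀ i x, x ∈ E i ↔ x ∈ N i.1 ∧ rk i.1 x / 2 ^ K = i.2 := by
    intro i x; simp [hE]
  have pos_lt : ∀ i x y, x ∈ E i → y ∈ E i → (pos i x < pos i y ↔ τ (i.1, x) < τ (i.1, y)) := by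
    intro i x y hx hy
    rw [memE] at hx hy
    rw [← rk_lt _ _ _ hx.1]
    exact block_lt (hx.2.trans hy.2.symm)
  have key := list_bound I E pos K
    (fun i hi x hx => Nat.mod_lt _ (by positivity))
    (fun i hi x hx y hy hxy => by
      have a := pos_lt i x y hx hy
      have b := pos_lt i y x hy hx
      apply τinj i.1 x y ((memE i x).1 hx).1 ((memE i y).1 hy).1
      rw [hxy] at a b
      simp at a b
      linarith)
    (fun i j x => (τ (j.1, x) < τ (i.1, x)) ↔ 0 < (i.1 - j.1).1)
    (by
      intro i hi j hj hij x hxi hxj y hyi hyj hxy hs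
      have hne : i.1 ≠ j.1 := by
        intro h
        apply hij
        rw [memE] at hxi hxj
        apply Prod.ext h
        rw [← hxi.2, ← hxj.2, h]
      rw [pos_lt i x y hxi hyi, pos_lt j y x hyj hxj]
      have hxi' := (memN _ _).1 ((memE _ _).1 hxi).1
      have hxj' := (memN _ _).1 ((memE _ _).1 hxj).1
      have hyi' := (memN _ _).1 ((memE _ _).1 hyi).1
      have hyj' := (memN _ _).1 ((memE _ _).1 hyj).1
      have a1 := t1 _ _ hxi'
      have a2 := t1 _ _ hxj'
      have a3 := t1 _ _ hyi'
      have a4 := t1 _ _ hyj'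
      have b1 := t2 _ _ _ hxi' hyi' hxy.symm
      have b2 := t2 _ _ _ hxj' hyj' hxy.symm
      have b3 := t2 _ _ _ hyi' hxi' hxy
      have b4 := t2 _ _ _ hyj' hxj' hxy
      have c1 := t3 _ _ _ hxi' hxj' hne.symm
      have c2 := t3 _ _ _ hxj' hxi' hne
      have c3 := t3 _ _ _ hyi' hyj' hne.symm
      have c4 := t3 _ _ _ hyj' hyi' hne
      refine order_same (i.1 - j.1) (x - y) ?_ ?_ ?_ ?_ ?_ ?_ ?_ ?_ (by tauto) <;>
      rw [ev_sub] <;> linarith)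
    (by
      intro i hi j hj hij x hxi hxj y hyi hyj hs1 hs2
      have hne : i.1 ≠ j.1 := by
        intro h
        apply hij
        rw [memE] at hxi hxj
        apply Prod.ext h
        rw [← hxi.2, ← hxj.2, h]
      have hxy : x ≠ y := by
        rintro rfl; exact hs2 hs1
      rw [pos_lt i x y hxi hyi, pos_lt j x y hxj hyj]
      have hxi' := (memN _ _).1 ((memE _ _).1 hxi).1
      have hxj' := (memN _ _).1 ((memE _ _).1 hxj).1
      have hyi' := (memN _ _).1 ((memE _ _).1 hyi).1
      have hyj' := (memN _ _).1 ((memE _ _).1 hyj).1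
      have a1 := t1 _ _ hxi'
      have a2 := t1 _ _ hxj'
      have a3 := t1 _ _ hyi'
      have a4 := t1 _ _ hyj'
      have b1 := t2 _ _ _ hxi' hyi' hxy.symm
      have b2 := t2 _ _ _ hxj' hyj' hxy.symm
      have b3 := t2 _ _ _ hyi' hxi' hxy
      have b4 := t2 _ _ _ hyj' hxj' hxy
      have c1 := t3 _ _ _ hxi' hxj' hne.symm
      have c2 := t3 _ _ _ hxj' hxi' hne
      have c3 := t3 _ _ _ hyi' hyj' hne.symm
      have c4 := t3 _ _ _ hyj' hyi' hne
      by_cases hl : 0 < (i.1 - j.1).1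
      · refine order_diff (i.1 - j.1) (x - y) ?_ ?_ ?_ ?_ ?_ ?_ ?_ ?_ (by tauto) (by tauto) hl <;>
        rw [ev_sub] <;> linarith
      · refine order_diff' (i.1 - j.1) (y - x) ?_ ?_ ?_ ?_ ?_ ?_ ?_ ?_ (by tauto) (by tauto) hl <;>
        rw [ev_sub] <;> linarith)
  have hIcard : (I.card : ℝ) ≤ 2 * M := by
    have h1 : I ⊆ G.biUnion (fun u => (range ((N u).card / 2 ^ K + 1)).image (fun b => (u, b))) := by
      intro i hi
      rw [hI, mem_image] at hi
      obtain ⟨⟨u, x⟩, hux, rfl⟩ := hi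
      rw [mem_biUnion]
      refine ⟨u, (hG _ hux).1, ?_⟩
      rw [mem_image]
      refine ⟨rk u x / 2 ^ K, ?_, rfl⟩
      rw [mem_range]
      have := rk_deg u x ((memN u x).2 hux)
      exact Nat.lt_succ_of_le (Nat.div_le_div_right this.le)
    have h2 : (I.card : ℝ) ≤ ∑ u ∈ G, (((N u).card : ℝ) / 2 ^ K + 1) := by
      calc (I.card : ℝ) ≤ ((G.biUnion (fun u => (range ((N u).card / 2 ^ K + 1)).image (fun b => (u, b)))).card : ℝ) := by
            exact_mod_cast card_le_card h1
        _ ≤ ((∑ u ∈ G, ((N u).card / 2 ^ K + 1) : ℕ) : ℝ) := by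
            norm_cast
            refine card_biUnion_le.trans (sum_le_sum fun u _ => ?_)
            exact card_image_le.trans (by simp)
        _ ≤ _ := by
            push_cast
            refine sum_le_sum fun u _ => ?_
            have := @Nat.cast_div_le ℝ _ _ _ (N u).card (2 ^ K)
            push_cast at this
            linarith
    have h3 : ∑ u ∈ G, ((N u).card : ℝ) = e := by
      have := card_eq_sum_card_fiberwise (f := Prod.fst) (s := Λ) (t := G)
        (fun p hp => (hG p hp).1)
      rw [hedef, this]
      push_cast
      refine sum_congr rfl fun u hu => ?_
      norm_cast
      refine card_nbij' (fun x => (u, x)) Prod.snd ?_ ?_ ?_ ?_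
      · intro x hx; have := (memN u x).1 hx; simp [this]
      · rintro ⟨a, b⟩ hx; simp at hx; obtain ⟨h, rfl⟩ := hx; exact (memN _ _).2 h
      · intro x hx; rfl
      · rintro ⟨a, b⟩ hx; simp at hx; obtain ⟨h, rfl⟩ := hx; rfl
    rw [sum_add_distrib, ← sum_div, h3] at h2
    have h4 : (e : ℝ) / 2 ^ K ≤ M := by
      rw [div_le_iff₀ (by positivity)]; exact_mod_cast hK1
    simp at h2
    linarith
  have hEsum : ∑ i ∈ I, ((E i).card : ℝ) = e := by
    have := card_eq_sum_card_fiberwise (f := φ) (s := Λ) (t := I)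
      (fun p hp => mem_image_of_mem _ hp)
    rw [hedef, this]
    push_cast
    refine sum_congr rfl fun i hi => ?_
    norm_cast
    refine card_nbij' (fun x => (i.1, x)) Prod.snd ?_ ?_ ?_ ?_
    · intro x hx
      have hx := (memE i x).1 hx
      have := (memN _ x).1 hx.1
      simp only [coe_filter, Set.mem_ofPred_eq, hφ]
      exact ⟨this, Prod.ext rfl hx.2⟩
    · rintro ⟨a, b⟩ hx
      simp only [coe_filter, Set.mem_ofPred_eq, hφ] at hx
      obtain ⟨h, rfl⟩ := hx
      exact (memE _ _).2 ⟨(memN _ _).2 h, rfl⟩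
    · intro x hx; rfl
    · rintro ⟨a, b⟩ hx
      simp only [coe_filter, Set.mem_ofPred_eq, hφ] at hx
      obtain ⟨h, rfl⟩ := hx; rfl
  have hcs := cs_lists I E G (fun i hi x hx => by
    have := (memN _ _).1 ((memE _ _).1 hx).1
    exact (hG _ this).2)
  rw [hEsum] at key hcs
  set T := ∑ i ∈ I, ∑ j ∈ I with j ≠ i, ((E i ∩ E j).card : ℝ) with hT
  have hT0 : 0 ≤ T := sum_nonneg fun i _ => sum_nonneg fun j _ => Nat.cast_nonneg _
  exact lens_arith M e K _ I.card T hT0 (by exact_mod_cast hM) (by exact_mod_cast hlt)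
    (by exact_mod_cast hK3.le) (by exact_mod_cast hK4) hIcard (Nat.cast_nonneg _) (by rw [← hMdef] at hcs; exact hcs) key

/-- an arc: a quadratic with an interval -/
abbrev Arc := (ℝ × ℝ × ℝ) × ℝ × ℝ

lemma ev_cont (c : ℝ × ℝ × ℝ) : Continuous (ev c) := by
  unfold ev; fun_prop

/-- plane-drawing hypotheses -/
structure Plane (V : Finset (ℝ × ℝ)) (E : Finset Arc) : Prop where
  lt : ∀ e ∈ E, e.2.1 < e.2.2
  left : ∀ e ∈ E, (e.2.1, ev e.1 e.2.1) ∈ V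
  right : ∀ e ∈ E, (e.2.2, ev e.1 e.2.2) ∈ V
  nov : ∀ e ∈ E, ∀ v ∈ V, e.2.1 < v.1 → v.1 < e.2.2 → v.2 ≠ ev e.1 v.1
  noc : ∀ e ∈ E, ∀ f ∈ E, e ≠ f → ∀ x, e.2.1 < x → x < e.2.2 → f.2.1 < x → x < f.2.2 →
    ev e.1 x ≠ ev f.1 x
  nop : ∀ e ∈ E, ∀ f ∈ E, e ≠ f → e.2.1 = f.2.1 → e.2.2 = f.2.2 →
    ev e.1 e.2.1 = ev f.1 f.2.1 → ev e.1 e.2.2 = ev f.1 f.2.2 → False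

lemma Plane.cmp {V : Finset (ℝ × ℝ)} {E : Finset Arc} (h : Plane V E) {e f : Arc} (he : e ∈ E)
    (hf : f ∈ E) (hne : e ≠ f) {w z : ℝ} (w1 : e.2.1 ≤ w) (w2 : w ≤ e.2.2) (w3 : f.2.1 ≤ w)
    (w4 : w ≤ f.2.2) (z1 : e.2.1 ≤ z) (z2 : z ≤ e.2.2) (z3 : f.2.1 ≤ z) (z4 : z ≤ f.2.2)
    (hw : ev e.1 w < ev f.1 w) : ev e.1 z ≤ ev f.1 z := by
  by_contra hc
  push Not at hc
  have hcont : Continuous (fun x => ev e.1 x - ev f.1 x) := (ev_cont _).sub (ev_cont _)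
  rcases lt_trichotomy w z with h1 | h1 | h1
  · have := intermediate_value_Ioo h1.le hcont.continuousOn
    obtain ⟨x, hx, hx0⟩ := this (show (0:ℝ) ∈ _ from ⟨by simpa using hw, by simpa using hc⟩)
    have : ev e.1 x = ev f.1 x := by simpa [sub_eq_zero] using hx0
    exact h.noc e he f hf hne x (by linarith [hx.1]) (by linarith [hx.2]) (by linarith [hx.1])
      (by linarith [hx.2]) this
  · subst h1; linarith
  · have := intermediate_value_Ioo' h1.le hcont.continuousOn
    obtain ⟨x, hx, hx0⟩ := this (show (0:ℝ) ∈ _ from ⟨by simpa using hw, by simpa using hc⟩)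
    have : ev e.1 x = ev f.1 x := by simpa [sub_eq_zero] using hx0
    exact h.noc e he f hf hne x (by linarith [hx.1]) (by linarith [hx.2]) (by linarith [hx.1])
      (by linarith [hx.2]) this

lemma Plane.cmp' {V : Finset (ℝ × ℝ)} {E : Finset Arc} (h : Plane V E) {e f : Arc} (he : e ∈ E)
    (hf : f ∈ E) (hne : e ≠ f) {w z : ℝ} (w1 : e.2.1 ≤ w) (w2 : w ≤ e.2.2) (w3 : f.2.1 ≤ w)
    (w4 : w ≤ f.2.2) (z1 : e.2.1 < z) (z2 : z < e.2.2) (z3 : f.2.1 < z) (z4 : z < f.2.2)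
    (hw : ev e.1 w < ev f.1 w) : ev e.1 z < ev f.1 z :=
  lt_of_le_of_ne (h.cmp he hf hne w1 w2 w3 w4 z1.le z2.le z3.le z4.le hw)
    (h.noc e he f hf hne z z1 z2 z3 z4)

lemma exists_z (E : Finset Arc) (hlt : ∀ e ∈ E, e.2.1 < e.2.2) (t : ℝ) :
    ∃ z < t, ∀ f ∈ E, f.2.2 = t → f.2.1 < z := by
  have h1 : ∀ᶠ z in nhdsWithin t (Set.Iio t), ∀ f ∈ E, f.2.2 = t → f.2.1 < z := by
    rw [Filter.eventually_all_finset]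
    intro f hf
    by_cases h : f.2.2 = t
    · have : f.2.1 < t := h ▸ hlt f hf
      filter_upwards [Ioo_mem_nhdsLT this] with z hz _
      exact hz.1
    · exact Filter.Eventually.of_forall fun z hz => (h hz).elim
  obtain ⟨z, hz, hz'⟩ := (h1.and self_mem_nhdsWithin).exists
  exact ⟨z, hz', hz⟩

/-- same right endpoint -/
def sameR (e f : Arc) : Prop := e.2.2 = f.2.2 ∧ ev e.1 e.2.2 = ev f.1 f.2.2

/-- `f` is next above `e` -/
def Nxt (E : Finset Arc) (z : ℝ → ℝ) (e f : Arc) : Prop :=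
  f ∈ E ∧ sameR e f ∧ ev e.1 (z e.2.2) < ev f.1 (z e.2.2) ∧
    ∀ g ∈ E, sameR e g → ev e.1 (z e.2.2) < ev g.1 (z e.2.2) → ev f.1 (z e.2.2) ≤ ev g.1 (z e.2.2)

/-- `v` lies in the wedge of `e,f` -/
def Wdg (V : Finset (ℝ × ℝ)) (e f : Arc) (v : ℝ × ℝ) : Prop :=
  v ∈ V ∧ e.2.1 ≤ v.1 ∧ f.2.1 ≤ v.1 ∧ v.1 < e.2.2 ∧ ev e.1 v.1 ≤ v.2 ∧ v.2 ≤ ev f.1 v.1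

/-- label relation -/
def Lab (V : Finset (ℝ × ℝ)) (E : Finset Arc) (z : ℝ → ℝ) (e : Arc) (a : (ℝ × ℝ) × Fin 3) : Prop :=
  (a.2 = 0 ∧ a.1 = (e.2.2, ev e.1 e.2.2) ∧
    ∀ g ∈ E, sameR e g → ev g.1 (z e.2.2) ≤ ev e.1 (z e.2.2)) ∨
  (∃ f, Nxt E z e f ∧ Wdg V e f a.1 ∧ (∀ v, Wdg V e f v → v.1 ≤ a.1.1) ∧
    ((a.2 = 1 ∧ ev e.1 a.1.1 < a.1.2) ∨ (a.2 = 2 ∧ a.1.2 = ev e.1 a.1.1 ∧ a.1.2 < ev f.1 a.1.1)))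

lemma Plane.lab_inj_aux {V : Finset (ℝ × ℝ)} {E : Finset Arc} (h : Plane V E) {z : ℝ → ℝ}
    (hz : ∀ t, z t < t ∧ ∀ f ∈ E, f.2.2 = t → f.2.1 < z t) {e f e' : Arc} (he : e ∈ E) (hf : f ∈ E)
    (hne : e ≠ f) (v : ℝ × ℝ) (hN : Nxt E z e e') (hW : Wdg V e e' v)
    (hmax : ∀ v', Wdg V e e' v' → v'.1 ≤ v.1) (hf1 : f.2.1 ≤ v.1) (hf2 : v.1 < f.2.2)
    (w : ℝ) (w1 : e.2.1 < w) (w2 : w < e.2.2) (w3 : f.2.1 < w) (w4 : w < f.2.2)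
    (hw : ev e.1 w < ev f.1 w) (hx : ev f.1 v.1 < ev e'.1 v.1) : False := by
  obtain ⟨he', ⟨hs1, hs2⟩, hlt, hmin⟩ := hN
  obtain ⟨hv, v1, v2, v3, v4, v5⟩ := hW
  have hfe' : f ≠ e' := by rintro rfl; exact lt_irrefl _ hx
  have v3' : v.1 < e'.2.2 := hs1 ▸ v3
  rcases lt_trichotomy f.2.2 e.2.2 with ht | ht | ht
  · have a1 := h.cmp he hf hne w1.le w2.le w3.le w4.le (z := f.2.2) (by linarith) (by linarith)
      (by linarith) le_rfl hw
    have a2 := h.cmp hf he' hfe' hf1 hf2.le v2 v3'.le (z := f.2.2) (by linarith) le_rfl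
      (by linarith) (by linarith) hx
    have := hmax (f.2.2, ev f.1 f.2.2) ⟨h.right f hf, by simp; linarith, by simp; linarith, ht, a1, a2⟩
    simp at this; linarith
  · have a1 := h.cmp he hf hne w1.le w2.le w3.le w4.le (z := f.2.2) (by linarith) (by linarith)
      (by linarith) le_rfl hw
    have a2 := h.cmp hf he' hfe' hf1 hf2.le v2 v3'.le (z := f.2.2) (by linarith) le_rfl
      (by linarith) (by linarith) hx
    have hsame : sameR e f := by
      refine ⟨ht.symm, ?_⟩
      rw [← hs1, ← ht] at hs2
      rw [ht] at a1 a2 ⊢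
      rw [ht] at hs2
      linarith
    have z1 := (hz e.2.2).2 e he rfl
    have z2 := (hz e.2.2).2 f hf ht
    have z3 := (hz e.2.2).2 e' he' hs1.symm
    have z4 := (hz e.2.2).1
    have b1 := h.cmp' he hf hne w1.le w2.le w3.le w4.le (z := z e.2.2) z1 z4 z2 (by linarith) hw
    have b2 := h.cmp' hf he' hfe' hf1 hf2.le v2 v3'.le (z := z e.2.2) z2 (by linarith) z3
      (by linarith) hx
    have := hmin f hf hsame b1
    linarith
  · have a1 := h.cmp he hf hne w1.le w2.le w3.le w4.le (z := e.2.2) (by linarith) (by linarith)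
      (by linarith) (by linarith) hw
    have a2 := h.cmp hf he' hfe' hf1 hf2.le v2 v3'.le (z := e.2.2) (by linarith) (by linarith)
      (by linarith) (by linarith) hx
    rw [← hs1] at hs2
    exact h.nov f hf _ (h.right e he) (by simp; linarith) (by simpa using ht) (by simp; linarith)

lemma Plane.lab_inj {V : Finset (ℝ × ℝ)} {E : Finset Arc} (h : Plane V E) {z : ℝ → ℝ}
    (hz : ∀ t, z t < t ∧ ∀ f ∈ E, f.2.2 = t → f.2.1 < z t) {e f : Arc} (he : e ∈ E) (hf : f ∈ E)
    (a : (ℝ × ℝ) × Fin 3) (h1 : Lab V E z e a) (h2 : Lab V E z f a) : e = f := by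
  by_contra hne
  have hne' : f ≠ e := fun h => hne h.symm
  rcases h1 with ⟨a0, a1, a2⟩ | ⟨e', hN, hW, hmax, hl⟩
  · rcases h2 with ⟨b0, b1, b2⟩ | ⟨f', hN, hW, hmax, hl⟩
    · have hs : sameR e f := by
        rw [a1] at b1; simp [Prod.ext_iff] at b1; exact b1
      have hs' : sameR f e := ⟨hs.1.symm, hs.2.symm⟩
      have c1 := a2 f hf hs
      have c2 := b2 e he hs'
      rw [← hs.1] at c2
      have z1 := (hz e.2.2).2 e he rfl
      have z2 := (hz e.2.2).2 f hf hs.1.symm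
      have z4 := (hz e.2.2).1
      exact h.noc e he f hf hne _ z1 z4 z2 (by linarith [hs.1]) (by linarith)
    · rw [a0] at hl; simp at hl
  · rcases h2 with ⟨b0, b1, b2⟩ | ⟨f', hN', hW', hmax', hl'⟩
    · rw [b0] at hl; simp at hl
    · obtain ⟨v, l⟩ := a
      simp only at hW hW' hmax hmax' hl hl'
      have q1 := hW.2.1
      have q2 := hW.2.2.2.1
      have q3 := hW'.2.1
      have q4 := hW'.2.2.2.1
      have q5 := hW.2.2.2.2.2
      have q6 := hW'.2.2.2.2.2
      obtain ⟨w, hw1, hw2⟩ := exists_between (lt_min q2 q4)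
      rw [lt_min_iff] at hw2
      rcases lt_or_gt_of_ne (h.noc e he f hf hne w (by linarith) hw2.1 (by linarith) hw2.2) with g | g
      · refine h.lab_inj_aux hz he hf hne v hN hW hmax q3 q4 w (by linarith) hw2.1 (by linarith) hw2.2 g ?_
        rcases hl with ⟨l1, l2⟩ | ⟨l1, l2, l3⟩ <;> rcases hl' with ⟨k1, k2⟩ | ⟨k1, k2, k3⟩ <;>
        first
        | linarith
        | (rw [l1] at k1; simp at k1)
      · refine h.lab_inj_aux hz hf he hne' v hN' hW' hmax' q1 q2 w (by linarith) hw2.2 (by linarith) hw2.1 g ?_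
        rcases hl with ⟨l1, l2⟩ | ⟨l1, l2, l3⟩ <;> rcases hl' with ⟨k1, k2⟩ | ⟨k1, k2, k3⟩ <;>
        first
        | linarith
        | (rw [l1] at k1; simp at k1)

open Classical in
lemma Plane.lab_ex {V : Finset (ℝ × ℝ)} {E : Finset Arc} (h : Plane V E) {z : ℝ → ℝ}
    (hz : ∀ t, z t < t ∧ ∀ f ∈ E, f.2.2 = t → f.2.1 < z t) {e : Arc} (he : e ∈ E) :
    ∃ a ∈ V ×ˢ (univ : Finset (Fin 3)), Lab V E z e a := by
  by_cases htop : ∀ g ∈ E, sameR e g → ev g.1 (z e.2.2) ≤ ev e.1 (z e.2.2)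
  · exact ⟨((e.2.2, ev e.1 e.2.2), 0), by simp [h.right e he], Or.inl ⟨rfl, rfl, htop⟩⟩
  push Not at htop
  obtain ⟨g, hg, hgs, hgl⟩ := htop
  obtain ⟨f, hf, hfmin⟩ := exists_min_image
    (E.filter (fun g => sameR e g ∧ ev e.1 (z e.2.2) < ev g.1 (z e.2.2)))
    (fun g => ev g.1 (z e.2.2)) ⟨g, by simp [hg, hgs, hgl]⟩
  simp only [mem_filter] at hf hfmin
  obtain ⟨hfE, hfs, hfl⟩ := hf
  have hN : Nxt E z e f := ⟨hfE, hfs, hfl, fun g hg hs hl => hfmin g ⟨hg, hs, hl⟩⟩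
  have hne : e ≠ f := by rintro rfl; exact lt_irrefl _ hfl
  have z1 := (hz e.2.2).2 e he rfl
  have z2 := (hz e.2.2).2 f hfE hfs.1.symm
  have z4 := (hz e.2.2).1
  have hst := hfs.1
  have cmp : ∀ x, e.2.1 ≤ x → f.2.1 ≤ x → x < e.2.2 → ev e.1 x ≤ ev f.1 x := by
    intro x h1 h2 h3
    exact h.cmp he hfE hne z1.le z4.le z2.le (by linarith) h1 (by linarith) h2 (by linarith) hfl
  have hWne : (V.filter (fun v => Wdg V e f v)).Nonempty := by
    rcases le_total f.2.1 e.2.1 with hh | hh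
    · refine ⟨(e.2.1, ev e.1 e.2.1), ?_⟩
      rw [mem_filter]
      exact ⟨h.left e he, h.left e he, le_rfl, hh, h.lt e he, le_rfl, cmp _ le_rfl hh (h.lt e he)⟩
    · refine ⟨(f.2.1, ev f.1 f.2.1), ?_⟩
      have := h.lt f hfE
      rw [mem_filter]
      exact ⟨h.left f hfE, h.left f hfE, hh, le_rfl, by simp; linarith,
        cmp _ hh le_rfl (by linarith), le_rfl⟩
  obtain ⟨v, hv, hvmax⟩ := exists_max_image _ (fun v => v.1) hWne
  rw [mem_filter] at hv
  have hmax : ∀ v', Wdg V e f v' → v'.1 ≤ v.1 := fun v' hv' => hvmax v' (by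
    rw [mem_filter]; exact ⟨hv'.1, hv'⟩)
  have hW := hv.2
  obtain ⟨hvV, v1, v2, v3, v4, v5⟩ := hv.2
  rcases v4.lt_or_eq with hlt | heq
  · exact ⟨(v, 1), by simp [hvV], Or.inr ⟨f, hN, hW, hmax, Or.inl ⟨rfl, hlt⟩⟩⟩
  · refine ⟨(v, 2), by simp [hvV], Or.inr ⟨f, hN, hW, hmax, Or.inr ⟨rfl, heq.symm, ?_⟩⟩⟩
    refine lt_of_le_of_ne v5 fun h5 => ?_
    have e1 : e.2.1 = v.1 := by
      by_contra hc
      exact h.nov e he v hvV (lt_of_le_of_ne v1 hc) v3 heq.symm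
    have e2 : f.2.1 = v.1 := by
      by_contra hc
      exact h.nov f hfE v hvV (lt_of_le_of_ne v2 hc) (by linarith) h5
    exact h.nop e he f hfE hne (e1.trans e2.symm) hst (by rw [e1, e2]; linarith) hfs.2

lemma Plane.card_le {V : Finset (ℝ × ℝ)} {E : Finset Arc} (h : Plane V E) : E.card ≤ 3 * V.card := by
  have hz0 := exists_z E h.lt
  choose z hz using hz0
  have hex : ∀ e : Arc, ∃ a : (ℝ × ℝ) × Fin 3, e ∈ E → a ∈ V ×ˢ (univ : Finset (Fin 3)) ∧ Lab V E z e a := by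
    intro e
    by_cases he : e ∈ E
    · obtain ⟨a, ha⟩ := h.lab_ex hz he
      exact ⟨a, fun _ => ha⟩
    · exact ⟨((0, 0), 0), fun h => (he h).elim⟩
  choose φ hφ using hex
  have := card_le_card_of_injOn (s := E) (t := V ×ˢ (univ : Finset (Fin 3))) φ
    (fun e he => (hφ e he).1)
    (fun e he f hf hef => h.lab_inj hz he hf (φ e) (hφ e he).2 (hef ▸ (hφ f hf).2))
  simpa [mul_comm] using this

lemma count_fun {α : Type*} [Fintype α] [DecidableEq α] (k : ℕ) (A : Finset α) :
    (univ.filter (fun f : α → Fin (k+1) => ∀ a ∈ A, f a = 0)).card * (k+1) ^ A.card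
      = (k+1) ^ Fintype.card α := by
  have h : (univ.filter (fun f : α → Fin (k+1) => ∀ a ∈ A, f a = 0))
      = Fintype.piFinset (fun a => if a ∈ A then ({0} : Finset (Fin (k+1))) else univ) := by
    ext f
    simp only [mem_filter, mem_univ, true_and, Fintype.mem_piFinset]
    refine forall_congr' fun a => ?_
    by_cases h : a ∈ A <;> simp [h]
  rw [h, Fintype.card_piFinset]
  have : ∀ a, (if a ∈ A then ({0} : Finset (Fin (k+1))) else univ).card = if a ∈ A then 1 else k+1 := by
    intro a; split_ifs <;> simp
  simp_rw [this]
  rw [prod_ite]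
  simp only [prod_const_one, one_mul, prod_const]
  rw [← pow_add]
  congr 1
  have := card_filter_add_card_filter_not (s := (univ : Finset α)) (fun a => a ∈ A)
  simp only [filter_mem_eq_inter, univ_inter] at this
  rw [card_univ] at this
  omega

/-- crossing arcs -/
def Cr (e f : Arc) : Prop := e ≠ f ∧ ∃ x, e.2.1 < x ∧ x < e.2.2 ∧ f.2.1 < x ∧ x < f.2.2 ∧
    ev e.1 x = ev f.1 x

/-- left vertex -/
def lv (e : Arc) : ℝ × ℝ := (e.2.1, ev e.1 e.2.1)
/-- right vertex -/
def rv (e : Arc) : ℝ × ℝ := (e.2.2, ev e.1 e.2.2)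

lemma Cr.symm {e f : Arc} (h : Cr e f) : Cr f e := by
  obtain ⟨h, x, a, b, c, d, e⟩ := h
  exact ⟨h.symm, x, c, d, a, b, e.symm⟩

/-- drawing with crossings allowed -/
structure Drawn (V : Finset (ℝ × ℝ)) (E : Finset Arc) : Prop where
  lt : ∀ e ∈ E, e.2.1 < e.2.2
  left : ∀ e ∈ E, lv e ∈ V
  right : ∀ e ∈ E, rv e ∈ V
  nov : ∀ e ∈ E, ∀ v ∈ V, e.2.1 < v.1 → v.1 < e.2.2 → v.2 ≠ ev e.1 v.1
  nop : ∀ e ∈ E, ∀ f ∈ E, e ≠ f → lv e = lv f → rv e = rv f → False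

open Classical in
lemma Drawn.sub_bound {V : Finset (ℝ × ℝ)} {E : Finset Arc} (h : Drawn V E) (S : Finset (ℝ × ℝ)) (hS : S ⊆ V) :
    (E.filter (fun e => lv e ∈ S ∧ rv e ∈ S)).card ≤ 3 * S.card +
      (((E ×ˢ E).filter (fun p => Cr p.1 p.2)).filter
        (fun p => (lv p.1 ∈ S ∧ rv p.1 ∈ S) ∧ (lv p.2 ∈ S ∧ rv p.2 ∈ S))).card := by
  set ES := E.filter (fun e => lv e ∈ S ∧ rv e ∈ S) with hES
  set X := (((E ×ˢ E).filter (fun p => Cr p.1 p.2)).filter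
        (fun p => (lv p.1 ∈ S ∧ rv p.1 ∈ S) ∧ (lv p.2 ∈ S ∧ rv p.2 ∈ S))) with hX
  have hpl : Plane S (ES \ X.image Prod.fst) := by
    have mem : ∀ e ∈ ES \ X.image Prod.fst, e ∈ E ∧ lv e ∈ S ∧ rv e ∈ S := by
      intro e he
      rw [mem_sdiff, hES, mem_filter] at he
      exact he.1
    refine ⟨fun e he => h.lt e (mem e he).1, fun e he => (mem e he).2.1, fun e he => (mem e he).2.2,
      fun e he v hv => h.nov e (mem e he).1 v (hS hv), ?_, ?_⟩
    · intro e he f hf hne x x1 x2 x3 x4 hx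
      have he' := mem e he
      have hf' := mem f hf
      have : e ∈ X.image Prod.fst := by
        rw [mem_image]
        refine ⟨(e, f), ?_, rfl⟩
        rw [hX, mem_filter, mem_filter, mem_product]
        exact ⟨⟨⟨he'.1, hf'.1⟩, hne, x, x1, x2, x3, x4, hx⟩, he'.2, hf'.2⟩
      exact (mem_sdiff.1 he).2 this
    · intro e he f hf hne a b c d
      exact h.nop e (mem e he).1 f (mem f hf).1 hne (Prod.ext a c) (Prod.ext b d)
  have h1 := hpl.card_le
  have h2 : (X.image Prod.fst).card ≤ X.card := card_image_le
  have h3 := le_card_sdiff (X.image Prod.fst) ES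
  omega

open Classical in
lemma Drawn.sampling {V : Finset (ℝ × ℝ)} {E : Finset Arc} (h : Drawn V E)
    (hd : ∀ e ∈ E, ∀ f ∈ E, Cr e f → lv e ≠ lv f ∧ rv e ≠ rv f ∧ lv e ≠ rv f ∧ rv e ≠ lv f)
    (q : ℕ) (hq : 1 ≤ q) :
    E.card * q ^ 2 ≤ 3 * V.card * q ^ 3 + ((E ×ˢ E).filter (fun p => Cr p.1 p.2)).card := by
  obtain ⟨k, rfl⟩ : ∃ k, q = k + 1 := ⟨q - 1, by omega⟩
  set X := (E ×ˢ E).filter (fun p => Cr p.1 p.2) with hX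
  set S : (V → Fin (k+1)) → Finset (ℝ × ℝ) :=
    fun f => V.filter (fun v => ∃ h : v ∈ V, f ⟨v, h⟩ = 0) with hS
  have memS : ∀ f v (hv : v ∈ V), v ∈ S f ↔ f ⟨v, hv⟩ = 0 := by
    intro f v hv
    simp only [hS, mem_filter]
    exact ⟨fun h => h.2.2, fun h => ⟨hv, hv, h⟩⟩
  have hne : ∀ e ∈ E, lv e ≠ rv e := by
    intro e he hh
    have := congrArg Prod.fst hh
    have h2 := h.lt e he
    simp [lv, rv] at this; linarith
  have hsum := sum_le_sum (s := (univ : Finset (V → Fin (k+1)))) fun f _ =>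
    h.sub_bound (S f) (filter_subset _ _)
  rw [sum_add_distrib, ← mul_sum] at hsum
  have c1 : (∑ f : V → Fin (k+1), (E.filter (fun e => lv e ∈ S f ∧ rv e ∈ S f)).card) * (k+1)^2
      = E.card * (k+1) ^ V.card := by
    simp_rw [card_filter]
    rw [sum_comm, sum_mul, card_eq_sum_ones, sum_mul]
    refine sum_congr rfl fun e he => ?_
    rw [← card_filter]
    have hc := count_fun k ({⟨lv e, h.left e he⟩, ⟨rv e, h.right e he⟩} : Finset V)
    rw [card_pair (by simpa using hne e he)] at hc
    rw [Fintype.card_coe] at hc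
    rw [one_mul, ← hc]
    congr 2
    ext f
    simp [memS f _ (h.left e he), memS f _ (h.right e he)]
  have c2 : (∑ f : V → Fin (k+1), (S f).card) * (k+1)
      = V.card * (k+1) ^ V.card := by
    simp_rw [hS, card_filter]
    rw [sum_comm, sum_mul, card_eq_sum_ones, sum_mul]
    refine sum_congr rfl fun v hv => ?_
    rw [← card_filter]
    have hc := count_fun k ({⟨v, hv⟩} : Finset V)
    rw [card_singleton, pow_one] at hc
    rw [Fintype.card_coe] at hc
    rw [one_mul, ← card_eq_sum_ones, ← hc]
    congr 2
    ext f
    simp [hv]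
  have c3 : (∑ f : V → Fin (k+1), (X.filter (fun p => (lv p.1 ∈ S f ∧ rv p.1 ∈ S f) ∧ (lv p.2 ∈ S f ∧ rv p.2 ∈ S f))).card) * (k+1)^4
      = X.card * (k+1) ^ V.card := by
    simp_rw [card_filter _ X]
    rw [sum_comm, sum_mul, card_eq_sum_ones X, sum_mul]
    refine sum_congr rfl fun p hp => ?_
    rw [← card_filter]
    rw [hX, mem_filter, mem_product] at hp
    obtain ⟨⟨h1, h2⟩, hcr⟩ := hp
    obtain ⟨d1, d2, d3, d4⟩ := hd _ h1 _ h2 hcr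
    have hc := count_fun k ({⟨lv p.1, h.left _ h1⟩, ⟨rv p.1, h.right _ h1⟩,
      ⟨lv p.2, h.left _ h2⟩, ⟨rv p.2, h.right _ h2⟩} : Finset V)
    rw [show ({⟨lv p.1, h.left _ h1⟩, ⟨rv p.1, h.right _ h1⟩,
      ⟨lv p.2, h.left _ h2⟩, ⟨rv p.2, h.right _ h2⟩} : Finset V).card = 4 by
        rw [card_insert_of_notMem, card_insert_of_notMem, card_insert_of_notMem, card_singleton]
        · simpa using hne _ h2
        · simp [d2, d4]
        · simp [d1, d3, hne _ h1]] at hc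
    rw [Fintype.card_coe] at hc
    rw [one_mul, ← hc]
    congr 2
    ext f
    simp [memS f _ (h.left _ h1), memS f _ (h.right _ h1), memS f _ (h.left _ h2),
      memS f _ (h.right _ h2), and_assoc]
  have hpos : 0 < (k+1) ^ V.card := by positivity
  have := Nat.mul_le_mul_right ((k+1)^4) hsum
  refine le_of_mul_le_mul_right (a := (k+1) ^ V.card) ?_ hpos
  generalize (∑ f : V → Fin (k+1), (E.filter (fun e => lv e ∈ S f ∧ rv e ∈ S f)).card) = A1 at *
  generalize (∑ f : V → Fin (k+1), (S f).card) = A2 at *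
  generalize (∑ f : V → Fin (k+1), (X.filter (fun p => (lv p.1 ∈ S f ∧ rv p.1 ∈ S f) ∧ (lv p.2 ∈ S f ∧ rv p.2 ∈ S f))).card) = A3 at *
  generalize (k+1) ^ V.card = W at *
  calc E.card * (k+1)^2 * W = (E.card * W) * (k+1)^2 := by ring
    _ = A1 * (k+1)^4 := by rw [← c1]; ring
    _ ≤ _ := this
    _ = 3 * (A2 * (k+1)) * (k+1)^3 + A3 * (k+1)^4 := by ring
    _ = _ := by rw [c2, c3]; ring

lemma factor_two (g : ℝ × ℝ × ℝ) {a b : ℝ} (hab : a < b) (ha : ev g a = 0) (hb : ev g b = 0) (t : ℝ) :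
    ev g t = g.1 * ((t - a) * (t - b)) := by
  have h1 : (b - a) * (g.1 * (a + b) + g.2.1) = 0 := by
    have : ev g b - ev g a = 0 := by rw [ha, hb]; ring
    simp only [ev] at this; linarith
  have h2 : g.1 * (a + b) + g.2.1 = 0 := by
    rcases mul_eq_zero.1 h1 with h | h
    · linarith
    · exact h
  have h3 : g.2.1 = - (g.1 * (a + b)) := by linarith
  simp only [ev] at ha ⊢
  rw [h3] at ha ⊢
  have : g.2.2 = g.1 * (a * b) := by linarith
  rw [this]; ring

lemma lead_ne (g : ℝ × ℝ × ℝ) (hg : g ≠ 0) {a b : ℝ} (hab : a < b) (ha : ev g a = 0) (hb : ev g b = 0) :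
    g.1 ≠ 0 := by
  intro h
  have f := factor_two g hab ha hb
  rw [h] at f
  simp only [zero_mul] at f
  have f0 := f 0
  have f1 := f 1
  simp only [ev, h] at f0 f1
  apply hg
  have h2 : g.2.2 = 0 := by linarith
  have h1 : g.2.1 = 0 := by linarith
  ext <;> simp [h, h1, h2]

lemma three_roots (g : ℝ × ℝ × ℝ) (hg : g ≠ 0) {a b c : ℝ} (hab : a ≠ b) (hac : a ≠ c) (hbc : b ≠ c)
    (ha : ev g a = 0) (hb : ev g b = 0) (hc : ev g c = 0) : False := by
  rcases lt_or_gt_of_ne hab with h | h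
  · have l := lead_ne g hg h ha hb
    have f := factor_two g h ha hb c
    rw [hc] at f
    rcases mul_eq_zero.1 f.symm with h | h
    · exact l h
    · rcases mul_eq_zero.1 h with h | h
      · exact hac (by linarith)
      · exact hbc (by linarith)
  · have l := lead_ne g hg h hb ha
    have f := factor_two g h hb ha c
    rw [hc] at f
    rcases mul_eq_zero.1 f.symm with h | h
    · exact l h
    · rcases mul_eq_zero.1 h with h | h
      · exact hbc (by linarith)
      · exact hac (by linarith)

lemma matching {α : Type*} [DecidableEq α] (R : α → α → Prop) (hR : ∀ a, ¬ R a a) (n : ℕ) :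
    ∀ E : Finset α, E.card = n → ∃ (Mt : Finset (α × α)) (E' : Finset α), E' ⊆ E ∧
      (∀ p ∈ Mt, p.1 ∈ E ∧ p.2 ∈ E ∧ R p.1 p.2) ∧
      (∀ p ∈ Mt, ∀ p' ∈ Mt, p.1 = p'.1 → p = p') ∧ (∀ p ∈ Mt, ∀ p' ∈ Mt, p.2 = p'.2 → p = p') ∧
      (∀ e ∈ E', ∀ f ∈ E', ¬ R e f) ∧ E.card ≤ E'.card + 2 * Mt.card := by
  induction n using Nat.strong_induction_on with
  | _ n ih =>
    intro E hE
    by_cases hfree : ∀ e ∈ E, ∀ f ∈ E, ¬ R e f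
    · exact ⟨∅, E, subset_rfl, by simp, by simp, by simp, hfree, by simp⟩
    push Not at hfree
    obtain ⟨e, he, f, hf, hef⟩ := hfree
    have hne : e ≠ f := by rintro rfl; exact hR _ hef
    have hc : ((E.erase e).erase f).card + 2 = E.card := by
      have h1 := card_erase_add_one he
      have h2 := card_erase_add_one (s := E.erase e) (a := f) (by simp [hf, hne.symm])
      omega
    obtain ⟨Mt, E', s1, s2, s3, s4, s5, s6⟩ := ih _ (by omega) ((E.erase e).erase f) rfl
    have hsub : (E.erase e).erase f ⊆ E := (erase_subset _ _).trans (erase_subset _ _)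
    have e1 : ∀ p ∈ Mt, p.1 ≠ e ∧ p.2 ≠ f := by
      intro p hp
      have := s2 p hp
      simp only [mem_erase] at this
      tauto
    have hnot : (e, f) ∉ Mt := fun h => (e1 _ h).1 rfl
    refine ⟨insert (e, f) Mt, E', s1.trans hsub, ?_, ?_, ?_, s5, ?_⟩
    · intro p hp
      rcases mem_insert.1 hp with rfl | hp
      · exact ⟨he, hf, hef⟩
      · have := s2 p hp
        exact ⟨hsub this.1, hsub this.2.1, this.2.2⟩
    · intro p hp p' hp' hpp
      rcases mem_insert.1 hp with rfl | hp <;> rcases mem_insert.1 hp' with rfl | hp'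
      · rfl
      · exact ((e1 _ hp').1 hpp.symm).elim
      · exact ((e1 _ hp).1 hpp).elim
      · exact s3 p hp p' hp' hpp
    · intro p hp p' hp' hpp
      rcases mem_insert.1 hp with rfl | hp <;> rcases mem_insert.1 hp' with rfl | hp'
      · rfl
      · exact ((e1 _ hp').2 hpp.symm).elim
      · exact ((e1 _ hp).2 hpp).elim
      · exact s4 p hp p' hp' hpp
    · rw [card_insert_of_notMem hnot]; omega

/-- arcs between consecutive points of `V` on curves of `G` -/
def IsArc (G : Finset (ℝ × ℝ × ℝ)) (V : Finset (ℝ × ℝ)) (e : Arc) : Prop :=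
  e.1 ∈ G ∧ e.2.1 < e.2.2 ∧ lv e ∈ V ∧ rv e ∈ V ∧
    ∀ v ∈ V, e.2.1 < v.1 → v.1 < e.2.2 → v.2 ≠ ev e.1 v.1

lemma IsArc.eq {G V} {e f : Arc} (he : IsArc G V e) (hf : IsArc G V f) (hc : e.1 = f.1) (x : ℝ)
    (x1 : e.2.1 < x) (x2 : x < e.2.2) (x3 : f.2.1 < x) (x4 : x < f.2.2) : e = f := by
  obtain ⟨-, e2, e3, e4, e5⟩ := he
  obtain ⟨-, f2, f3, f4, f5⟩ := hf
  refine Prod.ext hc (Prod.ext ?_ ?_)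
  · rcases lt_trichotomy e.2.1 f.2.1 with h | h | h
    · exact (e5 _ f3 h (by simp [lv]; linarith) (by simp [lv, hc])).elim
    · exact h
    · exact (f5 _ e3 h (by simp [lv]; linarith) (by simp [lv, hc])).elim
  · rcases lt_trichotomy e.2.2 f.2.2 with h | h | h
    · exact (f5 _ e4 (by simp [rv]; linarith) h (by simp [rv, hc])).elim
    · exact h
    · exact (e5 _ f4 (by simp [rv]; linarith) h (by simp [rv, hc])).elim

open Classical in
lemma arcs_exist (G : Finset (ℝ × ℝ × ℝ)) (V : Finset (ℝ × ℝ)) : ∃ E : Finset Arc,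
    (∀ e, e ∈ E ↔ IsArc G V e) ∧
    ((G ×ˢ V).filter (fun p => p.2.2 = ev p.1 p.2.1)).card ≤ G.card + E.card := by
  set E : Finset Arc := (G ×ˢ (V.image Prod.fst) ×ˢ (V.image Prod.fst)).filter (IsArc G V) with hE
  have memE : ∀ e, e ∈ E ↔ IsArc G V e := by
    intro e
    rw [hE, mem_filter]
    refine ⟨fun h => h.2, fun h => ⟨?_, h⟩⟩
    rw [mem_product, mem_product]
    exact ⟨h.1, mem_image.2 ⟨_, h.2.2.1, rfl⟩, mem_image.2 ⟨_, h.2.2.2.1, rfl⟩⟩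
  refine ⟨E, memE, ?_⟩
  set J := (G ×ˢ V).filter (fun p => p.2.2 = ev p.1 p.2.1) with hJ
  have memJ : ∀ p, p ∈ J ↔ (p.1 ∈ G ∧ p.2 ∈ V) ∧ p.2.2 = ev p.1 p.2.1 := by
    intro p; rw [hJ, mem_filter, mem_product]
  set Q : (ℝ × ℝ × ℝ) × (ℝ × ℝ) → Prop := fun p => ∃ w ∈ V, w.2 = ev p.1 w.1 ∧ p.2.1 < w.1 with hQ
  have h1 := card_filter_add_card_filter_not (s := J) Q
  have h2 : (J.filter (fun p => ¬ Q p)).card ≤ G.card := by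
    apply card_le_card_of_injOn Prod.fst
    · intro p hp
      have hp := (mem_filter.1 (mem_coe.1 hp)).1
      exact ((memJ p).1 hp).1.1
    · intro p hp p' hp' hpp
      rw [mem_coe, mem_filter, memJ] at hp hp'
      obtain ⟨⟨⟨a1, a2⟩, a3⟩, a4⟩ := hp
      obtain ⟨⟨⟨b1, b2⟩, b3⟩, b4⟩ := hp'
      simp only [hQ] at a4 b4
      push Not at a4 b4
      have c1 := a4 _ b2 (by rw [hpp]; exact b3)
      have c2 := b4 _ a2 (by rw [← hpp]; exact a3)
      have c3 : p.2.1 = p'.2.1 := le_antisymm c2 c1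
      refine Prod.ext hpp (Prod.ext c3 ?_)
      rw [a3, b3, hpp, c3]
  have h3 : (J.filter Q).card ≤ E.card := by
    have hex : ∀ p : (ℝ × ℝ × ℝ) × (ℝ × ℝ), ∃ e : Arc, p ∈ J.filter Q → e ∈ E ∧ e.1 = p.1 ∧ e.2.1 = p.2.1 := by
      intro p
      by_cases hp : p ∈ J.filter Q
      · rw [mem_filter, memJ] at hp
        obtain ⟨⟨⟨a1, a2⟩, a3⟩, w, w1, w2, w3⟩ := hp
        obtain ⟨u, hu, humin⟩ := exists_min_image
          (V.filter (fun w => w.2 = ev p.1 w.1 ∧ p.2.1 < w.1)) Prod.fst ⟨w, by simp [w1, w2, w3]⟩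
        simp only [mem_filter] at hu humin
        refine ⟨(p.1, p.2.1, u.1), fun _ => ⟨?_, rfl, rfl⟩⟩
        rw [memE]
        refine ⟨a1, hu.2.2, ?_, ?_, ?_⟩
        · simp only [lv]; rw [← a3]; exact a2
        · simp only [rv]; rw [← hu.2.1]; exact hu.1
        · intro v hv v1 v2 v3
          have := humin v ⟨hv, v3, v1⟩
          simp at v2; linarith
      · exact ⟨0, fun h => (hp h).elim⟩
    choose φ hφ using hex
    apply card_le_card_of_injOn φ
    · intro p hp; exact (hφ p (mem_coe.1 hp)).1
    · intro p hp p' hp' hpp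
      have a := hφ p (mem_coe.1 hp)
      have b := hφ p' (mem_coe.1 hp')
      rw [mem_coe, mem_filter, memJ] at hp hp'
      have c1 : p.1 = p'.1 := by rw [← a.2.1, ← b.2.1, hpp]
      have c2 : p.2.1 = p'.2.1 := by rw [← a.2.2, ← b.2.2, hpp]
      refine Prod.ext c1 (Prod.ext c2 ?_)
      rw [hp.1.2, hp'.1.2, c1, c2]
  omega

/-- oriented lens relation -/
def RR (e f : Arc) : Prop := f.1.1 < e.1.1 ∧ ∃ t1 t2, t1 < t2 ∧ e.2.1 ≤ t1 ∧ f.2.1 ≤ t1 ∧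
  t2 ≤ e.2.2 ∧ t2 ≤ f.2.2 ∧ ev e.1 t1 = ev f.1 t1 ∧ ev e.1 t2 = ev f.1 t2

lemma RR_of {e f : Arc} (hne : e.1 ≠ f.1) {t1 t2 : ℝ} (h : t1 < t2) (h1 : e.2.1 ≤ t1) (h2 : f.2.1 ≤ t1)
    (h3 : t2 ≤ e.2.2) (h4 : t2 ≤ f.2.2) (h5 : ev e.1 t1 = ev f.1 t1) (h6 : ev e.1 t2 = ev f.1 t2) :
    RR e f ∨ RR f e := by
  have := lead_ne (e.1 - f.1) (sub_ne_zero.2 hne) h (by rw [ev_sub]; linarith) (by rw [ev_sub]; linarith)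
  simp at this
  rcases lt_or_gt_of_ne (sub_ne_zero.1 this) with g | g
  · exact Or.inr ⟨g, t1, t2, h, h2, h1, h4, h3, h5.symm, h6.symm⟩
  · exact Or.inl ⟨g, t1, t2, h, h1, h2, h3, h4, h5, h6⟩

open Classical in
lemma cross_count (G : Finset (ℝ × ℝ × ℝ)) (V : Finset (ℝ × ℝ)) (E : Finset Arc)
    (hE : ∀ e ∈ E, IsArc G V e) :
    ((E ×ˢ E).filter (fun p => Cr p.1 p.2)).card ≤ 2 * G.card ^ 2 := by
  set X := (E ×ˢ E).filter (fun p => Cr p.1 p.2) with hX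
  have memX : ∀ p, p ∈ X ↔ (p.1 ∈ E ∧ p.2 ∈ E) ∧ Cr p.1 p.2 := by
    intro p; rw [hX, mem_filter, mem_product]
  set φ : Arc × Arc → (ℝ × ℝ × ℝ) × (ℝ × ℝ × ℝ) := fun p => (p.1.1, p.2.1) with hφ
  have h1 : X.image φ ⊆ G ×ˢ G := by
    intro p hp
    obtain ⟨p', hp', rfl⟩ := mem_image.1 hp
    rw [memX] at hp'
    rw [mem_product]
    exact ⟨(hE _ hp'.1.1).1, (hE _ hp'.1.2).1⟩
  have h2 := card_le_card h1
  rw [card_product, ← sq] at h2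
  refine (card_le_mul_card_image (f := φ) X 2 ?_).trans (Nat.mul_le_mul_left 2 h2)
  intro b hb
  by_contra hc
  push Not at hc
  rw [two_lt_card] at hc
  obtain ⟨p1, m1, p2, m2, p3, m3, n12, n13, n23⟩ := hc
  rw [mem_filter, memX] at m1 m2 m3
  obtain ⟨⟨⟨a1, a2⟩, hne1, x, x1, x2, x3, x4, x5⟩, rfl⟩ := m1
  obtain ⟨⟨⟨b1, b2⟩, hne2, y, y1, y2, y3, y4, y5⟩, hb⟩ := m2
  obtain ⟨⟨⟨c1, c2⟩, hne3, z, z1, z2, z3, z4, z5⟩, hc⟩ := m3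
  simp only [hφ, Prod.mk.injEq] at hb hc
  have hne : p1.1.1 ≠ p1.2.1 := fun h => hne1 ((hE _ a1).eq (hE _ a2) h x x1 x2 x3 x4)
  have hxy : x ≠ y := by
    rintro rfl
    exact n12 (Prod.ext ((hE _ a1).eq (hE _ b1) hb.1.symm x x1 x2 y1 y2)
      ((hE _ a2).eq (hE _ b2) hb.2.symm x x3 x4 y3 y4))
  have hxz : x ≠ z := by
    rintro rfl
    exact n13 (Prod.ext ((hE _ a1).eq (hE _ c1) hc.1.symm x x1 x2 z1 z2)
      ((hE _ a2).eq (hE _ c2) hc.2.symm x x3 x4 z3 z4))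
  have hyz : y ≠ z := by
    rintro rfl
    exact n23 (Prod.ext ((hE _ b1).eq (hE _ c1) (hb.1.trans hc.1.symm) y y1 y2 z1 z2)
      ((hE _ b2).eq (hE _ c2) (hb.2.trans hc.2.symm) y y3 y4 z3 z4))
  rw [hb.1, hb.2] at y5
  rw [hc.1, hc.2] at z5
  exact three_roots (p1.1.1 - p1.2.1) (sub_ne_zero.2 hne) hxy hxz hyz (by rw [ev_sub]; linarith)
    (by rw [ev_sub]; linarith) (by rw [ev_sub]; linarith)

lemma free_bound (G : Finset (ℝ × ℝ × ℝ)) (V : Finset (ℝ × ℝ)) (E : Finset Arc)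
    (hE : ∀ e ∈ E, IsArc G V e) (hfree : ∀ e ∈ E, ∀ f ∈ E, ¬ RR e f) (q : ℕ) (hq : 1 ≤ q) :
    E.card * q ^ 2 ≤ 3 * V.card * q ^ 3 + 2 * G.card ^ 2 := by
  have hD : Drawn V E := by
    refine ⟨fun e he => (hE e he).2.1, fun e he => (hE e he).2.2.1, fun e he => (hE e he).2.2.2.1,
      fun e he => (hE e he).2.2.2.2, ?_⟩
    intro e he f hf hne h1 h2
    simp only [lv, rv, Prod.mk.injEq] at h1 h2
    have hc : e.1 ≠ f.1 := fun h => hne (Prod.ext h (Prod.ext h1.1 h2.1))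
    rcases RR_of hc (hE e he).2.1 le_rfl h1.1.symm.le le_rfl h2.1.le (by rw [h1.2, h1.1])
      (by rw [h2.2, h2.1]) with h | h
    · exact hfree e he f hf h
    · exact hfree f hf e he h
  have := hD.sampling ?_ q hq
  · exact this.trans (Nat.add_le_add_left (cross_count G V E hE) _)
  · intro e he f hf hcr
    obtain ⟨hne, x, x1, x2, x3, x4, x5⟩ := hcr
    have hc : e.1 ≠ f.1 := fun h => hne ((hE e he).eq (hE f hf) h x x1 x2 x3 x4)
    refine ⟨?_, ?_, ?_, ?_⟩ <;> intro hh <;> simp only [lv, rv, Prod.mk.injEq] at hh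
    · rcases RR_of hc x1 le_rfl hh.1.symm.le x2.le x4.le (by rw [hh.2, hh.1]) x5 with h | h
      · exact hfree e he f hf h
      · exact hfree f hf e he h
    · rcases RR_of hc x2 x1.le x3.le le_rfl hh.1.le x5 (by rw [hh.2, hh.1]) with h | h
      · exact hfree e he f hf h
      · exact hfree f hf e he h
    · linarith [hh.1]
    · linarith [hh.1]

lemma arc_outside {G V} {e f : Arc} (he : IsArc G V e) (hf : IsArc G V f) (hc : e.1 = f.1) (hne : e ≠ f)
    {x : ℝ} (x1 : e.2.1 < x) (x2 : x < e.2.2) : x < f.2.1 ∨ f.2.2 < x := by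
  by_contra hcon
  push Not at hcon
  obtain ⟨a, b⟩ := hcon
  have e2 := he.2.1
  have f2 := hf.2.1
  -- common interior point
  have : ∃ y, e.2.1 < y ∧ y < e.2.2 ∧ f.2.1 < y ∧ y < f.2.2 := by
    rcases a.lt_or_eq with a | a
    · obtain ⟨y, y1, y2⟩ := exists_between (show max e.2.1 f.2.1 < x from max_lt x1 a)
      rw [max_lt_iff] at y1
      exact ⟨y, y1.1, by linarith, y1.2, by linarith⟩
    · obtain ⟨y, y1, y2⟩ := exists_between (show x < min e.2.2 f.2.2 from lt_min x2 (by linarith))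
      rw [lt_min_iff] at y2
      exact ⟨y, by linarith, y2.1, by linarith, y2.2⟩
  obtain ⟨y, y1, y2, y3, y4⟩ := this
  exact hne (he.eq hf hc y y1 y2 y3 y4)

open Classical in
lemma match_bound (G : Finset (ℝ × ℝ × ℝ)) (V : Finset (ℝ × ℝ)) (Mt : Finset (Arc × Arc))
    (hM : ∀ p ∈ Mt, IsArc G V p.1 ∧ IsArc G V p.2 ∧ RR p.1 p.2)
    (h1 : ∀ p ∈ Mt, ∀ p' ∈ Mt, p.1 = p'.1 → p = p') (h2 : ∀ p ∈ Mt, ∀ p' ∈ Mt, p.2 = p'.2 → p = p') :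
    Mt.card < 2 * G.card ∨
      (Mt.card : ℝ) ^ 2 ≤ 160 * (Nat.log 2 G.card + 2) ^ 2 * (G.card : ℝ) ^ 3 := by
  have hT : ∀ p : Arc × Arc, ∃ τ : ℝ, p ∈ Mt → p.1.2.1 < τ ∧ τ < p.1.2.2 ∧ p.2.2.1 < τ ∧ τ < p.2.2.2 ∧
      ev p.1.1 τ < ev p.2.1 τ := by
    intro p
    by_cases hp : p ∈ Mt
    · obtain ⟨a, b, c, t1, t2, h12, k1, k2, k3, k4, k5, k6⟩ := hM p hp
      refine ⟨(t1 + t2) / 2, fun _ => ⟨by linarith, by linarith, by linarith, by linarith, ?_⟩⟩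
      have := factor_two (p.1.1 - p.2.1) h12 (by rw [ev_sub]; linarith) (by rw [ev_sub]; linarith)
        ((t1 + t2) / 2)
      rw [ev_sub] at this
      have hneg : ((t1 + t2) / 2 - t1) * ((t1 + t2) / 2 - t2) < 0 :=
        mul_neg_of_pos_of_neg (by linarith) (by linarith)
      have hpos : 0 < (p.1.1 - p.2.1).1 := by simpa using c
      have := mul_neg_of_pos_of_neg hpos hneg
      linarith
    · exact ⟨0, fun h => (hp h).elim⟩
  choose T hT using hT
  have hout : ∀ p ∈ Mt, ∀ x, (x < p.1.2.1 ∨ p.1.2.2 < x) ∨ (x < p.2.2.1 ∨ p.2.2.2 < x) →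
      ev p.2.1 x < ev p.1.1 x := by
    intro p hp x hx
    obtain ⟨a, b, c, t1, t2, h12, k1, k2, k3, k4, k5, k6⟩ := hM p hp
    have := factor_two (p.1.1 - p.2.1) h12 (by rw [ev_sub]; linarith) (by rw [ev_sub]; linarith) x
    rw [ev_sub] at this
    have hpos : 0 < (p.1.1 - p.2.1).1 := by simpa using c
    have hp2 : 0 < (x - t1) * (x - t2) := by
      rcases hx with (hx | hx) | (hx | hx)
      · exact mul_pos_of_neg_of_neg (by linarith) (by linarith)
      · exact mul_pos (by linarith) (by linarith)
      · exact mul_pos_of_neg_of_neg (by linarith) (by linarith)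
      · exact mul_pos (by linarith) (by linarith)
    have := mul_pos hpos hp2
    linarith
  -- two different pairs sharing the first or second curve
  have hA : ∀ p ∈ Mt, ∀ p' ∈ Mt, p ≠ p' → p.1.1 = p'.1.1 → ev p'.2.1 (T p) < ev p'.1.1 (T p) := by
    intro p hp p' hp' hne hc
    apply hout p' hp'
    left
    have := hT p hp
    exact arc_outside (hM p hp).1 (hM p' hp').1 hc (fun h => hne (h1 p hp p' hp' h)) this.1 this.2.1
  have hB : ∀ p ∈ Mt, ∀ p' ∈ Mt, p ≠ p' → p.2.1 = p'.2.1 → ev p'.2.1 (T p) < ev p'.1.1 (T p) := by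
    intro p hp p' hp' hne hc
    apply hout p' hp'
    right
    have := hT p hp
    exact arc_outside (hM p hp).2.1 (hM p' hp').2.1 hc (fun h => hne (h2 p hp p' hp' h)) this.2.2.1 this.2.2.2.1
  set φ : Arc × Arc → (ℝ × ℝ × ℝ) × (ℝ × ℝ × ℝ) := fun p => (p.1.1, p.2.1) with hφ
  have φinj : Set.InjOn φ Mt := by
    intro p hp p' hp' hpp
    by_contra hne
    simp only [hφ, Prod.mk.injEq] at hpp
    have a := hA p hp p' hp' hne hpp.1
    have b := (hT p hp).2.2.2.2
    rw [← hpp.1, ← hpp.2] at a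
    linarith
  have hcard : (Mt.image φ).card = Mt.card := card_image_of_injOn φinj
  have hpr : ∀ b : (ℝ × ℝ × ℝ) × (ℝ × ℝ × ℝ), ∃ p, b ∈ Mt.image φ → p ∈ Mt ∧ φ p = b := by
    intro b
    by_cases hb : b ∈ Mt.image φ
    · obtain ⟨p, hp, h⟩ := mem_image.1 hb
      exact ⟨p, fun _ => ⟨hp, h⟩⟩
    · exact ⟨0, fun h => (hb h).elim⟩
  choose pr hpr using hpr
  have := lens_bound G (Mt.image φ) (fun b => T (pr b)) ?_ ?_ ?_ ?_
  · rwa [hcard] at this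
  · intro b hb
    obtain ⟨p, hp, rfl⟩ := mem_image.1 hb
    exact ⟨(hM p hp).1.1, (hM p hp).2.1.1⟩
  · intro u x hux
    have a := hpr _ hux
    have b := (hT _ a.1).2.2.2.2
    have c := a.2
    simp only [hφ, Prod.mk.injEq] at c
    rw [c.1, c.2] at b
    exact b
  · intro u x y hux huy hne
    have a := hpr _ hux
    have b := hpr _ huy
    have a2 := a.2
    have b2 := b.2
    simp only [hφ, Prod.mk.injEq] at a2 b2
    have := hA _ a.1 _ b.1 (fun h => hne (by rw [← b2.2, ← a2.2, h])) (by rw [a2.1, b2.1])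
    rw [b2.1, b2.2] at this
    exact this
  · intro u v x hux hvx hne
    have a := hpr _ hux
    have b := hpr _ hvx
    have a2 := a.2
    have b2 := b.2
    simp only [hφ, Prod.mk.injEq] at a2 b2
    have := hB _ a.1 _ b.1 (fun h => hne (by rw [← b2.1, ← a2.1, h])) (by rw [a2.2, b2.2])
    rw [b2.1, b2.2] at this
    exact this

open Classical in
/-- incidence bound for quadratics -/
theorem incidence (G : Finset (ℝ × ℝ × ℝ)) (V : Finset (ℝ × ℝ)) (q : ℕ) (hq : 1 ≤ q) :
    (((G ×ˢ V).filter (fun p => p.2.2 = ev p.1 p.2.1)).card : ℝ) ≤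
      3 * V.card * q + (5 * G.card + 2 * (G.card : ℝ) ^ 2 / q ^ 2 +
        26 * (G.card * √G.card * (Nat.log 2 G.card + 2))) := by
  obtain ⟨E, memE, hI⟩ := arcs_exist G V
  obtain ⟨Mt, E', s1, s2, s3, s4, s5, s6⟩ := matching RR (fun a h => lt_irrefl _ h.1) _ E rfl
  have hfree := free_bound G V E' (fun e he => (memE e).1 (s1 he)) s5 q hq
  have hmt := match_bound G V Mt (fun p hp => ⟨(memE _).1 (s2 p hp).1, (memE _).1 (s2 p hp).2.1,
    (s2 p hp).2.2⟩) s3 s4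
  set M : ℝ := (G.card : ℝ) with hM
  have hM0 : 0 ≤ M := Nat.cast_nonneg _
  have hlg : (0:ℝ) ≤ Nat.log 2 G.card := Nat.cast_nonneg _
  set lg : ℝ := (Nat.log 2 G.card : ℝ) with hlg'
  have hmt' : (Mt.card : ℝ) ≤ 2 * M + 13 * (M * √M * (lg + 2)) := by
    have hp : 0 ≤ M * √M * (lg + 2) := by positivity
    rcases hmt with h | h
    · have : (Mt.card : ℝ) ≤ 2 * M := by rw [hM]; exact_mod_cast h.le
      linarith
    · have hsq : (M * √M * (lg + 2)) ^ 2 = (lg + 2) ^ 2 * M ^ 3 := by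
        rw [mul_pow, mul_pow, Real.sq_sqrt hM0]; ring
      have : (Mt.card : ℝ) ≤ 13 * (M * √M * (lg + 2)) := by
        refine (abs_le_of_sq_le_sq' ?_ (by positivity)).2
        rw [mul_pow, hsq]
        have : 0 ≤ (lg + 2) ^ 2 * M ^ 3 := by positivity
        linarith
      linarith
  have hq' : (0:ℝ) < q := by exact_mod_cast hq
  have hE' : (E'.card : ℝ) ≤ 3 * V.card * q + 2 * M ^ 2 / q ^ 2 := by
    have h : (E'.card : ℝ) * q ^ 2 ≤ 3 * V.card * q ^ 3 + 2 * M ^ 2 := by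
      rw [hM]; exact_mod_cast hfree
    have : 3 * V.card * q + 2 * M ^ 2 / q ^ 2 = (3 * V.card * q ^ 3 + 2 * M ^ 2) / (q:ℝ) ^ 2 := by
      field_simp
    rw [this, le_div_iff₀ (by positivity)]
    exact h
  have hI' : (((G ×ˢ V).filter (fun p => p.2.2 = ev p.1 p.2.1)).card : ℝ) ≤ M + E.card := by
    rw [hM]; exact_mod_cast hI
  have h6 : (E.card : ℝ) ≤ E'.card + 2 * Mt.card := by exact_mod_cast s6
  linarith

/-- recursive form of small VC dimension for weights on the cube -/
def dltW : (k n : ℕ) → ((Fin n → Bool) → ℕ) → Prop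
  | 0, _, w => ∀ v, w v = 0
  | _ + 1, 0, _ => True
  | k + 1, n + 1, w =>
      dltW (k+1) n (fun v => max (w (Fin.cons false v)) (w (Fin.cons true v))) ∧
      dltW k n (fun v => min (w (Fin.cons false v)) (w (Fin.cons true v)))

lemma sum_cons {n : ℕ} (F : (Fin (n+1) → Bool) → ℕ) :
    ∑ v, F v = ∑ v : Fin n → Bool, (F (Fin.cons false v) + F (Fin.cons true v)) := by
  rw [← Equiv.sum_comp (Fin.consEquiv (fun _ => Bool)) F, Fintype.sum_prod_type, Fintype.sum_bool,
    sum_add_distrib, add_comm]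
  rfl

/-- flip a coordinate -/
def flp {n : ℕ} (t : Fin n) (v : Fin n → Bool) : Fin n → Bool := Function.update v t (!(v t))

lemma flp_zero {n : ℕ} (b : Bool) (v : Fin n → Bool) :
    flp 0 (Fin.cons b v : Fin (n+1) → Bool) = Fin.cons (!b) v := by
  simp [flp, Fin.update_cons_zero]

lemma flp_succ {n : ℕ} (b : Bool) (t : Fin n) (v : Fin n → Bool) :
    flp t.succ (Fin.cons b v : Fin (n+1) → Bool) = Fin.cons b (flp t v) := by
  simp [flp, Fin.cons_update]

lemma mm_ineq (a b c d : ℕ) : min a b + min c d ≤ min (max a c) (max b d) + min (min a c) (min b d) := by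
  omega

lemma one_incl (n : ℕ) : ∀ (k : ℕ) (w : (Fin n → Bool) → ℕ), dltW k n w →
    ∑ t, ∑ v, min (w v) (w (flp t v)) ≤ 2 * (k - 1) * ∑ v, w v := by
  induction n with
  | zero => intro k w _; simp
  | succ n ih =>
    intro k w hw
    cases k with
    | zero =>
      simp only [dltW] at hw
      simp [hw]
    | succ k =>
      obtain ⟨h1, h2⟩ := hw
      have i1 := ih _ _ h1
      have i2 := ih _ _ h2
      rw [Fin.sum_univ_succ, sum_cons, sum_cons w]
      simp_rw [sum_cons (fun v => min (w v) (w (flp (Fin.succ _) v))), flp_zero, flp_succ]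
      set w0 : (Fin n → Bool) → ℕ := fun v => w (Fin.cons false v) with hw0
      set w1 : (Fin n → Bool) → ℕ := fun v => w (Fin.cons true v) with hw1
      have a1 : ∑ v, (w0 v + w1 v) = ∑ v, max (w0 v) (w1 v) + ∑ v, min (w0 v) (w1 v) := by
        rw [← sum_add_distrib]
        exact sum_congr rfl fun v _ => (max_add_min _ _).symm
      have a2 : ∑ t : Fin n, ∑ v, (min (w0 v) (w0 (flp t v)) + min (w1 v) (w1 (flp t v))) ≤
          ∑ t : Fin n, ∑ v, min (max (w0 v) (w1 v)) (max (w0 (flp t v)) (w1 (flp t v))) +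
          ∑ t : Fin n, ∑ v, min (min (w0 v) (w1 v)) (min (w0 (flp t v)) (w1 (flp t v))) := by
        rw [← sum_add_distrib]
        refine sum_le_sum fun t _ => ?_
        rw [← sum_add_distrib]
        exact sum_le_sum fun v _ => mm_ineq _ _ _ _
      have a3 : ∑ v, (min (w0 v) (w1 v) + min (w1 v) (w0 v)) = 2 * ∑ v, min (w0 v) (w1 v) := by
        rw [mul_sum]
        refine sum_congr rfl fun v _ => ?_
        rw [min_comm (w1 v)]; ring
      change ∑ v, (min (w0 v) (w1 v) + min (w1 v) (w0 v)) +
        ∑ t : Fin n, ∑ v, (min (w0 v) (w0 (flp t v)) + min (w1 v) (w1 (flp t v))) ≤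
        2 * (k + 1 - 1) * ∑ v, (w0 v + w1 v)
      rw [a3, a1]
      have i1' := i1
      simp only [Nat.add_sub_cancel] at i1' ⊢
      cases k with
      | zero =>
        simp only [dltW] at h2
        have b1 : ∑ v, min (w0 v) (w1 v) = 0 := sum_eq_zero fun v _ => h2 v
        have b2 : ∑ t : Fin n, ∑ v, min (min (w0 v) (w1 v)) (min (w0 (flp t v)) (w1 (flp t v))) = 0 :=
          sum_eq_zero fun t _ => sum_eq_zero fun v _ => by
            have := h2 v
            simp only [hw0, hw1]
            rw [this]; simp
        rw [b1]; rw [b2] at a2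
        have := a2.trans (Nat.add_le_add_right i1' 0)
        simp at this ⊢
        exact this
      | succ k =>
        simp only [Nat.add_sub_cancel] at i2
        have := a2.trans (Nat.add_le_add i1' i2)
        refine (Nat.add_le_add_left this _).trans (le_of_eq ?_)
        ring

/-- Sauer bound recursion -/
def Phi : ℕ → ℕ → ℕ
  | 0, _ => 0
  | _ + 1, 0 => 1
  | k + 1, n + 1 => Phi (k+1) n + Phi k n

lemma sauer (n : ℕ) : ∀ (k : ℕ) (w : (Fin n → Bool) → ℕ), dltW k n w →
    ∑ v, min 1 (w v) ≤ Phi k n := by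
  induction n with
  | zero =>
    intro k w hw
    cases k with
    | zero => simp only [dltW] at hw; simp [hw]
    | succ k => simp [Phi]
  | succ n ih =>
    intro k w hw
    cases k with
    | zero => simp only [dltW] at hw; simp [hw]
    | succ k =>
      obtain ⟨h1, h2⟩ := hw
      rw [sum_cons]
      refine le_trans ?_ (Nat.add_le_add (ih _ _ h1) (ih _ _ h2))
      rw [← sum_add_distrib]
      refine sum_le_sum fun v _ => ?_
      omega

lemma Phi_one (n : ℕ) : Phi 1 n = 1 := by
  induction n with
  | zero => rfl
  | succ n ih => simp [Phi, ih]

lemma Phi_two (n : ℕ) : Phi 2 n = n + 1 := by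
  induction n with
  | zero => rfl
  | succ n ih => simp [Phi, ih, Phi_one]

lemma Phi_three (n : ℕ) : Phi 3 n ≤ n ^ 2 + n + 1 := by
  induction n with
  | zero => simp [Phi]
  | succ n ih => simp only [Phi, Phi_two]; nlinarith

lemma not_dltW (n : ℕ) : ∀ (k : ℕ) (w : (Fin n → Bool) → ℕ), ¬ dltW k n w →
    ∃ g : Fin k → Fin n, ∀ b : Fin k → Bool, ∃ v, 0 < w v ∧ ∀ i, v (g i) = b i := by
  induction n with
  | zero =>
    intro k w hw
    cases k with
    | zero =>
      simp only [dltW] at hw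
      push Not at hw
      obtain ⟨v, hv⟩ := hw
      exact ⟨Fin.elim0, fun b => ⟨v, Nat.pos_of_ne_zero hv, fun i => i.elim0⟩⟩
    | succ k => simp [dltW] at hw
  | succ n ih =>
    intro k w hw
    cases k with
    | zero =>
      simp only [dltW] at hw
      push Not at hw
      obtain ⟨v, hv⟩ := hw
      exact ⟨Fin.elim0, fun b => ⟨v, Nat.pos_of_ne_zero hv, fun i => i.elim0⟩⟩
    | succ k =>
      simp only [dltW] at hw
      rw [not_and_or] at hw
      rcases hw with hw | hw
      · obtain ⟨g, hg⟩ := ih _ _ hw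
        refine ⟨fun i => (g i).succ, fun b => ?_⟩
        obtain ⟨v, hv, hvb⟩ := hg b
        rcases lt_max_iff.1 hv with h | h
        · exact ⟨_, h, fun i => by simp [hvb]⟩
        · exact ⟨_, h, fun i => by simp [hvb]⟩
      · obtain ⟨g, hg⟩ := ih _ _ hw
        refine ⟨Fin.cons 0 (fun i => (g i).succ), fun b => ?_⟩
        obtain ⟨v, hv, hvb⟩ := hg (Fin.tail b)
        rw [lt_min_iff] at hv
        refine ⟨Fin.cons (b 0) v, ?_, fun i => ?_⟩
        · cases b 0
          · exact hv.1
          · exact hv.2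
        · refine Fin.cases ?_ (fun j => ?_) i
          · simp
          · simp [hvb, Fin.tail]

/-- trace weights -/
def Wt {α H : Type*} (P : Finset α) (S : α → H → Bool) {n : ℕ} (g : Fin n → H) (v : Fin n → Bool) : ℕ :=
  (P.filter (fun p => (fun i => S p (g i)) = v)).card

/-- trace weights with one more test -/
def Wt2 {α H : Type*} (P : Finset α) (S : α → H → Bool) {n : ℕ} (A : Fin n → H) (h : H) (u : Fin n → Bool) (b : Bool) : ℕ :=
  (P.filter (fun p => (fun i => S p (A i)) = u ∧ S p h = b)).card

lemma Wt_dlt {α H : Type*} (P : Finset α) (S : α → H → Bool)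
    (hvc : ∀ h : Fin 3 → H, ∃ b : Fin 3 → Bool, ∀ p ∈ P, ∃ i, S p (h i) ≠ b i) {n : ℕ} (g : Fin n → H) :
    dltW 3 n (Wt P S g) := by
  by_contra hc
  obtain ⟨g', hg'⟩ := not_dltW n 3 _ hc
  obtain ⟨b, hb⟩ := hvc (g ∘ g')
  obtain ⟨v, hv, hvb⟩ := hg' b
  obtain ⟨p, hp⟩ := card_pos.1 hv
  rw [mem_filter] at hp
  obtain ⟨i, hi⟩ := hb p hp.1
  apply hi
  rw [← hvb i, ← hp.2]; rfl

lemma Wt_sum {α H : Type*} (P : Finset α) (S : α → H → Bool) {n : ℕ} (g : Fin n → H) :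
    ∑ v, Wt P S g v = P.card := by
  rw [card_eq_sum_card_fiberwise (f := fun p => (fun i => S p (g i))) (s := P) (t := univ)
    (fun p _ => mem_coe.2 (mem_univ _))]
  rfl

lemma Wt_insert {α H : Type*} (P : Finset α) (S : α → H → Bool) {n : ℕ} (A : Fin n → H) (h : H)
    (t : Fin (n+1)) (u : Fin n → Bool) (b : Bool) :
    Wt P S (t.insertNth h A : Fin (n+1) → H) (t.insertNth b u) = Wt2 P S A h u b := by
  unfold Wt Wt2
  congr 1
  refine filter_congr fun p _ => ?_
  rw [Fin.eq_insertNth_iff]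
  have : (t.removeNth fun i => S p ((t.insertNth h A : Fin (n+1) → H) i)) = fun i => S p (A i) := by
    funext i
    simp [Fin.removeNth]
  rw [this]
  simp [and_comm]

lemma sum_insertNth {n : ℕ} {β : Type*} [Fintype β] (t : Fin (n+1)) (F : (Fin (n+1) → β) → ℕ) :
    ∑ v, F v = ∑ b : β, ∑ v : Fin n → β, F (t.insertNth b v) := by
  rw [← Equiv.sum_comp (Fin.insertNthEquiv (fun _ => β) t) F, Fintype.sum_prod_type]
  rfl

lemma slice {α H : Type*} (P : Finset α) (S : α → H → Bool) {n : ℕ} (A : Fin n → H) (h : H)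
    (t : Fin (n+1)) : ∑ v, min (Wt P S (t.insertNth h A : Fin (n+1) → H) v)
      (Wt P S (t.insertNth h A : Fin (n+1) → H) (flp t v)) =
      2 * ∑ u, min (Wt2 P S A h u false) (Wt2 P S A h u true) := by
  have hf : ∀ (b : Bool) (u : Fin n → Bool), flp t (t.insertNth b u : Fin (n+1) → Bool) = t.insertNth (!b) u := by
    intro b u
    simp [flp, Fin.update_insertNth]
  rw [sum_insertNth t, Fintype.sum_bool]
  simp_rw [hf, Wt_insert]
  rw [two_mul]
  congr 1
  exact sum_congr rfl fun u _ => min_comm _ _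

lemma exists_A {α H : Type*} [Fintype H] [Nonempty H] (P : Finset α) (S : α → H → Bool)
    (hvc : ∀ h : Fin 3 → H, ∃ b : Fin 3 → Bool, ∀ p ∈ P, ∃ i, S p (h i) ≠ b i) (a : ℕ) :
    ∃ A : Fin a → H, (a + 1) * ∑ h, ∑ u, min (Wt2 P S A h u false) (Wt2 P S A h u true) ≤
      2 * P.card * Fintype.card H := by
  classical
  have h1 : ∑ g : Fin (a+1) → H, ∑ t, ∑ v, min (Wt P S g v) (Wt P S g (flp t v)) ≤
      ∑ g : Fin (a+1) → H, 4 * P.card := by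
    refine sum_le_sum fun g _ => ?_
    have := one_incl (a+1) 3 _ (Wt_dlt P S hvc g)
    rw [Wt_sum] at this
    linarith
  rw [sum_comm] at h1
  have h2 : ∀ t : Fin (a+1), ∑ g : Fin (a+1) → H, ∑ v, min (Wt P S g v) (Wt P S g (flp t v)) =
      ∑ A : Fin a → H, 2 * ∑ h, ∑ u, min (Wt2 P S A h u false) (Wt2 P S A h u true) := by
    intro t
    rw [sum_insertNth t, sum_comm]
    refine sum_congr rfl fun A _ => ?_
    rw [mul_sum]
    exact sum_congr rfl fun h _ => slice P S A h t
  rw [sum_congr rfl fun t _ => h2 t] at h1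
  simp only [sum_const, card_univ, Fintype.card_fin, smul_eq_mul, Fintype.card_fun] at h1
  obtain ⟨A, -, hA⟩ := exists_le_of_sum_le (s := (univ : Finset (Fin a → H)))
    (f := fun A => (a + 1) * ∑ h, ∑ u, min (Wt2 P S A h u false) (Wt2 P S A h u true))
    (g := fun _ => 2 * P.card * Fintype.card H) univ_nonempty (by
      rw [← mul_sum, sum_const, card_univ, Fintype.card_fun, Fintype.card_fin, smul_eq_mul]
      rw [← mul_sum] at h1
      rw [pow_succ] at h1
      have : 2 * ((a + 1) * ∑ i : Fin a → H, ∑ h, ∑ u, min (Wt2 P S i h u false) (Wt2 P S i h u true)) ≤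
        2 * (Fintype.card H ^ a * (2 * #P * Fintype.card H)) := by linarith
      linarith)
  exact ⟨A, hA⟩

lemma mul_le_min (a b : ℕ) : a * b ≤ (a + b) * min a b := by
  rcases le_total a b with h | h
  · rw [min_eq_left h]; nlinarith
  · rw [min_eq_right h]; nlinarith

open Classical in
lemma center {α H : Type*} [Fintype H] (C : Finset α) (hC : C.Nonempty) (S : α → H → Bool) :
    ∃ q ∈ C, ∑ p ∈ C, (univ.filter (fun h => S p h ≠ S q h)).card ≤
      2 * ∑ h, min (C.filter (fun p => S p h = false)).card (C.filter (fun p => S p h = true)).card := by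
  have h1 : ∑ q ∈ C, ∑ p ∈ C, (univ.filter (fun h => S p h ≠ S q h)).card ≤
      ∑ q ∈ C, 2 * ∑ h, min (C.filter (fun p => S p h = false)).card (C.filter (fun p => S p h = true)).card := by
    rw [sum_const, smul_eq_mul]
    simp_rw [card_filter _ (univ : Finset H)]
    have : ∑ q ∈ C, ∑ p ∈ C, ∑ h, (if S p h ≠ S q h then 1 else 0) =
        ∑ h, ∑ q ∈ C, ∑ p ∈ C, (if S p h ≠ S q h then 1 else 0) := by
      rw [sum_comm]
      rw [sum_congr rfl fun p _ => sum_comm]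
      rw [sum_comm]
      refine sum_congr rfl fun h _ => sum_comm
    rw [this, mul_sum, mul_sum]
    refine sum_le_sum fun h _ => ?_
    set c0 := (C.filter (fun p => S p h = false)).card with hc0
    set c1 := (C.filter (fun p => S p h = true)).card with hc1
    have hcc : c1 + c0 = C.card := by
      have := card_filter_add_card_filter_not (s := C) (fun p => S p h = true)
      simpa using this
    have hq : ∀ q ∈ C, ∑ p ∈ C, (if S p h ≠ S q h then 1 else 0) = if S q h = true then c0 else c1 := by
      intro q _
      rw [← card_filter]
      cases S q h <;> simp [hc0, hc1]
    rw [sum_congr rfl hq, sum_ite, sum_const, sum_const, smul_eq_mul, smul_eq_mul, ← hc1]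
    simp only [Bool.not_eq_true]
    rw [← hc0]
    have := mul_le_min c0 c1
    rw [← hcc]
    nlinarith
  exact exists_le_of_sum_le hC h1

open Classical in
theorem vc_partition {α H : Type*} [Fintype H] (P : Finset α) (S : α → H → Bool)
    (hvc : ∀ h : Fin 3 → H, ∃ b : Fin 3 → Bool, ∀ p ∈ P, ∃ i, S p (h i) ≠ b i) (a : ℕ) :
    ∃ cen : α → α, (P.image cen).card ≤ a ^ 2 + a + 1 ∧
      (a + 1) * ∑ p ∈ P, (univ.filter (fun h => S p h ≠ S (cen p) h)).card ≤
        4 * P.card * Fintype.card H := by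
  rcases isEmpty_or_nonempty H with hH | hH
  · rcases P.eq_empty_or_nonempty with rfl | ⟨p0, hp0⟩
    · exact ⟨id, by simp, by simp⟩
    · refine ⟨fun _ => p0, ?_, by simp⟩
      rw [image_const ⟨p0, hp0⟩]; simp
  obtain ⟨A, hA⟩ := exists_A P S hvc a
  set tr : α → (Fin a → Bool) := fun p i => S p (A i) with htr
  have hcen : ∀ u : Fin a → Bool, ∃ q : P.filter (fun p => tr p = u) ≠ ∅ → α,
      ∀ h : P.filter (fun p => tr p = u) ≠ ∅,
      ∑ p ∈ P.filter (fun p => tr p = u), (univ.filter (fun h' => S p h' ≠ S (q h) h')).card ≤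
      2 * ∑ h, min (Wt2 P S A h u false) (Wt2 P S A h u true) := by
    intro u
    by_cases hne : P.filter (fun p => tr p = u) ≠ ∅
    · obtain ⟨q, hq, hle⟩ := center (P.filter (fun p => tr p = u)) (nonempty_iff_ne_empty.2 hne) S
      refine ⟨fun _ => q, fun _ => ?_⟩
      simp_rw [filter_filter] at hle
      exact hle
    · exact ⟨fun h => (hne h).elim, fun h => (hne h).elim⟩
  choose q hq using hcen
  rcases P.eq_empty_or_nonempty with rfl | ⟨p0, hp0⟩
  · exact ⟨id, by simp, by simp⟩
  set q' : (Fin a → Bool) → α := fun u => if h : P.filter (fun p => tr p = u) ≠ ∅ then q u h else p0 with hq'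
  refine ⟨fun p => q' (tr p), ?_, ?_⟩
  · have h1 : P.image (fun p => q' (tr p)) = (P.image tr).image q' := by
      rw [image_image]; rfl
    rw [h1]
    refine card_image_le.trans ?_
    have h2 := (sauer a 3 _ (Wt_dlt P S hvc A)).trans (Phi_three a)
    refine le_trans ?_ h2
    rw [card_eq_sum_ones]
    calc ∑ v ∈ P.image tr, 1 ≤ ∑ v ∈ P.image tr, min 1 (Wt P S A v) := by
          refine sum_le_sum fun v hv => ?_
          obtain ⟨p, hp, rfl⟩ := mem_image.1 hv
          refine le_min le_rfl (card_pos.2 ⟨p, ?_⟩)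
          simp [hp, htr]
      _ ≤ _ := sum_le_sum_of_subset (subset_univ _)
  · have h1 : ∑ p ∈ P, (univ.filter (fun h => S p h ≠ S (q' (tr p)) h)).card ≤
        2 * ∑ h, ∑ u, min (Wt2 P S A h u false) (Wt2 P S A h u true) := by
      rw [sum_comm, mul_sum, ← sum_fiberwise_of_maps_to (t := univ) (g := tr) (fun _ _ => mem_univ _)]
      refine sum_le_sum fun u _ => ?_
      by_cases hne : P.filter (fun p => tr p = u) ≠ ∅
      · refine le_trans (le_of_eq ?_) (hq u hne)
        refine sum_congr rfl fun p hp => ?_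
        rw [(mem_filter.1 hp).2]
        simp only [hq']
        rw [dif_pos hne]
      · push Not at hne
        rw [hne]; simp
    calc (a + 1) * ∑ p ∈ P, (univ.filter (fun h => S p h ≠ S (q' (tr p)) h)).card
        ≤ (a + 1) * (2 * ∑ h, ∑ u, min (Wt2 P S A h u false) (Wt2 P S A h u true)) :=
          Nat.mul_le_mul_left _ h1
      _ = 2 * ((a + 1) * ∑ h, ∑ u, min (Wt2 P S A h u false) (Wt2 P S A h u true)) := by ring
      _ ≤ 2 * (2 * P.card * Fintype.card H) := Nat.mul_le_mul_left _ hA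
      _ = _ := by ring

/-- signed distance from a point to a parametrised line -/
def sd (p l : ℝ × ℝ) : ℝ := (l.2 - p.1 * (1 - l.1 ^ 2) - 2 * p.2 * l.1) / (1 + l.1 ^ 2)

/-- level of a value -/
def Jv (D : Finset ℝ) (w : ℕ) (x : ℝ) : ℕ := (D.filter (fun d => d < x)).card / w

lemma Jv_mono (D : Finset ℝ) (w : ℕ) {x y : ℝ} (h : x ≤ y) : Jv D w x ≤ Jv D w y := by
  apply Nat.div_le_div_right
  apply card_le_card
  intro d
  simp only [mem_filter]
  rintro ⟨a, b⟩; exact ⟨a, by linarith⟩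

lemma Jv_le (D : Finset ℝ) (w : ℕ) (x : ℝ) : Jv D w x ≤ D.card / w :=
  Nat.div_le_div_right (card_le_card (filter_subset _ _))

lemma Jv_fiber (D : Finset ℝ) (w : ℕ) (hw : 1 ≤ w) (j : ℕ) :
    (D.filter (fun d => Jv D w d = j)).card ≤ w := by
  have : (D.filter (fun d => Jv D w d = j)).card ≤ (Finset.Ico (j * w) ((j + 1) * w)).card := by
    apply card_le_card_of_injOn (fun x => (D.filter (fun d => d < x)).card)
    · intro d hd
      rw [mem_coe, mem_filter] at hd
      rw [mem_coe, mem_Ico]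
      have h := hd.2
      unfold Jv at h
      rw [Nat.div_eq_iff (by omega)] at h
      constructor
      · exact h.1
      · have : (j + 1) * w = j * w + w := by ring
        dsimp only
        omega
    · intro x hx y hy hxy
      rw [mem_coe, mem_filter] at hx hy
      have a := rank_lt_iff D id x y hx.1
      have b := rank_lt_iff D id y x hy.1
      simp only [id] at a b hxy
      rw [hxy] at a b
      simp at a b
      linarith
  refine this.trans ?_
  simp [add_mul]

lemma Jv_three (D : Finset ℝ) (w : ℕ) (P : Finset (ℝ × ℝ)) (l : Fin 3 → ℝ × ℝ) (j : Fin 3 → ℕ) :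
    ∃ b : Fin 3 → Bool, ∀ p ∈ P, ∃ i, decide (j i + 1 ≤ Jv D w (sd p (l i))) ≠ b i := by
  by_contra hc
  push Not at hc
  set f : (Fin 3 → ℝ) →ₗ[ℝ] (ℝ × ℝ) :=
    { toFun := fun c => (∑ i, c i * ((1 - (l i).1 ^ 2) / (1 + (l i).1 ^ 2)), ∑ i, c i * ((2 * (l i).1) / (1 + (l i).1 ^ 2)))
      map_add' := by
        intro x y
        simp only [Pi.add_apply, add_mul, sum_add_distrib, Prod.mk_add_mk]
      map_smul' := by
        intro r x
        simp only [Pi.smul_apply, smul_eq_mul, RingHom.id_apply, Prod.smul_mk, mul_sum, mul_assoc] } with hf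
  have hk : LinearMap.ker f ≠ ⊥ := LinearMap.ker_ne_bot_of_finrank_lt (by simp)
  obtain ⟨c, hcm, hc0⟩ := (Submodule.ne_bot_iff _).1 hk
  rw [LinearMap.mem_ker] at hcm
  have hcm' : ∑ i, c i * ((1 - (l i).1 ^ 2) / (1 + (l i).1 ^ 2)) = 0 ∧
      ∑ i, c i * ((2 * (l i).1) / (1 + (l i).1 ^ 2)) = 0 := by
    have := hcm
    simp only [hf, LinearMap.coe_mk, AddHom.coe_mk, Prod.mk_eq_zero] at this
    exact this
  have hconst : ∀ p : ℝ × ℝ, ∑ i, c i * sd p (l i) = ∑ i, c i * ((l i).2 / (1 + (l i).1 ^ 2)) := by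
    intro p
    have : ∑ i, c i * sd p (l i) = ∑ i, c i * ((l i).2 / (1 + (l i).1 ^ 2)) -
      p.1 * ∑ i, c i * ((1 - (l i).1 ^ 2) / (1 + (l i).1 ^ 2)) -
      p.2 * ∑ i, c i * ((2 * (l i).1) / (1 + (l i).1 ^ 2)) := by
      rw [mul_sum, mul_sum, ← sum_sub_distrib, ← sum_sub_distrib]
      refine sum_congr rfl fun i _ => ?_
      unfold sd
      ring
    rw [this, hcm'.1, hcm'.2]; ring
  obtain ⟨p, -, hp⟩ := hc (fun i => decide (0 < c i))
  obtain ⟨p', -, hp'⟩ := hc (fun i => !decide (0 < c i))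
  obtain ⟨i0, hi0⟩ : ∃ i, c i ≠ 0 := by
    by_contra h; push Not at h; exact hc0 (funext h)
  have hlt : ∀ i, c i ≠ 0 → c i * sd p' (l i) < c i * sd p (l i) := by
    intro i hi
    have a := hp i
    have b := hp' i
    rcases lt_or_gt_of_ne hi with h | h
    · have h' : ¬ 0 < c i := by linarith
      simp [h'] at a b
      have : sd p (l i) < sd p' (l i) := by
        by_contra hh; push Not at hh
        have := Jv_mono D w hh
        omega
      exact mul_lt_mul_of_neg_left this h
    · simp [h] at a b
      have : sd p' (l i) < sd p (l i) := by
        by_contra hh; push Not at hh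
        have := Jv_mono D w hh
        omega
      exact mul_lt_mul_of_pos_left this h
  have := sum_lt_sum (s := univ) (f := fun i => c i * sd p' (l i)) (g := fun i => c i * sd p (l i))
    (fun i _ => by
      by_cases h : c i = 0
      · simp [h]
      · exact (hlt i h).le) ⟨i0, mem_univ _, hlt i0 hi0⟩
  rw [hconst, hconst] at this
  exact lt_irrefl _ this

open Classical in
lemma groups {α : Type*} (P : Finset α) (cen : α → α) (B : ℕ) (hB : 1 ≤ B) :
    ∃ gr : α → α × ℕ, (∀ p, (gr p).1 = cen p) ∧
      ((P.image gr).card : ℝ) ≤ (P.image cen).card + (P.card : ℝ) / B ∧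
      ∀ g, (P.filter (fun p => gr p = g)).card ≤ B := by
  set C : α → Finset α := fun u => P.filter (fun p => cen p = u) with hC
  set rk : α → α → ℕ := fun u p => if h : p ∈ C u then ((C u).equivFin ⟨p, h⟩ : ℕ) else 0 with hrk
  have rk_lt : ∀ u p, p ∈ C u → rk u p < (C u).card := by
    intro u p hp
    simp only [hrk]; rw [dif_pos hp]; exact Fin.is_lt _
  have rk_inj : ∀ u p p', p ∈ C u → p' ∈ C u → rk u p = rk u p' → p = p' := by
    intro u p p' hp hp' h
    simp only [hrk] at h
    rw [dif_pos hp, dif_pos hp'] at h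
    have := (C u).equivFin.injective (Fin.ext h)
    simpa using this
  refine ⟨fun p => (cen p, rk (cen p) p / B), fun p => rfl, ?_, ?_⟩
  · have h1 : P.image (fun p => (cen p, rk (cen p) p / B)) ⊆
        (P.image cen).biUnion (fun u => (range ((C u).card / B + 1)).image (fun b => (u, b))) := by
      intro i hi
      obtain ⟨p, hp, rfl⟩ := mem_image.1 hi
      rw [mem_biUnion]
      refine ⟨cen p, mem_image_of_mem _ hp, mem_image.2 ⟨_, ?_, rfl⟩⟩
      rw [mem_range]
      exact Nat.lt_succ_of_le (Nat.div_le_div_right (rk_lt (cen p) p (by simp [hC, hp])).le)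
    calc ((P.image (fun p => (cen p, rk (cen p) p / B))).card : ℝ)
        ≤ ((∑ u ∈ P.image cen, ((C u).card / B + 1) : ℕ) : ℝ) := by
          norm_cast
          refine (card_le_card h1).trans (card_biUnion_le.trans (sum_le_sum fun u _ => ?_))
          exact card_image_le.trans (by simp)
      _ ≤ ∑ u ∈ P.image cen, (((C u).card : ℝ) / B + 1) := by
          push_cast
          refine sum_le_sum fun u _ => ?_
          have := @Nat.cast_div_le ℝ _ _ _ (C u).card B
          linarith
      _ = _ := by
          rw [sum_add_distrib, ← sum_div]
          have := card_eq_sum_card_fiberwise (f := cen) (s := P) (t := P.image cen)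
            (fun p hp => mem_image_of_mem _ hp)
          have h2 : ∑ u ∈ P.image cen, ((C u).card : ℝ) = P.card := by
            rw [this]; push_cast; rfl
          rw [h2]; simp [add_comm]
  · rintro ⟨u, b⟩
    have : (P.filter (fun p => (cen p, rk (cen p) p / B) = (u, b))).card ≤
        (Finset.Ico (b * B) ((b + 1) * B)).card := by
      apply card_le_card_of_injOn (rk u)
      · intro p hp
        rw [mem_coe, mem_filter, Prod.mk.injEq] at hp
        obtain ⟨h1, rfl, h3⟩ := hp
        rw [mem_coe, mem_Ico]
        rw [Nat.div_eq_iff (by omega)] at h3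
        have : (b + 1) * B = b * B + B := by ring
        omega
      · intro p hp p' hp' h
        rw [mem_coe, mem_filter, Prod.mk.injEq] at hp hp'
        exact rk_inj u p p' (by simp [hC, hp.1, hp.2.1]) (by simp [hC, hp'.1, hp'.2.1]) h
    refine this.trans ?_
    simp [add_mul]

/-- the error term -/
def Fb (M q : ℕ) : ℝ := 5 * M + 2 * (M : ℝ) ^ 2 / (q : ℝ) ^ 2 + 26 * (M * √M * (Nat.log 2 M + 2))

lemma Fb_mono (q : ℕ) {M N : ℕ} (h : M ≤ N) : Fb M q ≤ Fb N q := by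
  unfold Fb
  have h1 : (M : ℝ) ≤ N := by exact_mod_cast h
  have h2 : (Nat.log 2 M : ℝ) ≤ Nat.log 2 N := by exact_mod_cast Nat.log_mono_right h
  gcongr

lemma sd_ev (p l : ℝ × ℝ) : l.2 = ev (sd p l - p.1, 2 * p.2, sd p l + p.1) l.1 := by
  have h : sd p l * (1 + l.1 ^ 2) = l.2 - p.1 * (1 - l.1 ^ 2) - 2 * p.2 * l.1 := by
    unfold sd; field_simp
  unfold ev
  dsimp only
  linarith

open Classical in
lemma bad_le (Ls : Finset (ℝ × ℝ)) (D : Finset ℝ) (w : ℕ) (p c : ℝ × ℝ) :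
    (Ls.filter (fun l => Jv D w (sd p l) ≠ Jv D w (sd c l))).card ≤
    (univ.filter (fun h : Ls × Fin (D.card / w) =>
      decide (h.2.1 + 1 ≤ Jv D w (sd p h.1.1)) ≠ decide (h.2.1 + 1 ≤ Jv D w (sd c h.1.1)))).card := by
  refine le_trans (card_le_card ?_) (card_image_le (f := fun h => h.1.1))
  intro l hl
  rw [mem_filter] at hl
  have a := Jv_le D w (sd p l)
  have b := Jv_le D w (sd c l)
  rw [mem_image]
  rcases lt_or_gt_of_ne hl.2 with h | h
  · refine ⟨(⟨l, hl.1⟩, ⟨Jv D w (sd p l), by omega⟩), ?_, rfl⟩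
    simp; omega
  · refine ⟨(⟨l, hl.1⟩, ⟨Jv D w (sd c l), by omega⟩), ?_, rfl⟩
    simp; omega

open Classical in
theorem main_ineq (P Ls : Finset (ℝ × ℝ)) (D : Finset ℝ) (hD : ∀ p ∈ P, ∀ l ∈ Ls, sd p l ∈ D)
    (w B q a : ℕ) (hw : 1 ≤ w) (hB : 1 ≤ B) (hq : 1 ≤ q) (ha : 8 * (D.card / w) ≤ a + 1) :
    (P.card * Ls.card : ℝ) / 2 ≤ ((a : ℝ) ^ 2 + a + 1 + P.card / B) *
      (3 * q * Ls.card + ((D.card / w : ℕ) + 1) * Fb (B * w) q) := by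
  set κ := D.card / w with hκ
  obtain ⟨cen, hcen, hbad⟩ := vc_partition (H := Ls × Fin κ) P
    (fun p h => decide (h.2.1 + 1 ≤ Jv D w (sd p h.1.1)))
    (fun h => Jv_three D w P (fun i => (h i).1.1) (fun i => (h i).2.1)) a
  obtain ⟨gr, hg1, hg2', hg3'⟩ := groups P cen B hB
  have hg3 : ∀ g, (P.filter (fun p => gr p = g)).card ≤ B := by
    intro g
    convert hg3' g
  have hg2 : ((P.image gr).card : ℝ) ≤ (a : ℝ) ^ 2 + a + 1 + P.card / B := by
    have : ((a ^ 2 + a + 1 : ℕ) : ℝ) = (a : ℝ) ^ 2 + a + 1 := by push_cast; ring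
    rw [← this]
    have h2 : (P.image cen).card ≤ a ^ 2 + a + 1 := by convert hcen
    have h4 : ((P.image gr).card : ℝ) ≤ (P.image cen).card + (P.card : ℝ) / B := by
      convert hg2'
    have h5 : ((P.image cen).card : ℝ) ≤ ((a ^ 2 + a + 1 : ℕ) : ℝ) := by exact_mod_cast h2
    linarith
  have bad2 : 2 * ∑ p ∈ P, (Ls.filter (fun l => Jv D w (sd p l) ≠ Jv D w (sd (cen p) l))).card ≤ P.card * Ls.card := by
    have h1 := sum_le_sum (s := P) fun p (_ : p ∈ P) => bad_le Ls D w p (cen p)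
    have h2 := (Nat.mul_le_mul_left (a + 1) h1).trans hbad
    simp only [Fintype.card_prod, Fintype.card_coe, Fintype.card_fin] at h2
    set s := ∑ p ∈ P, (Ls.filter (fun l => Jv D w (sd p l) ≠ Jv D w (sd (cen p) l))).card
    have h3 : (a + 1) * (2 * s) ≤ (a + 1) * (P.card * Ls.card) := by
      calc (a + 1) * (2 * s) = 2 * ((a + 1) * s) := by ring
        _ ≤ 2 * (4 * P.card * (Ls.card * κ)) := by omega
        _ = (8 * κ) * (P.card * Ls.card) := by ring
        _ ≤ _ := Nat.mul_le_mul_right _ ha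
    exact Nat.le_of_mul_le_mul_left h3 (by omega)
  set Gd := (P ×ˢ Ls).filter (fun x => Jv D w (sd x.1 x.2) = Jv D w (sd (cen x.1) x.2)) with hGd
  have tot : P.card * Ls.card = Gd.card + ∑ p ∈ P, (Ls.filter (fun l => Jv D w (sd p l) ≠ Jv D w (sd (cen p) l))).card := by
    rw [← card_product, ← card_filter_add_card_filter_not (s := P ×ˢ Ls)
      (fun x => Jv D w (sd x.1 x.2) = Jv D w (sd (cen x.1) x.2))]
    congr 1
    rw [card_filter, sum_product]
    refine sum_congr rfl fun p _ => ?_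
    rw [card_filter]
  have hgood : (P.card * Ls.card : ℝ) / 2 ≤ Gd.card := by
    have : P.card * Ls.card ≤ 2 * Gd.card := by omega
    have : (P.card * Ls.card : ℝ) ≤ 2 * Gd.card := by exact_mod_cast this
    linarith
  refine hgood.trans ?_
  set V : (ℝ × ℝ) × ℕ → ℕ → Finset (ℝ × ℝ) := fun g j => Ls.filter (fun l => Jv D w (sd g.1 l) = j) with hV
  set G : (ℝ × ℝ) × ℕ → ℕ → Finset (ℝ × ℝ × ℝ) := fun g j =>
    ((P.filter (fun p => gr p = g)) ×ˢ (D.filter (fun d => Jv D w d = j))).image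
      (fun x => (x.2 - x.1.1, 2 * x.1.2, x.2 + x.1.1)) with hG
  have hGc : ∀ g j, (G g j).card ≤ B * w := by
    intro g j
    refine card_image_le.trans ?_
    rw [card_product]
    exact Nat.mul_le_mul (hg3 g) (Jv_fiber D w hw j)
  have hinc : ∀ g j, ((Gd.filter (fun x => (gr x.1, Jv D w (sd x.1 x.2)) = (g, j))).card : ℝ) ≤
      3 * (V g j).card * q + Fb (B * w) q := by
    intro g j
    have h1 := incidence (G g j) (V g j) q hq
    have h2 : 5 * ((G g j).card : ℝ) + 2 * ((G g j).card : ℝ) ^ 2 / (q : ℝ) ^ 2 +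
      26 * ((G g j).card * √(G g j).card * (Nat.log 2 (G g j).card + 2)) ≤ Fb (B * w) q := Fb_mono q (hGc g j)
    refine le_trans ?_ (h1.trans (by linarith))
    rw [Nat.cast_le]
    apply card_le_card_of_injOn (fun x => ((sd x.1 x.2 - x.1.1, 2 * x.1.2, sd x.1 x.2 + x.1.1), x.2))
    · rintro ⟨p, l⟩ hx
      rw [mem_coe, mem_filter, Prod.mk.injEq, hGd, mem_filter, mem_product] at hx
      obtain ⟨⟨⟨hp, hl⟩, h3⟩, h4, h5⟩ := hx
      dsimp only at hp hl h3 h4 h5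
      rw [mem_coe, mem_filter, mem_product]
      refine ⟨⟨?_, ?_⟩, sd_ev p l⟩
      · rw [hG]
        refine mem_image.2 ⟨(p, sd p l), ?_, rfl⟩
        simp [hp, h4, h5, hD p hp l hl]
      · rw [hV]
        refine mem_filter.2 ⟨hl, ?_⟩
        rw [← h4, hg1, ← h3, h5]
    · rintro ⟨⟨p1, p2⟩, l⟩ _ ⟨⟨p1', p2'⟩, l'⟩ _ h
      simp only [Prod.mk.injEq] at h
      obtain ⟨⟨h1, h2, h3⟩, rfl⟩ := h
      have e1 : p1 = p1' := by linarith
      have e2 : p2 = p2' := by linarith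
      rw [e1, e2]
  have hsum : (Gd.card : ℝ) = ∑ g ∈ P.image gr, ∑ j ∈ range (κ + 1),
      ((Gd.filter (fun x => (gr x.1, Jv D w (sd x.1 x.2)) = (g, j))).card : ℝ) := by
    rw [← sum_product (s := P.image gr) (t := range (κ + 1))
      (f := fun y => ((Gd.filter (fun x => (gr x.1, Jv D w (sd x.1 x.2)) = y)).card : ℝ))]
    rw [card_eq_sum_card_fiberwise (s := Gd) (t := P.image gr ×ˢ range (κ + 1))
      (f := fun x => (gr x.1, Jv D w (sd x.1 x.2)))]
    · push_cast; rfl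
    · intro x hx
      rw [mem_coe, hGd, mem_filter, mem_product] at hx
      rw [mem_coe, mem_product]
      refine ⟨mem_image_of_mem _ hx.1.1, ?_⟩
      rw [mem_range]
      have := Jv_le D w (sd x.1 x.2)
      dsimp only
      omega
  have hVs : ∀ g, ∑ j ∈ range (κ + 1), ((V g j).card : ℝ) = Ls.card := by
    intro g
    rw [card_eq_sum_card_fiberwise (s := Ls) (t := range (κ + 1)) (f := fun l => Jv D w (sd g.1 l))]
    · push_cast; rfl
    · intro l _
      rw [mem_coe, mem_range]
      have := Jv_le D w (sd g.1 l)
      dsimp only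
      omega
  have hF0 : 0 ≤ Fb (B * w) q := by unfold Fb; positivity
  rw [hsum]
  calc _ ≤ ∑ g ∈ P.image gr, ∑ j ∈ range (κ + 1), (3 * ((V g j).card : ℝ) * q + Fb (B * w) q) :=
        sum_le_sum fun g _ => sum_le_sum fun j _ => hinc g j
    _ = ∑ g ∈ P.image gr, (3 * q * Ls.card + (κ + 1) * Fb (B * w) q) := by
        refine sum_congr rfl fun g _ => ?_
        rw [sum_add_distrib, ← hVs g, mul_sum]
        simp only [sum_const, card_range, nsmul_eq_mul]
        push_cast
        congr 1
        exact sum_congr rfl fun j _ => by ring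
    _ = ((P.image gr).card : ℝ) * (3 * q * Ls.card + (κ + 1) * Fb (B * w) q) := by
        rw [sum_const, nsmul_eq_mul]
    _ ≤ _ := by
        exact mul_le_mul_of_nonneg_right hg2 (by positivity)

/-- the line with parameters -/
def lineS (l : ℝ × ℝ) : Set Pt2 := {x | x 0 * (1 - l.1 ^ 2) + x 1 * (2 * l.1) = l.2}

lemma half_angle (A B : ℝ) (h : 0 < A ∨ (A = 0 ∧ 0 < B)) :
    ∃ t k : ℝ, -1 < t ∧ t ≤ 1 ∧ 0 < k ∧ 1 - t ^ 2 = k * A ∧ 2 * t = k * B := by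
  set r := √(A ^ 2 + B ^ 2) with hr
  have hr2 : r ^ 2 = A ^ 2 + B ^ 2 := Real.sq_sqrt (by positivity)
  have hr0 : 0 ≤ r := Real.sqrt_nonneg _
  have hA : 0 ≤ A := by rcases h with h | h <;> linarith
  have hB : -r ≤ B ∧ B ≤ r := abs_le.1 (Real.abs_le_sqrt (by nlinarith))
  have hpos : 0 < r + A := by
    rcases h with h | h
    · linarith
    · linarith
  refine ⟨B / (r + A), 2 / (r + A), ?_, ?_, by positivity, ?_, ?_⟩
  · rw [lt_div_iff₀ hpos]
    rcases h with h | h <;> linarith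
  · rw [div_le_one hpos]; linarith
  · field_simp
    nlinarith
  · field_simp

lemma line_param (l : Set Pt2) (hl : IsLine2 l) :
    ∃ x : ℝ × ℝ, -1 < x.1 ∧ x.1 ≤ 1 ∧ l = lineS x := by
  obtain ⟨a, v, hv, rfl⟩ := hl
  have hv' : v 0 ≠ 0 ∨ v 1 ≠ 0 := by
    by_contra h; push Not at h
    apply hv; ext i; fin_cases i
    · simpa using h.1
    · simpa using h.2
  obtain ⟨e, he, hN⟩ : ∃ e : ℝ, e ≠ 0 ∧ (0 < e * v 1 ∨ (e * v 1 = 0 ∧ 0 < e * (- v 0))) := by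
    rcases lt_trichotomy (v 1) 0 with h | h | h
    · exact ⟨-1, by norm_num, Or.inl (by linarith)⟩
    · rcases lt_or_gt_of_ne (hv'.resolve_right (by simp [h])) with h' | h'
      · exact ⟨1, by norm_num, Or.inr ⟨by simp [h], by linarith⟩⟩
      · exact ⟨-1, by norm_num, Or.inr ⟨by simp [h], by linarith⟩⟩
    · exact ⟨1, by norm_num, Or.inl (by linarith)⟩
  obtain ⟨t, k, h1, h2, hk, h3, h4⟩ := half_angle _ _ hN
  refine ⟨(t, a 0 * (1 - t ^ 2) + a 1 * (2 * t)), h1, h2, ?_⟩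
  ext x
  simp only [lineS, Set.mem_setOf_eq]
  constructor
  · rintro ⟨s, rfl⟩
    simp only [PiLp.add_apply, PiLp.smul_apply, smul_eq_mul]
    rw [h3, h4]; ring
  · intro hx
    rw [h3, h4] at hx
    have hx' : (x 0 - a 0) * v 1 = (x 1 - a 1) * v 0 := by
      have : k * e * ((x 0 - a 0) * v 1 - (x 1 - a 1) * v 0) = 0 := by linarith
      rcases mul_eq_zero.1 this with h | h
      · exact absurd h (by positivity)
      · linarith
    by_cases h : v 0 = 0
    · have h1 : v 1 ≠ 0 := hv'.resolve_left (by simp [h])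
      refine ⟨(x 1 - a 1) / v 1, ?_⟩
      rw [h] at hx'
      have : x 0 = a 0 := by
        have : x 0 - a 0 = 0 := (mul_eq_zero.1 (by linarith : (x 0 - a 0) * v 1 = 0)).resolve_right h1
        linarith
      ext i; fin_cases i
      · simp [h, this]
      · simp; field_simp; ring
    · refine ⟨(x 0 - a 0) / v 0, ?_⟩
      ext i; fin_cases i
      · simp; field_simp; ring
      · simp; field_simp; linarith

lemma infDist_lineS (p : Pt2) (l : ℝ × ℝ) : Metric.infDist p (lineS l) = |sd (p 0, p 1) l| := by
  set s := sd (p 0, p 1) l with hs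
  obtain ⟨t, y⟩ := l
  have hpos : (0 : ℝ) < 1 + t ^ 2 := by positivity
  have hs' : s * (1 + t ^ 2) = y - p 0 * (1 - t ^ 2) - 2 * p 1 * t := by
    rw [hs]; unfold sd; field_simp
  set u0 := (1 - t ^ 2) / (1 + t ^ 2) with hu0
  set u1 := 2 * t / (1 + t ^ 2) with hu1
  have e0 : 1 - t ^ 2 = u0 * (1 + t ^ 2) := by rw [hu0]; field_simp
  have e1 : 2 * t = u1 * (1 + t ^ 2) := by rw [hu1]; field_simp
  have hu : u0 ^ 2 + u1 ^ 2 = 1 := by rw [hu0, hu1]; field_simp; ring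
  have hmem : ∀ x : Pt2, x ∈ lineS (t, y) ↔ (x 0 - p 0) * u0 + (x 1 - p 1) * u1 = s := by
    intro x
    simp only [lineS, Set.mem_setOf_eq]
    rw [e0, e1]
    rw [e0, (by ring : 2 * p 1 * t = p 1 * (2 * t)), e1] at hs'
    constructor
    · intro h
      apply mul_right_cancel₀ hpos.ne'
      linarith
    · intro h
      rw [← h] at hs'; linarith
  set f : Pt2 := !₂[p 0 + s * u0, p 1 + s * u1] with hf
  have hfm : f ∈ lineS (t, y) := by
    rw [hmem]
    simp [hf]
    linear_combination s * hu
  apply le_antisymm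
  · refine (Metric.infDist_le_dist_of_mem hfm).trans (le_of_eq ?_)
    rw [EuclideanSpace.dist_eq]
    simp [hf, Real.dist_eq]
    rw [show (s * u0) ^ 2 + (s * u1) ^ 2 = s ^ 2 by linear_combination s ^ 2 * hu, Real.sqrt_sq_eq_abs]
  · rw [Metric.le_infDist ⟨f, hfm⟩]
    intro x hx
    rw [hmem] at hx
    rw [EuclideanSpace.dist_eq]
    apply Real.abs_le_sqrt
    simp [Real.dist_eq]
    rw [← hx]
    have : (p 0 - x 0) ^ 2 + (p 1 - x 1) ^ 2 - ((x 0 - p 0) * u0 + (x 1 - p 1) * u1) ^ 2 =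
        ((p 0 - x 0) * u1 - (p 1 - x 1) * u0) ^ 2 := by
      linear_combination (-((p 0 - x 0) ^ 2 + (p 1 - x 1) ^ 2)) * hu
    nlinarith [sq_nonneg ((p 0 - x 0) * u1 - (p 1 - x 1) * u0)]

open Classical in
theorem reduce (P : Finset Pt2) (L : Finset (Set Pt2)) (hL : ∀ l ∈ L, IsLine2 l) :
    ∃ (P' Ls : Finset (ℝ × ℝ)) (D : Finset ℝ), P'.card = P.card ∧ Ls.card = L.card ∧
      (∀ l ∈ Ls, -1 < l.1 ∧ l.1 ≤ 1) ∧ (∀ p ∈ P', ∀ l ∈ Ls, sd p l ∈ D) ∧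
      D.card ≤ 2 * ({d : ℝ | ∃ p ∈ P, ∃ l ∈ L, d = Metric.infDist p l}).ncard := by
  have hc : ∀ l : Set Pt2, ∃ x : ℝ × ℝ, l ∈ L → (-1 < x.1 ∧ x.1 ≤ 1 ∧ l = lineS x) := by
    intro l
    by_cases h : l ∈ L
    · obtain ⟨x, hx⟩ := line_param l (hL l h)
      exact ⟨x, fun _ => hx⟩
    · exact ⟨0, fun h' => (h h').elim⟩
  choose τ hτ using hc
  set E : Finset ℝ := (P ×ˢ L).image (fun x => Metric.infDist x.1 x.2) with hE
  have hEe : {d : ℝ | ∃ p ∈ P, ∃ l ∈ L, d = Metric.infDist p l} = (E : Set ℝ) := by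
    ext d
    simp only [Set.mem_setOf_eq, hE, coe_image, Set.mem_image, mem_coe, mem_product]
    constructor
    · rintro ⟨p, hp, l, hl, rfl⟩; exact ⟨(p, l), ⟨hp, hl⟩, rfl⟩
    · rintro ⟨⟨p, l⟩, ⟨hp, hl⟩, rfl⟩; exact ⟨p, hp, l, hl, rfl⟩
  refine ⟨P.image (fun p => (p 0, p 1)), L.image τ, E ∪ E.image (fun d => -d), ?_, ?_, ?_, ?_, ?_⟩
  · apply card_image_of_injective
    intro p q h
    simp only [Prod.mk.injEq] at h
    ext i; fin_cases i
    · exact h.1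
    · exact h.2
  · apply card_image_of_injOn
    intro l hl l' hl' h
    rw [(hτ l hl).2.2, (hτ l' hl').2.2, h]
  · intro x hx
    obtain ⟨l, hl, rfl⟩ := mem_image.1 hx
    exact ⟨(hτ l hl).1, (hτ l hl).2.1⟩
  · intro x hx y hy
    obtain ⟨p, hp, rfl⟩ := mem_image.1 hx
    obtain ⟨l, hl, rfl⟩ := mem_image.1 hy
    have h1 : |sd (p 0, p 1) (τ l)| ∈ E := by
      rw [← infDist_lineS, ← (hτ l hl).2.2]
      exact mem_image.2 ⟨(p, l), mem_product.2 ⟨hp, hl⟩, rfl⟩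
    rw [mem_union]
    rcases abs_choice (sd (p 0, p 1) (τ l)) with h | h
    · left; rw [← h]; exact h1
    · right; exact mem_image.2 ⟨_, h1, by rw [h]; ring⟩
  · rw [hEe, Set.ncard_coe_finset]
    refine (card_union_le _ _).trans ?_
    have := card_image_le (s := E) (f := fun d => -d)
    omega

/-- few distances force all lines to be parallel -/
theorem few_dist (P Ls : Finset (ℝ × ℝ)) (D : Finset ℝ) (hP : P.Nonempty)
    (hLs : ∀ l ∈ Ls, -1 < l.1 ∧ l.1 ≤ 1) (hD : ∀ p ∈ P, ∀ l ∈ Ls, sd p l ∈ D)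
    (h : D.card ^ 2 < P.card) : Ls.card ≤ D.card := by
  have key : ∀ l ∈ Ls, ∀ l' ∈ Ls, l.1 = l'.1 := by
    intro l hl l' hl'
    by_contra hne
    have : P.card ≤ (D ×ˢ D).card := by
      apply card_le_card_of_injOn (fun p => (sd p l, sd p l'))
      · intro p hp
        rw [mem_coe, mem_product]
        exact ⟨hD p hp l hl, hD p hp l' hl'⟩
      · intro p hp p' hp' he
        simp only [Prod.mk.injEq] at he
        obtain ⟨h1, h2⟩ := he
        unfold sd at h1 h2
        have q1 : (0 : ℝ) < 1 + l.1 ^ 2 := by positivity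
        have q2 : (0 : ℝ) < 1 + l'.1 ^ 2 := by positivity
        rw [div_left_inj' q1.ne'] at h1
        rw [div_left_inj' q2.ne'] at h2
        set t := l.1
        set t' := l'.1
        have a1 := hLs l hl
        have a2 := hLs l' hl'
        have hd : (t' - t) * (1 + t * t') ≠ 0 := by
          refine mul_ne_zero (sub_ne_zero.2 (Ne.symm hne)) ?_
          intro h0
          rcases lt_or_eq_of_le a1.2 with b | b
          · rcases lt_or_eq_of_le a2.2 with b' | b'
            · nlinarith
            · have : t' = 1 := b'
              rw [this] at h0; linarith
          · have : t = 1 := b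
            rw [this] at h0; linarith
        have e1 : (p.1 - p'.1) * ((t' - t) * (1 + t * t')) = 0 := by
          linear_combination (-t') * h1 + t * h2
        have e2 : (p.2 - p'.2) * ((t' - t) * (1 + t * t')) = 0 := by
          linear_combination ((1 - t' ^ 2) * h1 - (1 - t ^ 2) * h2) / 2
        have f1 := (mul_eq_zero.1 e1).resolve_right hd
        have f2 := (mul_eq_zero.1 e2).resolve_right hd
        ext <;> linarith
    rw [card_product] at this
    nlinarith
  obtain ⟨p, hp⟩ := hP
  apply card_le_card_of_injOn (fun l => sd p l)
  · intro l hl; exact hD p hp l hl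
  · intro l hl l' hl' he
    have h1 := key l hl l' hl'
    simp only [sd] at he
    rw [h1] at he
    have q2 : (0 : ℝ) < 1 + l'.1 ^ 2 := by positivity
    rw [div_left_inj' q2.ne'] at he
    ext
    · exact h1
    · linarith

/-- the main inequality as a hypothesis -/
def StarIneq (m n δ : ℕ) : Prop := ∀ w B q a : ℕ, 1 ≤ w → 1 ≤ B → 1 ≤ q → 8 * (δ / w) ≤ a + 1 →
    (m * n : ℝ) / 2 ≤ ((a : ℝ) ^ 2 + a + 1 + m / B) *
      (3 * q * n + ((δ / w : ℕ) + 1) * Fb (B * w) q)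

lemma Fb_nonneg (M q : ℕ) : 0 ≤ Fb M q := by unfold Fb; positivity

lemma star2 (m n δ : ℕ) (hs : StarIneq m n δ) (B q a : ℕ) (hB : 1 ≤ B) (hq : 1 ≤ q) (ha : 1 ≤ a)
    (had : a ≤ δ) : ∃ w : ℕ, 1 ≤ w ∧ (w : ℝ) ≤ 9 * δ / a ∧
      (m * n : ℝ) / 2 ≤ (3 * (a : ℝ) ^ 2 + m / B) * (3 * q * n + 2 * a * Fb (B * w) q) := by
  have ha' : (1 : ℝ) ≤ a := by exact_mod_cast ha
  have had' : (a : ℝ) ≤ δ := by exact_mod_cast had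
  set w := 8 * δ / (a + 1) + 1 with hw
  have hw0 : 1 ≤ w := Nat.le_add_left _ _
  have h1 : 8 * δ ≤ w * (a + 1) := by
    have := Nat.lt_mul_div_succ (8 * δ) (show 0 < a + 1 by omega)
    rw [hw]; nlinarith
  have h8 : 8 * (δ / w) ≤ a + 1 := by
    have h2 : w * (8 * (δ / w)) ≤ w * (a + 1) := by
      have := Nat.mul_div_le δ w
      nlinarith
    exact Nat.le_of_mul_le_mul_left h2 hw0
  refine ⟨w, hw0, ?_, ?_⟩
  · have h2 : (w : ℝ) ≤ 8 * δ / (a + 1) + 1 := by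
      rw [hw]; push_cast
      have := @Nat.cast_div_le ℝ _ _ _ (8 * δ) (a + 1)
      push_cast at this
      linarith
    have h3 : (8 : ℝ) * δ / (a + 1) ≤ 8 * δ / a := by gcongr; linarith
    have h4 : (1 : ℝ) ≤ δ / a := by rw [le_div_iff₀ (by linarith)]; linarith
    calc (w : ℝ) ≤ 8 * δ / a + δ / a := by linarith
      _ = _ := by ring
  · refine (hs w B q a hw0 hB hq h8).trans ?_
    have hF := Fb_nonneg (B * w) q
    have h5 : ((δ / w : ℕ) : ℝ) + 1 ≤ 2 * a := by
      have : (8 : ℝ) * ((δ / w : ℕ) : ℝ) ≤ a + 1 := by exact_mod_cast h8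
      linarith
    have h6 : (a : ℝ) ^ 2 + a + 1 ≤ 3 * (a : ℝ) ^ 2 := by nlinarith
    gcongr

lemma log_sqrt (M : ℕ) (hM : 1 ≤ M) : (Nat.log 2 M : ℝ) + 2 ≤ 4 * √M := by
  have h1 : 2 ^ Nat.log 2 M ≤ M := Nat.pow_log_le_self 2 (by omega)
  have h2 : ∀ k : ℕ, (k + 2) ^ 2 ≤ 16 * 2 ^ k := by
    intro k
    induction k with
    | zero => norm_num
    | succ k ih =>
      rw [pow_succ 2 k]
      rcases Nat.eq_zero_or_pos k with rfl | h
      · norm_num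
      · nlinarith
  have h3 := h2 (Nat.log 2 M)
  have h4 : (Nat.log 2 M + 2) ^ 2 ≤ 16 * M := by omega
  have h5 : ((Nat.log 2 M : ℝ) + 2) ^ 2 ≤ 16 * M := by exact_mod_cast h4
  refine (Real.le_sqrt_of_sq_le h5).trans (le_of_eq ?_)
  rw [Real.sqrt_mul (by norm_num), show (16 : ℝ) = 4 ^ 2 by norm_num, Real.sqrt_sq (by norm_num)]

lemma Fb_one (M : ℕ) (hM : 1 ≤ M) : Fb M 1 ≤ 111 * (M : ℝ) ^ 2 := by
  unfold Fb
  have h1 := log_sqrt M hM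
  have h2 : (1 : ℝ) ≤ M := by exact_mod_cast hM
  have h3 : √(M : ℝ) * √M = M := Real.mul_self_sqrt (by linarith)
  have h4 : (M : ℝ) * √M * (Nat.log 2 M + 2) ≤ M * √M * (4 * √M) := by gcongr
  have h5 : (M : ℝ) * √M * (4 * √M) = 4 * (M : ℝ) ^ 2 := by
    linear_combination 4 * (M : ℝ) * h3
  simp only [Nat.cast_one, one_pow, div_one]
  nlinarith

lemma caseB1 (m n δ : ℕ) (hs : StarIneq m n δ) (hm : 400 ≤ m) (hd : m ≤ δ ^ 2) :
    (n : ℝ) * √m ≤ 10 ^ 8 * (δ : ℝ) ^ 2 := by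
  set r := √(m : ℝ) with hr
  have hm' : (400 : ℝ) ≤ m := by exact_mod_cast hm
  have hrm : r ^ 2 = m := Real.sq_sqrt (by linarith)
  have hr20 : 20 ≤ r := Real.le_sqrt_of_sq_le (by linarith)
  have hd' : (m : ℝ) ≤ (δ : ℝ) ^ 2 := by exact_mod_cast hd
  have hrd : r ≤ δ := by
    rw [hr, Real.sqrt_le_left (by positivity)]; exact hd'
  set a := ⌊r / 9⌋₊ with ha
  have ha1 : (a : ℝ) ≤ r / 9 := Nat.floor_le (by linarith)
  have ha2 : r / 9 < a + 1 := Nat.lt_floor_add_one _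
  have ha3 : r / 18 ≤ a := by linarith
  have ha0 : 1 ≤ a := by rw [ha]; exact Nat.le_floor (by push_cast; linarith)
  have ha0' : (1 : ℝ) ≤ a := by exact_mod_cast ha0
  have had : a ≤ δ := by
    have : (a : ℝ) ≤ δ := by linarith
    exact_mod_cast this
  obtain ⟨w, hw1, hw2, h⟩ := star2 m n δ hs 24 1 a (by norm_num) le_rfl ha0 had
  have hF := Fb_one (24 * w) (by omega)
  have hF0 := Fb_nonneg (24 * w) 1
  set F := Fb (24 * w) 1
  have hw3 : (w : ℝ) * a ≤ 9 * δ := by rwa [le_div_iff₀ (by linarith)] at hw2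
  push_cast at hF h
  have h1 : 3 * (a : ℝ) ^ 2 + m / 24 ≤ m / 12 := by
    have : (a : ℝ) ^ 2 ≤ (r / 9) ^ 2 := by gcongr
    rw [← hrm]; nlinarith
  have h2 : (m * n : ℝ) / 2 ≤ (m / 12) * (3 * 1 * n + 2 * a * F) :=
    h.trans (mul_le_mul_of_nonneg_right h1 (by positivity))
  have h3 : (n : ℝ) ≤ 2 / 3 * (a * F) := by
    have : (m : ℝ) * (n / 2) ≤ m * ((3 * n + 2 * a * F) / 12) := by linarith
    have := le_of_mul_le_mul_left this (by linarith)
    linarith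
  have h4 : (a : ℝ) * (a * F) ≤ 111 * 576 * 81 * (δ : ℝ) ^ 2 := by
    calc (a : ℝ) * (a * F) ≤ a * (a * (111 * (24 * w) ^ 2)) := by gcongr
      _ = 111 * 576 * (w * a) ^ 2 := by ring
      _ ≤ 111 * 576 * (9 * δ) ^ 2 := by gcongr
      _ = _ := by ring
  have h5 : (n : ℝ) * r ≤ 12 * (a * (a * F)) := by
    calc (n : ℝ) * r ≤ (2 / 3 * (a * F)) * (18 * a) := by gcongr; linarith
      _ = _ := by ring
  nlinarith [sq_nonneg (δ : ℝ)]

lemma log2_bound (m M : ℕ) (hm : 400 ≤ m) (hlog : 1 ≤ Real.log m) (hM : (M : ℝ) ≤ (m : ℝ) ^ 12) :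
    (Nat.log 2 M : ℝ) + 2 ≤ 26 * Real.log m := by
  have hm' : (400 : ℝ) ≤ m := by exact_mod_cast hm
  have h2 : (2 : ℝ) ^ Nat.log 2 M ≤ (m : ℝ) ^ 12 := by
    rcases Nat.eq_zero_or_pos M with rfl | h
    · simp; exact one_le_pow₀ (by linarith)
    · refine le_trans ?_ hM
      exact_mod_cast Nat.pow_log_le_self 2 (by omega)
  have h3 := Real.log_le_log (by positivity) h2
  rw [Real.log_pow, Real.log_pow] at h3
  have h4 : (1 / 2 : ℝ) ≤ Real.log 2 := by linarith [Real.log_two_gt_d9]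
  have h5 : (Nat.log 2 M : ℝ) * (1 / 2) ≤ Nat.log 2 M * Real.log 2 := by gcongr
  push_cast at h3
  linarith

set_option maxHeartbeats 1000000 in
lemma caseB2 (m n δ : ℕ) (hs : StarIneq m n δ) (hm : 400 ≤ m) (hlog : 1 ≤ Real.log m) (hn : 1 ≤ n)
    (hd : m ≤ δ ^ 2) (X Y Z : ℝ) (hX : 0 < X) (hY : 0 < Y) (hZ : 0 < Z) (hXm : X ^ 9 = m)
    (hYn : Y ^ 9 = n) (hZl : Z ^ 9 = Real.log m) (h1 : X ≤ Y ^ 2 * Z) (h2 : Y ≤ X ^ 5 * Z ^ 4)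
    (h3 : X * Z ^ 8 ≤ Y ^ 2) : 1 / 800000 * (X ^ 2 * Y ^ 5 / Z ^ 2) ≤ δ := by
  by_contra hlt
  push Not at hlt
  have hm' : (400 : ℝ) ≤ m := by exact_mod_cast hm
  have hn' : (1 : ℝ) ≤ n := by exact_mod_cast hn
  have hm0 : (0 : ℝ) < m := by linarith
  set r := √(m : ℝ) with hr
  have hrm : r ^ 2 = m := Real.sq_sqrt (by linarith)
  have hr20 : 20 ≤ r := Real.le_sqrt_of_sq_le (by linarith)
  have hd' : (m : ℝ) ≤ (δ : ℝ) ^ 2 := by exact_mod_cast hd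
  have hrd : r ≤ δ := by
    rw [hr, Real.sqrt_le_left (by positivity)]; exact hd'
  have hδ0 : (0 : ℝ) < δ := by linarith
  set B0 := X ^ 2 * Y ^ 5 / Z ^ 2 with hB0
  have hB00 : 0 < B0 := by positivity
  have hB0n : B0 ≤ n := by
    rw [hB0, div_le_iff₀ (by positivity), ← hYn]
    have : X ^ 2 ≤ (Y ^ 2 * Z) ^ 2 := by gcongr
    calc X ^ 2 * Y ^ 5 ≤ (Y ^ 2 * Z) ^ 2 * Y ^ 5 := by gcongr
      _ = _ := by ring
  set R := X ^ 5 * Z ^ 4 / Y with hR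
  have hR1 : 1 ≤ R := by rw [hR, le_div_iff₀ hY]; linarith
  have hRr : R ≤ r := by
    rw [hr]
    apply Real.le_sqrt_of_sq_le
    rw [hR, div_pow, div_le_iff₀ (by positivity), ← hXm]
    calc (X ^ 5 * Z ^ 4) ^ 2 = X ^ 9 * (X * Z ^ 8) := by ring
      _ ≤ _ := by gcongr
  set a := ⌈R / 20⌉₊ with ha
  have ha1 : R / 20 ≤ a := Nat.le_ceil _
  have ha2 : (a : ℝ) < R / 20 + 1 := Nat.ceil_lt_add_one (by linarith)
  have ha0 : 1 ≤ a := by rw [ha]; exact Nat.one_le_ceil_iff.2 (by linarith)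
  have ha0' : (1 : ℝ) ≤ a := by exact_mod_cast ha0
  have haR : (a : ℝ) ≤ 2 * R := by linarith
  have har : (a : ℝ) ≤ r / 10 := by linarith
  have had : a ≤ δ := by
    have : (a : ℝ) ≤ δ := by linarith
    exact_mod_cast this
  have hpa : (0 : ℝ) < a := by linarith
  have hma : 100 ≤ (m : ℝ) / (a : ℝ) ^ 2 := by
    rw [le_div_iff₀ (by positivity), ← hrm]
    have : (a : ℝ) ^ 2 ≤ (r / 10) ^ 2 := by gcongr
    nlinarith
  set y := (m : ℝ) / (a : ℝ) ^ 2 with hy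
  have hya : y * (a : ℝ) ^ 2 = m := by rw [hy]; field_simp
  set B := ⌈y⌉₊ with hB
  have hB1 : y ≤ B := Nat.le_ceil _
  have hB2 : (B : ℝ) < y + 1 := Nat.ceil_lt_add_one (by linarith)
  have hBpos : 1 ≤ B := by rw [hB]; exact Nat.one_le_ceil_iff.2 (by linarith)
  set q := ⌊y / 48⌋₊ with hq
  have hq1 : (q : ℝ) ≤ y / 48 := Nat.floor_le (by linarith)
  have hq2 : y / 48 < q + 1 := Nat.lt_floor_add_one _
  have hqpos : 1 ≤ q := by rw [hq]; exact Nat.le_floor (by push_cast; linarith)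
  have hq3 : y / 96 ≤ q := by
    have : (1 : ℝ) ≤ q := by exact_mod_cast hqpos
    linarith
  obtain ⟨w, hw1, hw2, h⟩ := star2 m n δ hs B q a hBpos hqpos ha0 had
  have hF0 := Fb_nonneg (B * w) q
  set M := B * w with hM
  have hmB : (m : ℝ) / B ≤ (a : ℝ) ^ 2 := by
    rw [div_le_iff₀ (by linarith), ← hya]
    nlinarith [sq_nonneg (a : ℝ)]
  have k1 : (m * n : ℝ) / 2 ≤ (4 * (a : ℝ) ^ 2) * (3 * q * n + 2 * a * Fb M q) :=
    h.trans (mul_le_mul_of_nonneg_right (by linarith) (by positivity))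
  have k2 : (m * n : ℝ) ≤ 32 * (a : ℝ) ^ 3 * Fb M q := by
    have : (4 * (a : ℝ) ^ 2) * (3 * q * n) ≤ m * n / 4 := by
      calc (4 * (a : ℝ) ^ 2) * (3 * q * n) ≤ (4 * (a : ℝ) ^ 2) * (3 * (y / 48) * n) := by gcongr
        _ = y * (a : ℝ) ^ 2 * n / 4 := by ring
        _ = _ := by rw [hya]
    have e : (4 * (a : ℝ) ^ 2) * (3 * q * n + 2 * a * Fb M q) =
      (4 * (a : ℝ) ^ 2) * (3 * q * n) + 8 * (a : ℝ) ^ 3 * Fb M q := by ring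
    rw [e] at k1
    linarith
  set T := (m : ℝ) * δ / a with hT
  have hT0 : 0 ≤ T := by positivity
  have hMT : (M : ℝ) ≤ 18 * (T / (a : ℝ) ^ 2) := by
    rw [hM]; push_cast
    calc (B : ℝ) * w ≤ (2 * y) * (9 * δ / a) := by gcongr; linarith
      _ = _ := by rw [hT, hy]; field_simp; norm_num
  have hT1 : T ≤ (1 / 200) ^ 2 * (X ^ 3 * Y ^ 3 / Z ^ 3) ^ 2 := by
    rw [hT, div_le_iff₀ hpa]
    calc (m : ℝ) * δ ≤ m * (1 / 800000 * B0) := by gcongr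
      _ = (1 / 200) ^ 2 * (X ^ 3 * Y ^ 3 / Z ^ 3) ^ 2 * (R / 20) := by
        rw [← hXm, hB0, hR]; field_simp; norm_num
      _ ≤ _ := by gcongr
  have hsT : √T ≤ 1 / 200 * (X ^ 3 * Y ^ 3 / Z ^ 3) := by
    rw [Real.sqrt_le_left (by positivity)]
    calc T ≤ _ := hT1
      _ = _ := by ring
  have hTT : T * √T * Real.log m ≤ (1 / 200) ^ 3 * (m * n) := by
    calc T * √T * Real.log m ≤ ((1 / 200) ^ 2 * (X ^ 3 * Y ^ 3 / Z ^ 3) ^ 2) * (1 / 200 * (X ^ 3 * Y ^ 3 / Z ^ 3)) * Real.log m := by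
          gcongr
      _ = _ := by rw [← hZl, ← hXm, ← hYn]; field_simp
  have hsM : √(M : ℝ) ≤ 5 * (√T / a) := by
    rw [Real.sqrt_le_left (by positivity)]
    have : (5 * (√T / a)) ^ 2 = 25 * (T / (a : ℝ) ^ 2) := by
      rw [mul_pow, div_pow, Real.sq_sqrt hT0]; norm_num
    rw [this]
    have : 0 ≤ T / (a : ℝ) ^ 2 := by positivity
    linarith
  have hlogmm : Real.log m ≤ m := (Real.log_le_sub_one_of_pos hm0).trans (by linarith)
  have hnm : (n : ℝ) ≤ (m : ℝ) ^ 9 := by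
    rw [← hYn]
    calc Y ^ 9 ≤ (X ^ 5 * Z ^ 4) ^ 9 := by gcongr
      _ = (X ^ 9) ^ 5 * (Z ^ 9) ^ 4 := by ring
      _ = (m : ℝ) ^ 5 * Real.log m ^ 4 := by rw [hXm, hZl]
      _ ≤ (m : ℝ) ^ 5 * (m : ℝ) ^ 4 := by gcongr
      _ = _ := by ring
  have hM12 : (M : ℝ) ≤ (m : ℝ) ^ 12 := by
    have hδn : (δ : ℝ) ≤ n := by linarith
    have : T / (a : ℝ) ^ 2 ≤ m * δ := by
      rw [hT, div_div]
      apply div_le_self (by positivity)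
      calc (1 : ℝ) = 1 * 1 ^ 2 := by norm_num
        _ ≤ _ := by gcongr
    calc (M : ℝ) ≤ 18 * (m * δ) := by linarith
      _ ≤ m * (m * (m : ℝ) ^ 9) := by gcongr <;> linarith
      _ = (m : ℝ) ^ 11 := by ring
      _ ≤ _ := pow_le_pow_right₀ (by linarith) (by norm_num)
  have hLg := log2_bound m M hm hlog hM12
  have t1 : 32 * (a : ℝ) ^ 3 * (5 * M) ≤ 2880 / 800000 * (m * n) := by
    calc 32 * (a : ℝ) ^ 3 * (5 * M) ≤ 32 * (a : ℝ) ^ 3 * (5 * (18 * (T / (a : ℝ) ^ 2))) := by gcongr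
      _ = 2880 * ((m : ℝ) * δ) := by rw [hT]; field_simp; norm_num
      _ ≤ 2880 * ((m : ℝ) * (1 / 800000 * n)) := by gcongr; linarith
      _ = _ := by ring
  have t2 : 32 * (a : ℝ) ^ 3 * (2 * (M : ℝ) ^ 2 / (q : ℝ) ^ 2) ≤ 1 / 1000 * (m * n) := by
    calc 32 * (a : ℝ) ^ 3 * (2 * (M : ℝ) ^ 2 / (q : ℝ) ^ 2)
        ≤ 32 * (a : ℝ) ^ 3 * (2 * (18 * (T / (a : ℝ) ^ 2)) ^ 2 / (y / 96) ^ 2) := by gcongr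
      _ = 191102976 * ((a : ℝ) * (δ : ℝ) ^ 2) := by rw [hT, hy]; field_simp; norm_num
      _ ≤ 191102976 * ((2 * R) * (1 / 800000 * B0) ^ 2) := by gcongr
      _ = 191102976 * 2 / 800000 ^ 2 * (m * n) := by
        rw [← hXm, ← hYn, hB0, hR]; field_simp
      _ ≤ _ := mul_le_mul_of_nonneg_right (by norm_num) (by positivity)
  have t3 : 32 * (a : ℝ) ^ 3 * (26 * (M * √M * (Nat.log 2 M + 2))) ≤ 1 / 2 * (m * n) := by
    calc 32 * (a : ℝ) ^ 3 * (26 * (M * √M * (Nat.log 2 M + 2)))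
        ≤ 32 * (a : ℝ) ^ 3 * (26 * ((18 * (T / (a : ℝ) ^ 2)) * (5 * (√T / a)) * (26 * Real.log m))) := by gcongr
      _ = 1946880 * (T * √T * Real.log m) := by field_simp; ring
      _ ≤ 1946880 * ((1 / 200) ^ 3 * (m * n)) := by gcongr
      _ = 1946880 * (1 / 200) ^ 3 * (m * n) := by ring
      _ ≤ _ := mul_le_mul_of_nonneg_right (by norm_num) (by positivity)
  have hmn : (0 : ℝ) < m * n := by positivity
  unfold Fb at k2
  linarith

lemma rp9 (x : ℝ) (hx : 0 ≤ x) (k : ℕ) : (x ^ ((1 : ℝ) / 9)) ^ k = x ^ ((k : ℝ) / 9) := by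
  rw [← Real.rpow_natCast, ← Real.rpow_mul hx]; congr 1; ring

theorem final (m n δ : ℕ) (hm : 400 ≤ m)
    (hlo : (m : ℝ) ^ ((1 : ℝ) / 2) / (Real.log m) ^ ((1 : ℝ) / 2) ≤ (n : ℝ))
    (hhi : (n : ℝ) ≤ (m : ℝ) ^ 5 * (Real.log m) ^ 4)
    (hs : StarIneq m n δ) (hfew : δ ^ 2 < m → n ≤ δ) :
    1 / 800000 * ((m : ℝ) ^ ((2 : ℝ) / 9) * (n : ℝ) ^ ((5 : ℝ) / 9) * (Real.log m) ^ (-(2 : ℝ) / 9)) ≤ δ := by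
  have hm' : (400 : ℝ) ≤ m := by exact_mod_cast hm
  have hm0 : (0 : ℝ) < m := by linarith
  have hlog : 1 ≤ Real.log m := by
    rw [Real.le_log_iff_exp_le hm0]
    linarith [Real.exp_one_lt_d9]
  set lam := Real.log m with hlam
  have hl0 : 0 < lam := by linarith
  have hnpos : (0 : ℝ) < n := lt_of_lt_of_le (by positivity) hlo
  have hn : 1 ≤ n := by exact_mod_cast hnpos
  set X := (m : ℝ) ^ ((1 : ℝ) / 9) with hX
  set Y := (n : ℝ) ^ ((1 : ℝ) / 9) with hY
  set Z := lam ^ ((1 : ℝ) / 9) with hZ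
  have hX0 : 0 < X := by positivity
  have hY0 : 0 < Y := by positivity
  have hZ0 : 0 < Z := by positivity
  have hXm : X ^ 9 = m := by rw [hX, rp9 _ hm0.le]; norm_num
  have hYn : Y ^ 9 = n := by rw [hY, rp9 _ hnpos.le]; norm_num
  have hZl : Z ^ 9 = lam := by rw [hZ, rp9 _ hl0.le]; norm_num
  have hB : (m : ℝ) ^ ((2 : ℝ) / 9) * (n : ℝ) ^ ((5 : ℝ) / 9) * lam ^ (-(2 : ℝ) / 9) = X ^ 2 * Y ^ 5 / Z ^ 2 := by
    rw [hX, hY, hZ, rp9 _ hm0.le, rp9 _ hnpos.le, rp9 _ hl0.le, neg_div, Real.rpow_neg hl0.le]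
    push_cast
    rfl
  rw [hB]
  have h1 : X ≤ Y ^ 2 * Z := by
    have : (m : ℝ) ≤ n ^ 2 * lam := by
      rw [div_le_iff₀ (by positivity)] at hlo
      have h2 : ((m : ℝ) ^ ((1 : ℝ) / 2)) ^ 2 ≤ (n * lam ^ ((1 : ℝ) / 2)) ^ 2 := by gcongr
      rw [mul_pow, ← Real.sqrt_eq_rpow, ← Real.sqrt_eq_rpow, Real.sq_sqrt hm0.le, Real.sq_sqrt hl0.le] at h2
      exact h2
    refine le_of_pow_le_pow_left₀ (n := 9) (by norm_num) (by positivity) ?_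
    calc X ^ 9 = m := hXm
      _ ≤ n ^ 2 * lam := this
      _ = _ := by rw [← hYn, ← hZl]; ring
  have h2 : Y ≤ X ^ 5 * Z ^ 4 := by
    refine le_of_pow_le_pow_left₀ (n := 9) (by norm_num) (by positivity) ?_
    calc Y ^ 9 = n := hYn
      _ ≤ _ := hhi
      _ = _ := by rw [← hXm, ← hZl]; ring
  have hB0n : X ^ 2 * Y ^ 5 / Z ^ 2 ≤ n := by
    rw [div_le_iff₀ (by positivity), ← hYn]
    have : X ^ 2 ≤ (Y ^ 2 * Z) ^ 2 := by gcongr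
    calc X ^ 2 * Y ^ 5 ≤ (Y ^ 2 * Z) ^ 2 * Y ^ 5 := by gcongr
      _ = _ := by ring
  have hBpos : 0 < X ^ 2 * Y ^ 5 / Z ^ 2 := by positivity
  rcases lt_or_ge (δ ^ 2) m with hA | hA
  · have : (n : ℝ) ≤ δ := by exact_mod_cast hfew hA
    linarith
  · rcases le_total (X * Z ^ 8) (Y ^ 2) with h3 | h3
    · exact caseB2 m n δ hs hm hlog hn hA X Y Z hX0 hY0 hZ0 hXm hYn hZl h1 h2 h3
    · have hb := caseB1 m n δ hs hm hA
      have hsq : (X ^ 2 * Y ^ 5 / Z ^ 2) ^ 2 ≤ n * √m := by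
        have : (n : ℝ) * √m = √(n ^ 2 * m) := by
          rw [Real.sqrt_mul (by positivity), Real.sqrt_sq hnpos.le]
        rw [this]
        apply Real.le_sqrt_of_sq_le
        rw [← pow_mul, div_pow, div_le_iff₀ (by positivity), ← hXm, ← hYn]
        calc (X ^ 2 * Y ^ 5) ^ (2 * 2) = X ^ 8 * Y ^ 18 * Y ^ 2 := by ring
          _ ≤ X ^ 8 * Y ^ 18 * (X * Z ^ 8) := by gcongr
          _ = _ := by ring
      have h4 : (X ^ 2 * Y ^ 5 / Z ^ 2) ^ 2 ≤ (10 ^ 4 * (δ : ℝ)) ^ 2 := by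
        rw [mul_pow]; linarith
      have h5 := le_of_sq_le_sq h4 (by positivity)
      linarith

end Aux

theorem distinct_point_line_distances_lens_bound :
    ∃ c : ℝ, 0 < c ∧ ∃ m₀ : ℕ,
      ∀ (m n : ℕ), m₀ ≤ m →
        (m : ℝ) ^ ((1 : ℝ) / 2) / (Real.log m) ^ ((1 : ℝ) / 2) ≤ (n : ℝ) →
        (n : ℝ) ≤ (m : ℝ) ^ 5 * (Real.log m) ^ 4 →
        ∀ (P : Finset Pt2) (L : Finset (Set Pt2)),
          P.card = m → L.card = n → (∀ l ∈ L, IsLine2 l) →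
          c * (m : ℝ) ^ ((2 : ℝ) / 9) * (n : ℝ) ^ ((5 : ℝ) / 9) *
              (Real.log m) ^ (-(2 : ℝ) / 9) ≤
            (({d : ℝ | ∃ p ∈ P, ∃ l ∈ L, d = Metric.infDist p l}).ncard : ℝ) := by
  refine ⟨1 / 1600000, by norm_num, 400, ?_⟩
  intro m n hm hlo hhi P L hP hL hLines
  obtain ⟨P', Ls, D, e1, e2, h1, h2, h3⟩ := reduce P L hLines
  rw [hP] at e1
  rw [hL] at e2
  have hne : P'.Nonempty := Finset.card_pos.1 (by omega)
  have hs : StarIneq m n D.card := by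
    intro w B q a hw hB hq ha
    have := main_ineq P' Ls D h2 w B q a hw hB hq ha
    rw [e1, e2] at this
    exact this
  have hf := final m n D.card hm hlo hhi hs (by
    intro h
    have := few_dist P' Ls D hne h1 h2 (by rw [e1]; exact h)
    omega)
  have h3' : (D.card : ℝ) ≤ 2 * ({d : ℝ | ∃ p ∈ P, ∃ l ∈ L, d = Metric.infDist p l}).ncard := by
    exact_mod_cast h3
  linarith
end
end

section
/- Given three distinct circles in ℝ² that are not mutually tangent at a common point (i.e., there is no single point p at which all three are pairwise tangent), there are at most eight circles, other than the three given ones, that are tangent to all three. -/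
noncomputable section

/-- A circle in the plane: a metric sphere with positive radius. -/
def IsCircle2 (s : Set Pt2) : Prop :=
  ∃ c : Pt2, ∃ r : ℝ, 0 < r ∧ s = Metric.sphere c r

/-- Two subsets of the plane are tangent if they intersect in exactly one point. -/
def Tangent2 (a b : Set Pt2) : Prop := ∃ p : Pt2, a ∩ b = {p}

/-- Lightlike separation in Minkowski space. -/
def LL (p v : ℝ × ℝ × ℝ) : Prop :=
  (p.1 - v.1) ^ 2 + (p.2.1 - v.2.1) ^ 2 = (p.2.2 - v.2.2) ^ 2

/-- The point is on the null line. -/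
def OnL (P Q u w : ℝ) (v : ℝ × ℝ × ℝ) : Prop :=
  v.1 = P + v.2.2 * u ∧ v.2.1 = Q + v.2.2 * w

/-- Collinearity of three points through minors. -/
def Col (a b c : ℝ × ℝ × ℝ) : Prop :=
  (b.1 - a.1) * (c.2.1 - a.2.1) = (c.1 - a.1) * (b.2.1 - a.2.1) ∧
  (b.1 - a.1) * (c.2.2 - a.2.2) = (c.1 - a.1) * (b.2.2 - a.2.2) ∧
  (b.2.1 - a.2.1) * (c.2.2 - a.2.2) = (c.2.1 - a.2.1) * (b.2.2 - a.2.2)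

theorem col_param {a b c : ℝ × ℝ × ℝ} (hab : a ≠ b) (h : Col a b c) :
    ∃ t : ℝ, c.1 - a.1 = t * (b.1 - a.1) ∧ c.2.1 - a.2.1 = t * (b.2.1 - a.2.1) ∧
      c.2.2 - a.2.2 = t * (b.2.2 - a.2.2) := by
  obtain ⟨h1, h2, h3⟩ := h
  by_cases e1 : b.1 - a.1 = 0
  · by_cases e2 : b.2.1 - a.2.1 = 0
    · by_cases e3 : b.2.2 - a.2.2 = 0
      · exact absurd (Prod.ext (by linarith) (Prod.ext (by linarith) (by linarith))) hab
      · refine ⟨(c.2.2 - a.2.2) / (b.2.2 - a.2.2), ?_, ?_, ?_⟩ <;> field_simp <;> linarith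
    · refine ⟨(c.2.1 - a.2.1) / (b.2.1 - a.2.1), ?_, ?_, ?_⟩ <;> field_simp <;> linarith
  · refine ⟨(c.1 - a.1) / (b.1 - a.1), ?_, ?_, ?_⟩ <;> field_simp <;> linarith

theorem null_line {a b c p : ℝ × ℝ × ℝ} (hab : a ≠ b) (hac : a ≠ c) (hbc : b ≠ c)
    (h : Col a b c) (ha : LL p a) (hb : LL p b) (hc : LL p c) :
    ∃ P Q u w : ℝ, u ^ 2 + w ^ 2 = 1 ∧ OnL P Q u w a ∧ OnL P Q u w b ∧ OnL P Q u w c := by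
  obtain ⟨t, h1, h2, h3⟩ := col_param hab h
  obtain ⟨a1, a2, a3⟩ := a
  obtain ⟨b1, b2, b3⟩ := b
  obtain ⟨c1, c2, c3⟩ := c
  obtain ⟨x, y, r⟩ := p
  simp only [LL, OnL] at *
  have t0 : t ≠ 0 := by
    rintro rfl
    apply hac
    ext <;> simp <;> linarith
  have t1 : t - 1 ≠ 0 := by
    intro ht
    have : t = 1 := by linarith
    subst this
    apply hbc
    ext <;> simp <;> linarith
  obtain rfl : c1 = a1 + t * (b1 - a1) := by linarith
  obtain rfl : c2 = a2 + t * (b2 - a2) := by linarith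
  obtain rfl : c3 = a3 + t * (b3 - a3) := by linarith
  have key : t * (t - 1) * ((b1 - a1) ^ 2 + (b2 - a2) ^ 2 - (b3 - a3) ^ 2) = 0 := by
    linear_combination hc - t * hb + (t - 1) * ha
  have key2 : (b1 - a1) ^ 2 + (b2 - a2) ^ 2 - (b3 - a3) ^ 2 = 0 := by
    simpa [t0, t1] using key
  have d : b3 - a3 ≠ 0 := by
    intro hd
    rw [hd] at key2
    apply hab
    have e1 : b1 - a1 = 0 := by nlinarith [sq_nonneg (b1 - a1), sq_nonneg (b2 - a2)]
    have e2 : b2 - a2 = 0 := by nlinarith [sq_nonneg (b1 - a1), sq_nonneg (b2 - a2)]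
    ext <;> simp <;> linarith
  refine ⟨a1 - a3 * ((b1 - a1) / (b3 - a3)), a2 - a3 * ((b2 - a2) / (b3 - a3)),
    (b1 - a1) / (b3 - a3), (b2 - a2) / (b3 - a3), ?_, ⟨?_, ?_⟩, ⟨?_, ?_⟩, ⟨?_, ?_⟩⟩ <;>
    field_simp <;> linarith

theorem onL_of {p q v : ℝ × ℝ × ℝ} {P Q u w : ℝ} (huw : u ^ 2 + w ^ 2 = 1)
    (hp : OnL P Q u w p) (hq : OnL P Q u w q) (hpq : p ≠ q) (h1 : LL p v) (h2 : LL q v) :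
    OnL P Q u w v := by
  obtain ⟨p1, p2, r⟩ := p
  obtain ⟨q1, q2, r'⟩ := q
  obtain ⟨a, b, s⟩ := v
  simp only [LL, OnL] at *
  obtain ⟨rfl, rfl⟩ := hp
  obtain ⟨rfl, rfl⟩ := hq
  have hr : r - r' ≠ 0 := by
    intro h
    obtain rfl : r = r' := by linarith
    exact hpq rfl
  have e : (r - r') * ((a - P) * u + (b - Q) * w - s) = 0 := by
    linear_combination (h2 - h1) / 2 + (r ^ 2 - r' ^ 2) / 2 * huw
  have e' : (a - P) * u + (b - Q) * w - s = 0 := by simpa [hr] using e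
  have f : (a - P) ^ 2 + (b - Q) ^ 2 = s ^ 2 := by
    linear_combination h1 + 2 * r * e' - r ^ 2 * huw
  have g : (a - P - s * u) ^ 2 + (b - Q - s * w) ^ 2 = 0 := by
    linear_combination f - 2 * s * e' + s ^ 2 * huw
  constructor <;> nlinarith [sq_nonneg (a - P - s * u), sq_nonneg (b - Q - s * w)]

theorem LL.symm {p v : ℝ × ℝ × ℝ} (h : LL p v) : LL v p := by
  unfold LL at *; linarith

theorem orth {p q a b : ℝ × ℝ × ℝ} (h1 : LL p a) (h2 : LL p b) (h3 : LL q a) (h4 : LL q b) :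
    (q.1 - p.1) * (b.1 - a.1) + (q.2.1 - p.2.1) * (b.2.1 - a.2.1)
      - (q.2.2 - p.2.2) * (b.2.2 - a.2.2) = 0 := by
  unfold LL at *
  linear_combination (-h1 + h2 + h3 - h4) / 2

theorem cross_aux {d1 d2 d3 e1 e2 e3 x1 x2 x3 y1 y2 y3 : ℝ}
    (hd : ¬ (d1 * e2 = e1 * d2 ∧ d1 * e3 = e1 * d3 ∧ d2 * e3 = e2 * d3))
    (h1 : x1 * d1 + x2 * d2 - x3 * d3 = 0) (h2 : x1 * e1 + x2 * e2 - x3 * e3 = 0)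
    (h3 : y1 * d1 + y2 * d2 - y3 * d3 = 0) (h4 : y1 * e1 + y2 * e2 - y3 * e3 = 0) :
    x1 * y2 = y1 * x2 ∧ x1 * y3 = y1 * x3 ∧ x2 * y3 = y2 * x3 := by
  -- dual cross relations
  have A (X1 X2 X3 : ℝ) (h1 : X1 * d1 + X2 * d2 - X3 * d3 = 0)
      (h2 : X1 * e1 + X2 * e2 - X3 * e3 = 0) :
      X1 * (d1 * e2 - e1 * d2) = X3 * (d3 * e2 - e3 * d2) ∧
      X2 * (d1 * e2 - e1 * d2) = X3 * (d1 * e3 - e1 * d3) ∧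
      X1 * (d1 * e3 - e1 * d3) = X2 * (d3 * e2 - e3 * d2) := by
    refine ⟨?_, ?_, ?_⟩
    · linear_combination e2 * h1 - d2 * h2
    · linear_combination d1 * h2 - e1 * h1
    · linear_combination e3 * h1 - d3 * h2
  obtain ⟨p1, p2, p3⟩ := A x1 x2 x3 h1 h2
  obtain ⟨q1, q2, q3⟩ := A y1 y2 y3 h3 h4
  generalize hM : d1 * e2 - e1 * d2 = M at *
  generalize hN : d1 * e3 - e1 * d3 = N at *
  generalize hL : d3 * e2 - e3 * d2 = L at *
  have key : M ≠ 0 ∨ N ≠ 0 ∨ L ≠ 0 := by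
    by_contra hh
    push Not at hh
    obtain ⟨a, b, c⟩ := hh
    exact hd ⟨by linarith, by linarith, by linarith⟩
  rcases key with k | k | k
  · have e1 : x1 = x3 * L / M := by field_simp; linarith
    have e2 : x2 = x3 * N / M := by field_simp; linarith
    have e3 : y1 = y3 * L / M := by field_simp; linarith
    have e4 : y2 = y3 * N / M := by field_simp; linarith
    rw [e1, e2, e3, e4]
    refine ⟨?_, ?_, ?_⟩ <;> ring
  · have e1 : x1 = x2 * L / N := by field_simp; linarith
    have e2 : x3 = x2 * M / N := by field_simp; linarith
    have e3 : y1 = y2 * L / N := by field_simp; linarith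
    have e4 : y3 = y2 * M / N := by field_simp; linarith
    rw [e1, e2, e3, e4]
    refine ⟨?_, ?_, ?_⟩ <;> ring
  · have e1 : x3 = x1 * M / L := by field_simp; linarith
    have e2 : x2 = x1 * N / L := by field_simp; linarith
    have e3 : y3 = y1 * M / L := by field_simp; linarith
    have e4 : y2 = y1 * N / L := by field_simp; linarith
    rw [e1, e2, e3, e4]
    refine ⟨?_, ?_, ?_⟩ <;> ring

theorem main_alg {a b c p q r : ℝ × ℝ × ℝ} (hab : a ≠ b) (hac : a ≠ c) (hbc : b ≠ c)
    (hpq : p ≠ q) (hpr : p ≠ r) (hqr : q ≠ r)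
    (hp : LL p a ∧ LL p b ∧ LL p c) (hq : LL q a ∧ LL q b ∧ LL q c)
    (hr : LL r a ∧ LL r b ∧ LL r c) :
    ∃ P Q u w : ℝ, u ^ 2 + w ^ 2 = 1 ∧ OnL P Q u w a ∧ OnL P Q u w b ∧ OnL P Q u w c := by
  by_cases h : Col a b c
  · exact null_line hab hac hbc h hp.1 hp.2.1 hp.2.2
  · have hc : Col p q r := cross_aux h
      (orth hp.1 hp.2.1 hq.1 hq.2.1) (orth hp.1 hp.2.2 hq.1 hq.2.2)
      (orth hp.1 hp.2.1 hr.1 hr.2.1) (orth hp.1 hp.2.2 hr.1 hr.2.2)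
    obtain ⟨P, Q, u, w, e, h1, h2, -⟩ := null_line hpq hpr hqr hc hp.1.symm hq.1.symm hr.1.symm
    exact ⟨P, Q, u, w, e, onL_of e h1 h2 hpq hp.1 hq.1, onL_of e h1 h2 hpq hp.2.1 hq.2.1,
      onL_of e h1 h2 hpq hp.2.2 hq.2.2⟩

/-- The circle attached to a point of Minkowski space. -/
def circ (v : ℝ × ℝ × ℝ) : Set Pt2 := Metric.sphere !₂[v.1, v.2.1] |v.2.2|

theorem mem_circ (v : ℝ × ℝ × ℝ) (p : Pt2) :
    p ∈ circ v ↔ (p 0 - v.1) ^ 2 + (p 1 - v.2.1) ^ 2 = v.2.2 ^ 2 := by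
  unfold circ
  rw [Metric.mem_sphere, ← sq_eq_sq₀ dist_nonneg (abs_nonneg _), EuclideanSpace.dist_sq_eq, sq_abs]
  simp [Fin.sum_univ_two, Real.dist_eq]

theorem circ_flip (x y r : ℝ) : circ (x, y, -r) = circ (x, y, r) := by
  simp [circ]

theorem circle_circ {s : Set Pt2} (h : IsCircle2 s) : ∃ x y r : ℝ, 0 < r ∧ s = circ (x, y, r) := by
  obtain ⟨c, r, hr, rfl⟩ := h
  refine ⟨c 0, c 1, r, hr, ?_⟩
  ext p
  rw [mem_circ, Metric.mem_sphere, ← sq_eq_sq₀ dist_nonneg hr.le, EuclideanSpace.dist_sq_eq]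
  simp [Fin.sum_univ_two, Real.dist_eq]

theorem tangent_LL {x y r a b s : ℝ} (hr : 0 < r) (hs : 0 < s)
    (hne : circ (x, y, r) ≠ circ (a, b, s))
    (ht : Tangent2 (circ (x, y, r)) (circ (a, b, s))) :
    LL (x, y, r) (a, b, s) ∨ LL (x, y, r) (a, b, -s) := by
  obtain ⟨p, hp⟩ := ht
  have hpm : p ∈ circ (x, y, r) ∩ circ (a, b, s) := by rw [hp]; rfl
  have h1 := (mem_circ _ _).1 hpm.1
  have h2 := (mem_circ _ _).1 hpm.2
  simp only at h1 h2
  set N := (a - x) ^ 2 + (b - y) ^ 2 with hN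
  by_cases hN0 : N = 0
  · exfalso
    have e1 : a = x := by nlinarith [sq_nonneg (a - x), sq_nonneg (b - y)]
    have e2 : b = y := by nlinarith [sq_nonneg (a - x), sq_nonneg (b - y)]
    subst e1 e2
    have : r = s := by
      have : (r - s) * (r + s) = 0 := by linear_combination h2 - h1
      rcases mul_eq_zero.1 this with h | h <;> linarith
    exact hne (by rw [this])
  set t := (p 0 - x) * (b - y) - (p 1 - y) * (a - x) with ht
  have hq : !₂[p 0 - 2 * (t / N) * (b - y), p 1 + 2 * (t / N) * (a - x)] ∈
      circ (x, y, r) ∩ circ (a, b, s) := by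
    constructor
    · rw [mem_circ]
      simp
      have : (t / N) * N = t := by field_simp
      generalize t / N = k at *
      linear_combination h1 + 4 * k * this + 4 * k ^ 2 * (-hN) + 4 * k * ht
    · rw [mem_circ]
      simp
      have : (t / N) * N = t := by field_simp
      generalize t / N = k at *
      linear_combination h2 + 4 * k * this + 4 * k ^ 2 * (-hN) + 4 * k * ht
  rw [hp] at hq
  have hq' := Set.mem_singleton_iff.1 hq
  have q0 := congrArg (fun z : Pt2 => z 0) hq'
  have q1 := congrArg (fun z : Pt2 => z 1) hq'
  simp at q0 q1
  have t0 : t = 0 := by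
    by_contra ht0
    have e1 : b - y = 0 := by tauto
    have e2 : a - x = 0 := by tauto
    exact ht0 (by rw [ht, e1, e2]; ring)
  have prod : (N - (r - s) ^ 2) * (N - (r + s) ^ 2) = 0 := by
    have m : 2 * ((p 0 - x) * (a - x) + (p 1 - y) * (b - y)) = N + r ^ 2 - s ^ 2 := by
      rw [hN]; linear_combination h1 - h2
    have l : ((p 0 - x) * (a - x) + (p 1 - y) * (b - y)) ^ 2 + t ^ 2 = r ^ 2 * N := by
      rw [hN, ht, ← h1]; ring
    rw [t0] at l
    generalize (p 0 - x) * (a - x) + (p 1 - y) * (b - y) = m' at *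
    linear_combination 4 * l - (2 * m' + N + r ^ 2 - s ^ 2) * m
  rcases mul_eq_zero.1 prod with h | h
  · left; simp only [LL]; linarith
  · right; simp only [LL]; linarith

theorem inter_null {v v' : ℝ × ℝ × ℝ} {P Q u w : ℝ} (huw : u ^ 2 + w ^ 2 = 1)
    (h : OnL P Q u w v) (h' : OnL P Q u w v') (hne : v ≠ v') :
    circ v ∩ circ v' = {!₂[P, Q]} := by
  obtain ⟨a, b, s⟩ := v
  obtain ⟨a', b', s'⟩ := v'
  simp only [OnL] at h h'
  obtain ⟨rfl, rfl⟩ := h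
  obtain ⟨rfl, rfl⟩ := h'
  have hs : s - s' ≠ 0 := by
    intro h
    obtain rfl : s = s' := by linarith
    exact hne rfl
  ext p
  simp only [Set.mem_inter_iff, mem_circ, Set.mem_singleton_iff]
  constructor
  · rintro ⟨h1, h2⟩
    have e : (s - s') * ((p 0 - P) * u + (p 1 - Q) * w) = 0 := by
      linear_combination (h2 - h1) / 2 + (s ^ 2 - s' ^ 2) / 2 * huw
    have e' : (p 0 - P) * u + (p 1 - Q) * w = 0 := by simpa [hs] using e
    have f : (p 0 - P) ^ 2 + (p 1 - Q) ^ 2 = 0 := by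
      linear_combination h1 + 2 * s * e' - s ^ 2 * huw
    ext i
    fin_cases i
    · simp; nlinarith [sq_nonneg (p 0 - P), sq_nonneg (p 1 - Q)]
    · simp; nlinarith [sq_nonneg (p 0 - P), sq_nonneg (p 1 - Q)]
  · rintro rfl
    simp
    constructor
    · linear_combination s ^ 2 * huw
    · linear_combination s' ^ 2 * huw

/-- Solutions of the signed system. -/
def Sol (a b c : ℝ × ℝ × ℝ) : Set (ℝ × ℝ × ℝ) := {p | LL p a ∧ LL p b ∧ LL p c}

theorem sol_le {a b c : ℝ × ℝ × ℝ} (hab : circ a ≠ circ b) (hac : circ a ≠ circ c)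
    (hbc : circ b ≠ circ c)
    (hnc : ¬ ∃ p : Pt2, circ a ∩ circ b = {p} ∧ circ a ∩ circ c = {p} ∧ circ b ∩ circ c = {p}) :
    (circ '' Sol a b c).encard ≤ 2 := by
  refine (Set.encard_image_le _ _).trans ?_
  by_contra hlt
  push Not at hlt
  obtain ⟨t, hts, ht⟩ := Set.exists_subset_encard_eq (k := 3) (s := Sol a b c)
    (by have := Order.add_one_le_of_lt hlt; norm_num at this; exact this)
  obtain ⟨p, q, r, hpq, hpr, hqr, rfl⟩ := Set.encard_eq_three.1 ht
  have ab : a ≠ b := fun h => hab (by rw [h])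
  have ac : a ≠ c := fun h => hac (by rw [h])
  have bc : b ≠ c := fun h => hbc (by rw [h])
  obtain ⟨P, Q, u, w, e, h1, h2, h3⟩ := main_alg ab ac bc hpq hpr hqr
    (hts (by simp)) (hts (by simp)) (hts (by simp))
  exact hnc ⟨!₂[P, Q], inter_null e h1 h2 ab, inter_null e h1 h3 ac, inter_null e h2 h3 bc⟩

theorem LL_flip {x y r a b s : ℝ} (h : LL (x, y, r) (a, b, s)) : LL (x, y, -r) (a, b, -s) := by
  simp only [LL] at *; linarith

theorem apollonius_tangent_circles (c1 c2 c3 : Set Pt2)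
    (h1 : IsCircle2 c1) (h2 : IsCircle2 c2) (h3 : IsCircle2 c3)
    (h12 : c1 ≠ c2) (h13 : c1 ≠ c3) (h23 : c2 ≠ c3)
    (hnc : ¬ ∃ p : Pt2, c1 ∩ c2 = {p} ∧ c1 ∩ c3 = {p} ∧ c2 ∩ c3 = {p}) :
    ({s : Set Pt2 | IsCircle2 s ∧ s ≠ c1 ∧ s ≠ c2 ∧ s ≠ c3 ∧
        Tangent2 s c1 ∧ Tangent2 s c2 ∧ Tangent2 s c3}).encard ≤ 8 := by
  obtain ⟨a1, b1, r1, hr1, rfl⟩ := circle_circ h1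
  obtain ⟨a2, b2, r2, hr2, rfl⟩ := circle_circ h2
  obtain ⟨a3, b3, r3, hr3, rfl⟩ := circle_circ h3
  have B (s2 s3 : ℝ) (e2 : circ (a2, b2, s2) = circ (a2, b2, r2))
      (e3 : circ (a3, b3, s3) = circ (a3, b3, r3)) :
      (circ '' Sol (a1, b1, r1) (a2, b2, s2) (a3, b3, s3)).encard ≤ 2 := by
    apply sol_le <;> simp only [e2, e3] <;> assumption
  have sub : {s : Set Pt2 | IsCircle2 s ∧ s ≠ circ (a1, b1, r1) ∧ s ≠ circ (a2, b2, r2) ∧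
      s ≠ circ (a3, b3, r3) ∧ Tangent2 s (circ (a1, b1, r1)) ∧ Tangent2 s (circ (a2, b2, r2)) ∧
      Tangent2 s (circ (a3, b3, r3))} ⊆
      (circ '' Sol (a1, b1, r1) (a2, b2, r2) (a3, b3, r3) ∪
       circ '' Sol (a1, b1, r1) (a2, b2, r2) (a3, b3, -r3)) ∪
      (circ '' Sol (a1, b1, r1) (a2, b2, -r2) (a3, b3, r3) ∪
       circ '' Sol (a1, b1, r1) (a2, b2, -r2) (a3, b3, -r3)) := by
    rintro s ⟨hs, n1, n2, n3, t1, t2, t3⟩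
    obtain ⟨x, y, r, hr, rfl⟩ := circle_circ hs
    have l1 := tangent_LL hr hr1 n1 t1
    have l2 := tangent_LL hr hr2 n2 t2
    have l3 := tangent_LL hr hr3 n3 t3
    rcases l1 with l1 | l1
    · rcases l2 with l2 | l2 <;> rcases l3 with l3 | l3
      · exact Or.inl (Or.inl ⟨_, ⟨l1, l2, l3⟩, rfl⟩)
      · exact Or.inl (Or.inr ⟨_, ⟨l1, l2, l3⟩, rfl⟩)
      · exact Or.inr (Or.inl ⟨_, ⟨l1, l2, l3⟩, rfl⟩)
      · exact Or.inr (Or.inr ⟨_, ⟨l1, l2, l3⟩, rfl⟩)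
    · have m1 := LL_flip l1
      rw [neg_neg] at m1
      rcases l2 with l2 | l2 <;> rcases l3 with l3 | l3 <;> have m2 := LL_flip l2 <;>
        have m3 := LL_flip l3 <;> try simp only [neg_neg] at m2 m3
      · exact Or.inr (Or.inr ⟨_, ⟨m1, m2, m3⟩, circ_flip _ _ _⟩)
      · exact Or.inr (Or.inl ⟨_, ⟨m1, m2, m3⟩, circ_flip _ _ _⟩)
      · exact Or.inl (Or.inr ⟨_, ⟨m1, m2, m3⟩, circ_flip _ _ _⟩)
      · exact Or.inl (Or.inl ⟨_, ⟨m1, m2, m3⟩, circ_flip _ _ _⟩)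
  refine (Set.encard_le_encard sub).trans ?_
  refine (Set.encard_union_le _ _).trans ?_
  refine (add_le_add ((Set.encard_union_le _ _).trans (add_le_add (B _ _ rfl rfl)
    (B _ _ rfl (circ_flip _ _ _)))) ((Set.encard_union_le _ _).trans (add_le_add
    (B _ _ (circ_flip _ _ _) rfl) (B _ _ (circ_flip _ _ _) (circ_flip _ _ _))))).trans ?_
  norm_num
end
end
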